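/- Let G be a compact Lie group whose group operations are real analytic, and let M be a second-countable Hausdorff real analytic manifold of finite dimension d on which G acts by a real analytic action. Set n = 2d + 1. Then there exists a proper real analytic G-invariant map f : M → ℝⁿ such that the map induced by f from the orbit space M/G (equipped with the quotient topology) to the image f(M) ⊆ ℝⁿ (equipped with the subspace topology) is a homeomorphism. -/

import Mathlib

open scoped Manifold ContDiff

/-- A map `f : M → M'` between charted spaces is `C^k` (where `k` may be `ω = ⊤`, meaning
real analytic) if it is continuous and is `C^k` when read in the preferred charts around
each point.  For `k = ω` this is the notion of a real analytic map. -/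
def IsCkMap {E H E' H' : Type*} [NormedAddCommGroup E] [NormedSpace ℝ E] [TopologicalSpace H]
    [NormedAddCommGroup E'] [NormedSpace ℝ E'] [TopologicalSpace H']
    (I : ModelWithCorners ℝ E H) (I' : ModelWithCorners ℝ E' H') (k : WithTop ℕ∞)
    {M M' : Type*} [TopologicalSpace M] [ChartedSpace H M]
    [TopologicalSpace M'] [ChartedSpace H' M'] (f : M → M') : Prop :=
  Continuous f ∧ ∀ x : M, ContDiffWithinAt ℝ k
    (↑(extChartAt I' (f x)) ∘ f ∘ ↑(extChartAt I x).symm)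
    (Set.range I) (extChartAt I x x)

/-!
Cover `M` by coordinate balls of bounded overlap whose transition maps have uniformly bounded
power series. Polynomials prescribed on the balls that nearly agree on overlaps can be averaged
with polynomial bump functions: the discrepancy becomes exponentially small in the degree, while
the norms of the expansions and the number of overlapping balls stay under control. Iterating gives
on every ball a sum of polynomials of growing degree and rapidly decreasing size, which is analytic
by Bernstein's inequality. So a class of analytic functions that is closed under suitably weighted
infinite sums is uniformly dense in the continuous functions of compact support and contains one
that tends to infinity at infinity.

Averages of these functions over the group are analytic and invariant, and countably many of them
separate the orbits. An average tending to infinity, multiplied by a nonzero vector of `ℝⁿ`, is a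
proper map, and it remains proper when a bounded series of the separating averages with bounded
coefficients in `ℝⁿ` is added. A pair of distinct orbits excludes one value of a coefficient, hence
the pairs in a product of charts exclude a set of dimension at most `2 * d < n`; by the Baire
category theorem some choice of coefficients separates all orbits. A proper map separating the
orbits is a closed embedding of the orbit space.
-/

namespace AnalyticOrbitEmbedding

/-! ### Absolutely convergent word expansions -/

section WordExpansions

variable {κ κ' : Type*} {R S B B' : ℝ} {f g : (κ → ℝ) → ℝ} {x : κ → ℝ}

/-- The monomial spelled by a word in the variables. Words are used instead of multi-indices
because multiplication of monomials is then concatenation. -/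
def wordMonomial (w : List κ) (x : κ → ℝ) : ℝ := (w.map x).prod

/-- `f` is, on the box `|x i| ≤ R`, the sum of a series of word monomials whose `ℓ¹` norm with
weights `R ^ length` is at most `B`. Several words may spell the same monomial, so the coefficients
are not unique. -/
def HasExpansion (R B : ℝ) (f : (κ → ℝ) → ℝ) : Prop :=
  ∃ c : List κ → ℝ, Summable (fun w => |c w| * R ^ w.length) ∧
    ∑' w, |c w| * R ^ w.length ≤ B ∧
    ∀ x, (∀ i, |x i| ≤ R) → f x = ∑' w, c w * wordMonomial w x

/-- `f` is a polynomial of degree at most `N` whose coefficients, as a combination of word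
monomials, have `ℓ¹` norm at most `B` with respect to the weights `R ^ length`. -/
def HasPolyExpansion (N : ℕ) (R B : ℝ) (f : (κ → ℝ) → ℝ) : Prop :=
  ∃ (s : Finset (List κ)) (c : List κ → ℝ), (∀ w ∈ s, w.length ≤ N) ∧
    ∑ w ∈ s, |c w| * R ^ w.length ≤ B ∧ ∀ x, f x = ∑ w ∈ s, c w * wordMonomial w x

theorem wordMonomial_nil (x : κ → ℝ) : wordMonomial [] x = 1 := by simp [wordMonomial]

theorem wordMonomial_cons (i : κ) (w : List κ) (x : κ → ℝ) :
    wordMonomial (i :: w) x = x i * wordMonomial w x := by simp [wordMonomial]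

theorem wordMonomial_append (w w' : List κ) (x : κ → ℝ) :
    wordMonomial (w ++ w') x = wordMonomial w x * wordMonomial w' x := by simp [wordMonomial]

theorem abs_wordMonomial_le (w : List κ) (hx : ∀ i, |x i| ≤ R) :
    |wordMonomial w x| ≤ R ^ w.length := by
  induction w with
  | nil => simp [wordMonomial]
  | cons i w ih =>
    rw [wordMonomial_cons, abs_mul, List.length_cons, pow_succ']
    exact mul_le_mul (hx i) ih (abs_nonneg _) ((abs_nonneg _).trans (hx i))

theorem abs_tsum_le {J : Type*} {u : J → ℝ} (hu : Summable (fun j => |u j|)) :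
    |∑' j, u j| ≤ ∑' j, |u j| := by
  simpa only [Real.norm_eq_abs] using norm_tsum_le_tsum_norm (f := u) hu

section Series

variable {J : Type*} {c : J → ℝ} {w : J → List κ}

theorem abs_mul_wordMonomial_le (a : ℝ) (v : List κ) (hx : ∀ i, |x i| ≤ R) :
    |a * wordMonomial v x| ≤ |a| * R ^ v.length := by
  rw [abs_mul]
  exact mul_le_mul_of_nonneg_left (abs_wordMonomial_le v hx) (abs_nonneg _)

theorem summable_abs_mul_wordMonomial (hc : Summable (fun j => |c j| * R ^ (w j).length))
    (hx : ∀ i, |x i| ≤ R) : Summable (fun j => |c j * wordMonomial (w j) x|) :=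
  hc.of_nonneg_of_le (fun _ => abs_nonneg _) fun j => abs_mul_wordMonomial_le (c j) (w j) hx

theorem HasExpansion.of_series (hR : 0 ≤ R) (hc : Summable (fun j => |c j| * R ^ (w j).length))
    (hB : ∑' j, |c j| * R ^ (w j).length ≤ B)
    (hf : ∀ x, (∀ i, |x i| ≤ R) → f x = ∑' j, c j * wordMonomial (w j) x) :
    HasExpansion R B f := by
  have coeff_le : ∀ v, |∑' j : w ⁻¹' {v}, c j| * R ^ v.length ≤
      ∑' j : w ⁻¹' {v}, |c j| * R ^ (w j).length := fun v => by
    have abs_term : ∀ j : w ⁻¹' {v}, |c j * R ^ v.length| = |c j| * R ^ (w j).length := fun j => by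
      rw [abs_mul, abs_of_nonneg (pow_nonneg hR _), j.2]
    rw [← abs_of_nonneg (pow_nonneg hR v.length), ← abs_mul, ← tsum_mul_right]
    simp only [← abs_term]
    refine abs_tsum_le ?_
    simp only [abs_term]
    exact hc.subtype _
  have hfib := hc.hasSum.tsum_fiberwise w
  have hcoeff := hfib.summable.of_nonneg_of_le
    (fun v => mul_nonneg (abs_nonneg _) (pow_nonneg hR _)) coeff_le
  refine ⟨fun v => ∑' j : w ⁻¹' {v}, c j, hcoeff,
    (hcoeff.tsum_le_tsum coeff_le hfib.summable).trans (hfib.tsum_eq.trans_le hB), fun x hx => ?_⟩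
  have hval := (summable_abs_mul_wordMonomial hc hx).of_abs.hasSum.tsum_fiberwise w
  rw [hf x hx, ← hval.tsum_eq]
  refine tsum_congr fun v => ?_
  rw [← tsum_mul_right]
  exact tsum_congr fun j => by rw [j.2]

end Series

namespace HasExpansion

theorem mono (h : HasExpansion R B f) (hB : B ≤ B') : HasExpansion R B' f :=
  let ⟨c, hc, hcB, hf⟩ := h
  ⟨c, hc, hcB.trans hB, hf⟩

theorem congr (h : HasExpansion R B f) (hfg : ∀ x, (∀ i, |x i| ≤ R) → g x = f x) :
    HasExpansion R B g :=
  let ⟨c, hc, hcB, hf⟩ := h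
  ⟨c, hc, hcB, fun x hx => (hfg x hx).trans (hf x hx)⟩

theorem abs_le (h : HasExpansion R B f) (hx : ∀ i, |x i| ≤ R) : |f x| ≤ B := by
  obtain ⟨c, hc, hcB, hf⟩ := h
  have hs := summable_abs_mul_wordMonomial (w := id) hc hx
  rw [hf x hx]
  exact (abs_tsum_le hs).trans <|
    (hs.tsum_le_tsum (fun w => abs_mul_wordMonomial_le (c w) w hx) hc).trans hcB

theorem nonneg (hR : 0 ≤ R) (h : HasExpansion R B f) : 0 ≤ B :=
  (abs_nonneg _).trans (h.abs_le (x := 0) fun _ => by simpa using hR)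

theorem tsum {A : Type*} (hR : 0 ≤ R) {B : A → ℝ} {F : A → (κ → ℝ) → ℝ}
    (h : ∀ a, HasExpansion R (B a) (F a)) (hB : Summable B)
    (hf : ∀ x, (∀ i, |x i| ≤ R) → f x = ∑' a, F a x) : HasExpansion R (∑' a, B a) f := by
  choose c hc hcB hF using h
  have hs : Summable fun p : A × List κ => |c p.1 p.2| * R ^ p.2.length :=
    (summable_prod_of_nonneg fun p => mul_nonneg (abs_nonneg _) (pow_nonneg hR _)).2
      ⟨hc, hB.of_nonneg_of_le
        (fun a => tsum_nonneg fun w => mul_nonneg (abs_nonneg _) (pow_nonneg hR _)) hcB⟩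
  refine of_series (w := Prod.snd) hR hs (hs.tsum_prod.trans_le (hs.prod.tsum_le_tsum hcB hB))
    fun x hx => ?_
  rw [hf x hx, (summable_abs_mul_wordMonomial (w := Prod.snd) hs hx).of_abs.tsum_prod]
  exact tsum_congr fun a => hF a x hx

theorem sum {A : Type*} (hR : 0 ≤ R) (s : Finset A) {B : A → ℝ} {F : A → (κ → ℝ) → ℝ}
    (h : ∀ a ∈ s, HasExpansion R (B a) (F a)) :
    HasExpansion R (∑ a ∈ s, B a) (fun x => ∑ a ∈ s, F a x) := by
  have hsum := tsum (A := s) hR (B := fun a => B a) (F := fun a => F a) (fun a => h a a.2)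
    Summable.of_finite (f := fun x => ∑ a ∈ s, F a x) fun x _ => by
      rw [tsum_fintype, Finset.sum_coe_sort s (fun a => F a x)]
  rwa [tsum_fintype, Finset.sum_coe_sort s B] at hsum

theorem add (hR : 0 ≤ R) (hf : HasExpansion R B f) (hg : HasExpansion R B' g) :
    HasExpansion R (B + B') (fun x => f x + g x) := by
  have hsum := sum hR (Finset.univ : Finset Bool) (B := fun b => cond b B B')
    (F := fun b => cond b f g) (fun b _ => by cases b <;> simpa)
  simpa using hsum

theorem monomial (hR : 0 ≤ R) (b : ℝ) (w : List κ) :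
    HasExpansion R (|b| * R ^ w.length) (fun x => b * wordMonomial w x) :=
  of_series (J := Unit) (c := fun _ => b) (w := fun _ => w) hR .of_finite (by simp) (by simp)

theorem const (hR : 0 ≤ R) (b : ℝ) : HasExpansion R |b| (fun _ : κ → ℝ => b) := by
  simpa [wordMonomial_nil] using monomial hR b ([] : List κ)

theorem coord (hR : 0 ≤ R) (i : κ) : HasExpansion R R (fun x : κ → ℝ => x i) := by
  simpa [wordMonomial] using monomial hR 1 [i]

theorem mul (hR : 0 ≤ R) (hf : HasExpansion R B f) (hg : HasExpansion R B' g) :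
    HasExpansion R (B * B') (fun x => f x * g x) := by
  have hB := hf.nonneg hR
  obtain ⟨c, hc, hcB, hf⟩ := hf
  obtain ⟨c', hc', hcB', hg⟩ := hg
  have nonneg_term : ∀ (a : List κ → ℝ) w, 0 ≤ |a w| * R ^ w.length := fun a w =>
    mul_nonneg (abs_nonneg _) (pow_nonneg hR _)
  have weight_mul : (fun p : List κ × List κ => |c p.1 * c' p.2| * R ^ (p.1 ++ p.2).length) =
      fun p => (|c p.1| * R ^ p.1.length) * (|c' p.2| * R ^ p.2.length) := by
    ext p
    rw [abs_mul, List.length_append, pow_add]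
    ring
  have hs := hc.mul_of_nonneg hc' (nonneg_term c) (nonneg_term c')
  refine of_series hR (c := fun p : List κ × List κ => c p.1 * c' p.2)
    (w := fun p => p.1 ++ p.2) (by rwa [weight_mul]) ?_ fun x hx => ?_
  · rw [weight_mul, ← hc.tsum_mul_tsum hc' hs]
    exact mul_le_mul hcB hcB' (tsum_nonneg (nonneg_term c')) hB
  · have summable_f : Summable fun w => ‖c w * wordMonomial w x‖ :=
      summable_abs_mul_wordMonomial (w := fun w => w) hc hx
    have summable_g : Summable fun w => ‖c' w * wordMonomial w x‖ :=
      summable_abs_mul_wordMonomial (w := fun w => w) hc' hx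
    rw [hf x hx, hg x hx, tsum_mul_tsum_of_summable_norm summable_f summable_g]
    refine tsum_congr fun p => ?_
    rw [wordMonomial_append]
    ring

theorem const_mul (hR : 0 ≤ R) (b : ℝ) (hf : HasExpansion R B f) :
    HasExpansion R (|b| * B) (fun x => b * f x) := (const hR b).mul hR hf

theorem neg (hR : 0 ≤ R) (hf : HasExpansion R B f) : HasExpansion R B (fun x => -f x) := by
  simpa using hf.const_mul hR (-1)

theorem sub (hR : 0 ≤ R) (hf : HasExpansion R B f) (hg : HasExpansion R B' g) :
    HasExpansion R (B + B') (fun x => f x - g x) := by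
  simpa [sub_eq_add_neg] using hf.add hR (hg.neg hR)

theorem pow (hR : 0 ≤ R) (hf : HasExpansion R B f) (n : ℕ) :
    HasExpansion R (B ^ n) (fun x => f x ^ n) := by
  induction n with
  | zero => simpa using const (κ := κ) hR 1
  | succ n ih => simpa [pow_succ] using ih.mul hR hf

theorem prod {A : Type*} (hR : 0 ≤ R) (s : Finset A) {B : A → ℝ} {F : A → (κ → ℝ) → ℝ}
    (h : ∀ a ∈ s, HasExpansion R (B a) (F a)) :
    HasExpansion R (∏ a ∈ s, B a) (fun x => ∏ a ∈ s, F a x) := by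
  classical
  induction s using Finset.induction_on with
  | empty => simpa using const (κ := κ) hR 1
  | insert a s ha ih =>
    simp only [Finset.prod_insert ha]
    exact (h a (by simp)).mul hR (ih fun b hb => h b (by simp [hb]))

theorem wordMonomial_comp (hR : 0 ≤ R) {φ : κ' → (κ → ℝ) → ℝ} (h : ∀ i, HasExpansion R S (φ i))
    (w : List κ') : HasExpansion R (S ^ w.length) (fun x => wordMonomial w (fun i => φ i x)) := by
  induction w with
  | nil => simpa [wordMonomial_nil] using const (κ := κ) hR 1
  | cons i w ih =>
    simp only [wordMonomial_cons, List.length_cons, pow_succ']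
    exact (h i).mul hR ih

end HasExpansion

namespace HasPolyExpansion

variable {N : ℕ}

theorem hasExpansion (hR : 0 ≤ R) (h : HasPolyExpansion N R B f) : HasExpansion R B f := by
  obtain ⟨s, c, -, hcB, hf⟩ := h
  exact ((HasExpansion.sum hR s fun w _ => .monomial hR (c w) w).mono hcB).congr fun x _ => hf x

theorem const (N : ℕ) (R b : ℝ) : HasPolyExpansion N R |b| (fun _ : κ → ℝ => b) :=
  ⟨{[]}, fun _ => b, by simp, by simp, by simp [wordMonomial_nil]⟩

theorem const_mul (b : ℝ) (h : HasPolyExpansion N R B f) :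
    HasPolyExpansion N R (|b| * B) (fun x => b * f x) := by
  obtain ⟨s, c, hs, hcB, hf⟩ := h
  refine ⟨s, fun w => b * c w, hs, ?_, fun x => ?_⟩
  · simpa only [abs_mul, mul_assoc, ← Finset.mul_sum] using
      mul_le_mul_of_nonneg_left hcB (abs_nonneg b)
  · simp only [hf x, Finset.mul_sum, mul_assoc]

theorem comp {R' : ℝ} (hR : 0 ≤ R) (hR' : 0 < R') (hS : R' ≤ S) {φ : κ' → (κ → ℝ) → ℝ}
    {q : (κ' → ℝ) → ℝ} (hq : HasPolyExpansion N R' B q) (h : ∀ i, HasExpansion R S (φ i)) :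
    HasExpansion R ((S / R') ^ N * B) (fun x => q (fun i => φ i x)) := by
  obtain ⟨s, c, hs, hcB, hq⟩ := hq
  have one_le : 1 ≤ S / R' := by rwa [one_le_div hR']
  refine ((HasExpansion.sum hR s fun w _ =>
    (HasExpansion.wordMonomial_comp hR h w).const_mul hR (c w)).mono ?_).congr fun x _ => hq _
  calc ∑ w ∈ s, |c w| * S ^ w.length
      ≤ ∑ w ∈ s, (S / R') ^ N * (|c w| * R' ^ w.length) := Finset.sum_le_sum fun w hw => by
        calc |c w| * S ^ w.length = (S / R') ^ w.length * (|c w| * R' ^ w.length) := by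
              rw [div_pow]; field_simp
          _ ≤ (S / R') ^ N * (|c w| * R' ^ w.length) := by
              gcongr
              exact hs w hw
    _ = (S / R') ^ N * ∑ w ∈ s, |c w| * R' ^ w.length := (Finset.mul_sum ..).symm
    _ ≤ (S / R') ^ N * B := by gcongr

theorem of_mvPolynomial (R : ℝ) (p : MvPolynomial κ ℝ) :
    ∃ N B, HasPolyExpansion N R B (fun x => MvPolynomial.eval x p) := by
  classical
  let word : (κ →₀ ℕ) → List κ := fun m => (Finsupp.toMultiset m).toList
  have toFinsupp_word : ∀ m, Multiset.toFinsupp (word m : Multiset κ) = m := fun m => by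
    simp [word]
  have word_injective : Function.Injective word := fun a b hab => by
    rw [← toFinsupp_word a, hab, toFinsupp_word b]
  have wordMonomial_word : ∀ m x, wordMonomial (word m) x = m.prod fun i n => x i ^ n := by
    intro m x
    have : wordMonomial (word m) x = ((Finsupp.toMultiset m).map x).prod := by
      rw [wordMonomial, ← Multiset.prod_coe, ← Multiset.map_coe]
      simp [word]
    rw [this, Finsupp.toMultiset_map, Finsupp.prod_toMultiset,
      Finsupp.prod_mapDomain_index (by simp) (by simp [pow_add])]
  refine ⟨(p.support.image word).sup List.length, _, p.support.image word,
    fun w => p.coeff (Multiset.toFinsupp (w : Multiset κ)),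
    fun w hw => Finset.le_sup (f := List.length) hw, le_rfl, fun x => ?_⟩
  simp only [Finset.sum_image word_injective.injOn, MvPolynomial.eval_eq]
  refine Finset.sum_congr rfl fun m _ => ?_
  rw [toFinsupp_word, wordMonomial_word, Finsupp.prod]

end HasPolyExpansion

theorem HasExpansion.exists_polynomial_approx [Finite κ] {r : ℝ} (hr : 0 ≤ r) (hrR : r ≤ R)
    (hR : 0 < R) (h : HasExpansion R B f) (N : ℕ) :
    ∃ q, HasPolyExpansion N R B q ∧
      ∀ x : κ → ℝ, (∀ i, |x i| ≤ r) → |f x - q x| ≤ (r / R) ^ N * B := by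
  obtain ⟨c, hc, hcB, hf⟩ := h
  have nonneg_term : ∀ w : List κ, 0 ≤ |c w| * R ^ w.length := fun w => by positivity
  let s := (List.finite_length_le κ N).toFinset
  have mem_s : ∀ w, w ∈ s ↔ w.length ≤ N := fun w => by simp [s]
  refine ⟨fun x => ∑ w ∈ s, c w * wordMonomial w x, ⟨s, c, fun w => (mem_s w).1,
    (hc.sum_le_tsum s fun w _ => nonneg_term w).trans hcB, fun x => rfl⟩, fun x hx => ?_⟩
  have hxR : ∀ i, |x i| ≤ R := fun i => (hx i).trans hrR
  have hs := summable_abs_mul_wordMonomial (w := fun w => w) hc hxR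
  rw [hf x hxR, ← hs.of_abs.sum_add_tsum_subtype_compl s, add_sub_cancel_left]
  have tail_le : ∀ w : {w // w ∉ s}, |c w * wordMonomial (w : List κ) x| ≤
      (r / R) ^ N * (|c w| * R ^ (w : List κ).length) := by
    rintro ⟨w, hw⟩
    rw [mem_s, not_le] at hw
    calc |c w * wordMonomial w x| ≤ |c w| * r ^ w.length := abs_mul_wordMonomial_le _ _ hx
      _ = (r / R) ^ w.length * (|c w| * R ^ w.length) := by rw [div_pow]; field_simp
      _ ≤ (r / R) ^ N * (|c w| * R ^ w.length) := mul_le_mul_of_nonneg_right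
          (pow_le_pow_of_le_one (by positivity) (div_le_one_of_le₀ hrR hR.le) hw.le) (nonneg_term w)
  have tail_summable : Summable fun w : {w // w ∉ s} => |c w * wordMonomial (w : List κ) x| :=
    hs.subtype fun w => w ∉ s
  calc |∑' w : {w // w ∉ s}, c w * wordMonomial (w : List κ) x|
      ≤ ∑' w : {w // w ∉ s}, |c w * wordMonomial (w : List κ) x| := abs_tsum_le tail_summable
    _ ≤ ∑' w : {w // w ∉ s}, (r / R) ^ N * (|c w| * R ^ (w : List κ).length) :=
      tail_summable.tsum_le_tsum tail_le ((hc.subtype fun w => w ∉ s).mul_left _)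
    _ = (r / R) ^ N * ∑' w : {w // w ∉ s}, (|c w| * R ^ (w : List κ).length) := tsum_mul_left
    _ ≤ (r / R) ^ N * B := by
      gcongr
      exact (hc.tsum_subtype_le _ {w | w ∉ s} nonneg_term).trans hcB

end WordExpansions

/-! ### Polynomial bump functions -/

section BinomialTail

variable {v : ℝ}

/-- The probability of at least `K` successes in `2 * K` independent trials of probability `v`: a
polynomial in `v` which is exponentially close, as `K → ∞`, to the indicator function of
`1 / 2 < v`. -/
noncomputable def binomialTail (K : ℕ) (v : ℝ) : ℝ :=
  ∑ j ∈ Finset.Ico K (2 * K + 1), v ^ j * (1 - v) ^ (2 * K - j) * (2 * K).choose j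

theorem sum_range_add_binomialTail (K : ℕ) (v : ℝ) :
    ∑ j ∈ Finset.range K, v ^ j * (1 - v) ^ (2 * K - j) * (2 * K).choose j + binomialTail K v =
      1 := by
  rw [binomialTail, Finset.sum_range_add_sum_Ico _ (by lia), ← add_pow]
  simp

theorem binomialTail_nonneg (K : ℕ) (hv₀ : 0 ≤ v) (hv₁ : v ≤ 1) : 0 ≤ binomialTail K v := by
  have : 0 ≤ 1 - v := sub_nonneg.2 hv₁
  exact Finset.sum_nonneg fun j _ => by positivity

theorem binomialTail_le_one (K : ℕ) (hv₀ : 0 ≤ v) (hv₁ : v ≤ 1) : binomialTail K v ≤ 1 := by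
  have : 0 ≤ 1 - v := sub_nonneg.2 hv₁
  rw [← sum_range_add_binomialTail K v]
  exact le_add_of_nonneg_left (Finset.sum_nonneg fun j _ => by positivity)

theorem one_sub_binomialTail_le (K : ℕ) (hv₀ : 0 ≤ v) (hv₁ : v ≤ 1) :
    1 - binomialTail K v ≤ binomialTail K (1 - v) := by
  have : 0 ≤ 1 - v := sub_nonneg.2 hv₁
  have reflect : binomialTail K (1 - v) =
      ∑ j ∈ Finset.range (K + 1), v ^ j * (1 - v) ^ (2 * K - j) * (2 * K).choose j := by
    rw [Finset.range_eq_Ico, show 0 = 2 * K + 1 - (2 * K + 1) by lia,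
      show K + 1 = 2 * K + 1 - K by lia, ← Finset.sum_Ico_reflect _ _ le_rfl, binomialTail]
    refine Finset.sum_congr rfl fun j hj => ?_
    have hj : j ≤ 2 * K := Nat.lt_succ_iff.1 (Finset.mem_Ico.1 hj).2
    rw [Nat.choose_symm hj, Nat.sub_sub_self hj, sub_sub_cancel]
    ring
  rw [reflect, Finset.sum_range_succ, ← eq_sub_of_add_eq (sum_range_add_binomialTail K v)]
  exact le_add_of_nonneg_right (by positivity)

theorem binomialTail_le_pow (K : ℕ) (hv₀ : 0 ≤ v) (hv : v ≤ 1 / 4) :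
    binomialTail K v ≤ (3 / 4) ^ K := by
  have : 0 ≤ 1 - v := by linarith
  -- Chernoff's bound: weight the `j`-th term by `3 ^ (j - K) ≥ 1`.
  have tilted : 3 ^ K * binomialTail K v ≤ (3 * v + (1 - v)) ^ (2 * K) := by
    rw [add_pow, ← Finset.sum_range_add_sum_Ico _ (show K ≤ 2 * K + 1 by lia), binomialTail,
      Finset.mul_sum]
    refine le_add_of_nonneg_of_le (Finset.sum_nonneg fun j _ => by positivity)
      (Finset.sum_le_sum fun j hj => ?_)
    calc (3 : ℝ) ^ K * (v ^ j * (1 - v) ^ (2 * K - j) * (2 * K).choose j)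
        ≤ 3 ^ j * (v ^ j * (1 - v) ^ (2 * K - j) * (2 * K).choose j) := by
          gcongr
          exacts [by norm_num, (Finset.mem_Ico.1 hj).1]
      _ = (3 * v) ^ j * (1 - v) ^ (2 * K - j) * (2 * K).choose j := by rw [mul_pow]; ring
  have tilted_le : (3 * v + (1 - v)) ^ (2 * K) ≤ 3 ^ K * (3 / 4) ^ K := by
    rw [pow_mul, ← mul_pow]
    exact pow_le_pow_left₀ (by positivity) (by nlinarith) K
  exact le_of_mul_le_mul_left (tilted.trans tilted_le) (by positivity)

theorem one_sub_binomialTail_le_pow (K : ℕ) (hv : 3 / 4 ≤ v) (hv₁ : v ≤ 1) :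
    1 - binomialTail K v ≤ (3 / 4) ^ K :=
  (one_sub_binomialTail_le K (by linarith) hv₁).trans
    (binomialTail_le_pow K (by linarith) (by linarith))

end BinomialTail

section PolyBump

variable {ι κ : Type*} [Fintype ι] {D : ℕ} {y : ι → ℝ}

/-- A polynomial on `ι → ℝ` that is close to `1` where `∑ i, y i ^ 2 ≤ 1 / 4`, close to `0` where
`4 ≤ ∑ i, y i ^ 2 ≤ D`, and in `[0, 1]` wherever `∑ i, y i ^ 2 ≤ D`; the error is exponentially
small in `K`. -/
noncomputable def polyBump (D K : ℕ) (y : ι → ℝ) : ℝ :=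
  binomialTail K ((1 - (∑ i, y i ^ 2) / D) ^ D)

theorem one_sub_sum_sq_div_mem_Icc (hD : 0 < D) (hy : ∑ i, y i ^ 2 ≤ D) :
    1 - (∑ i, y i ^ 2) / D ∈ Set.Icc 0 1 := by
  have hD : (0 : ℝ) < D := by exact_mod_cast hD
  have : 0 ≤ (∑ i, y i ^ 2) / D := div_nonneg (Finset.sum_nonneg fun i _ => sq_nonneg _) hD.le
  have := (div_le_one hD).2 hy
  constructor <;> linarith

theorem polyBump_mem_Icc (K : ℕ) (hD : 0 < D) (hy : ∑ i, y i ^ 2 ≤ D) :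
    polyBump D K y ∈ Set.Icc 0 1 := by
  obtain ⟨h₀, h₁⟩ := one_sub_sum_sq_div_mem_Icc hD hy
  exact ⟨binomialTail_nonneg K (by positivity) (pow_le_one₀ h₀ h₁),
    binomialTail_le_one K (by positivity) (pow_le_one₀ h₀ h₁)⟩

theorem polyBump_le_pow (K : ℕ) (hD : 0 < D) (hy : ∑ i, y i ^ 2 ≤ D) (hy₄ : 4 ≤ ∑ i, y i ^ 2) :
    polyBump D K y ≤ (3 / 4) ^ K := by
  have h₀ := (one_sub_sum_sq_div_mem_Icc hD hy).1
  have hD : (0 : ℝ) < D := by exact_mod_cast hD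
  refine binomialTail_le_pow K (by positivity) ?_
  have le_exp : 1 - (∑ i, y i ^ 2) / D ≤ Real.exp (-(4 / D)) := by
    have : 4 / (D : ℝ) ≤ (∑ i, y i ^ 2) / D := by gcongr
    linarith [Real.add_one_le_exp (-(4 / (D : ℝ)))]
  calc (1 - (∑ i, y i ^ 2) / D) ^ D ≤ Real.exp (-(4 / D)) ^ D := by gcongr
    _ = Real.exp (-4) := by
      rw [← Real.exp_nat_mul, mul_neg, mul_div_cancel₀ _ hD.ne']
    _ ≤ 1 / 4 := by
      rw [Real.exp_neg, ← one_div]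
      gcongr
      linarith [Real.add_one_le_exp (4 : ℝ)]

theorem one_sub_polyBump_le_pow (K : ℕ) (hD : 0 < D) (hy : ∑ i, y i ^ 2 ≤ 1 / 4) :
    1 - polyBump D K y ≤ (3 / 4) ^ K := by
  have hD' : (1 : ℝ) ≤ D := by exact_mod_cast hD
  obtain ⟨h₀, h₁⟩ := one_sub_sum_sq_div_mem_Icc hD (y := y) (by linarith)
  refine one_sub_binomialTail_le_pow K ?_ (pow_le_one₀ h₀ h₁)
  have bernoulli := one_add_mul_le_pow (a := -((∑ i, y i ^ 2) / D)) (by linarith) D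
  rw [← sub_eq_add_neg, mul_neg, mul_div_cancel₀ _ (by positivity), ← sub_eq_add_neg] at bernoulli
  linarith

theorem HasExpansion.polyBump_comp (K : ℕ) (hD : 0 < D) {R S : ℝ} (hR : 0 ≤ R)
    (hS : Fintype.card ι * S ^ 2 ≤ D) {φ : ι → (κ → ℝ) → ℝ} (h : ∀ i, HasExpansion R S (φ i)) :
    HasExpansion R (((1 + 2 ^ (D + 1)) ^ 2) ^ K) (fun x => polyBump D K (fun i => φ i x)) := by
  have hD : (0 : ℝ) < D := by exact_mod_cast hD
  have expansion_base : HasExpansion R 2 (fun x => 1 - (∑ i, φ i x ^ 2) / D) := by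
    have sum_sq := HasExpansion.sum hR Finset.univ fun i _ => (h i).pow hR 2
    refine (((HasExpansion.const hR 1).sub hR (sum_sq.const_mul hR (1 / D))).mono ?_).congr
      fun x _ => by ring
    have : Fintype.card ι * S ^ 2 / D ≤ 1 := (div_le_one hD).2 hS
    rw [Finset.sum_const, Finset.card_univ, nsmul_eq_mul, abs_one, abs_of_pos (by positivity),
      one_div_mul_eq_div]
    linarith
  have expansion_pow := expansion_base.pow hR D
  have expansion_one_sub := (HasExpansion.const hR 1).sub hR expansion_pow
  refine (HasExpansion.sum hR (Finset.Ico K (2 * K + 1)) fun j _ =>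
    ((expansion_pow.pow hR j).mul hR (expansion_one_sub.pow hR (2 * K - j))).mul hR
      (HasExpansion.const hR ((2 * K).choose j : ℝ))).mono ?_
  rw [← pow_mul, show (1 + 2 ^ (D + 1) : ℝ) = 2 ^ D + (1 + 2 ^ D) by ring, add_pow,
    ← Finset.sum_range_add_sum_Ico _ (show K ≤ 2 * K + 1 by lia)]
  simp only [Nat.abs_cast, abs_one]
  exact le_add_of_nonneg_left (Finset.sum_nonneg fun j _ => by positivity)

end PolyBump

/-! ### Ordered partition weights -/

section OrderedWeights

variable {ι : Type*} {s t : Finset ι} {χ : ι → ℝ} {δ : ℝ}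

theorem prod_one_sub_mem_Icc (hχ : ∀ c ∈ s, χ c ∈ Set.Icc 0 1) :
    ∏ c ∈ s, (1 - χ c) ∈ Set.Icc 0 1 :=
  ⟨Finset.prod_nonneg fun c hc => sub_nonneg.2 (hχ c hc).2,
    Finset.prod_le_one (fun c hc => sub_nonneg.2 (hχ c hc).2)
      fun c hc => sub_le_self 1 (hχ c hc).1⟩

theorem one_sub_prod_one_sub_le (hχ : ∀ c ∈ s, χ c ∈ Set.Icc 0 1) (hδ : ∀ c ∈ s, χ c ≤ δ) :
    1 - ∏ c ∈ s, (1 - χ c) ≤ s.card * δ := by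
  classical
  induction s using Finset.induction_on with
  | empty => simp
  | insert a s ha ih =>
    rw [Finset.prod_insert ha, Finset.card_insert_of_notMem ha]
    have hs := ih (fun c hc => hχ c (by simp [hc])) fun c hc => hδ c (by simp [hc])
    have hprod := prod_one_sub_mem_Icc (s := s) fun c hc => hχ c (by simp [hc])
    have hχa := hχ a (by simp)
    have hδa := hδ a (by simp)
    push_cast
    nlinarith [hprod.1, hprod.2, hχa.1]

variable [LinearOrder ι]

/-- The partition weights obtained from bump functions `χ c`, `c ∈ s`: in increasing order, each
index takes the proportion `χ c` of what the preceding ones have left. -/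
noncomputable def orderedWeight (s : Finset ι) (χ : ι → ℝ) (c : ι) : ℝ :=
  χ c * ∏ j ∈ s with j < c, (1 - χ j)

theorem orderedWeight_mem_Icc (hχ : ∀ c ∈ s, χ c ∈ Set.Icc 0 1) {c : ι} (hc : c ∈ s) :
    orderedWeight s χ c ∈ Set.Icc 0 (χ c) := by
  have hprod := prod_one_sub_mem_Icc (s := s.filter (· < c)) fun j hj =>
    hχ j (Finset.mem_filter.1 hj).1
  exact ⟨mul_nonneg (hχ c hc).1 hprod.1, mul_le_of_le_one_right (hχ c hc).1 hprod.2⟩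

theorem one_sub_sum_orderedWeight (s : Finset ι) (χ : ι → ℝ) :
    1 - ∑ c ∈ s, orderedWeight s χ c = ∏ c ∈ s, (1 - χ c) := by
  rw [Finset.prod_one_sub_ordered]
  rfl

theorem sum_orderedWeight_le_one (hχ : ∀ c ∈ s, χ c ∈ Set.Icc 0 1) :
    ∑ c ∈ s, orderedWeight s χ c ≤ 1 :=
  sub_nonneg.1 ((prod_one_sub_mem_Icc hχ).1.trans_eq (one_sub_sum_orderedWeight s χ).symm)

theorem abs_orderedWeight_sub_le (hts : t ⊆ s) (hχ : ∀ c ∈ s, χ c ∈ Set.Icc 0 1) (hδ₀ : 0 ≤ δ)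
    (hδ : ∀ c ∈ s \ t, χ c ≤ δ) {c : ι} (hc : c ∈ t) :
    |orderedWeight s χ c - orderedWeight t χ c| ≤ s.card * δ := by
  set u := (s \ t).filter (· < c)
  have hus : ∀ j ∈ u, j ∈ s \ t := fun j hj => (Finset.mem_filter.1 hj).1
  have hχu : ∀ j ∈ u, χ j ∈ Set.Icc 0 1 := fun j hj => hχ j (Finset.mem_sdiff.1 (hus j hj)).1
  have factor : orderedWeight s χ c = orderedWeight t χ c * ∏ j ∈ u, (1 - χ j) := by
    rw [orderedWeight, orderedWeight, mul_assoc, ← Finset.prod_union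
      (Finset.disjoint_filter_filter Finset.disjoint_sdiff), ← Finset.filter_union,
      Finset.union_sdiff_of_subset hts]
  have hwt := orderedWeight_mem_Icc (fun j hj => hχ j (hts hj)) hc
  have hwt₁ := hwt.2.trans (hχ c (hts hc)).2
  have hprod := prod_one_sub_mem_Icc hχu
  rw [factor, abs_sub_comm, ← mul_one_sub, abs_of_nonneg (mul_nonneg hwt.1 (sub_nonneg.2 hprod.2))]
  calc orderedWeight t χ c * (1 - ∏ j ∈ u, (1 - χ j))
      ≤ 1 - ∏ j ∈ u, (1 - χ j) := mul_le_of_le_one_left (sub_nonneg.2 hprod.2) hwt₁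
    _ ≤ u.card * δ := one_sub_prod_one_sub_le hχu fun j hj => hδ j (hus j hj)
    _ ≤ s.card * δ := by
      gcongr
      exact (Finset.filter_subset _ _).trans Finset.sdiff_subset

theorem abs_sum_orderedWeight_sub_le (hts : t ⊆ s) (hχ : ∀ c ∈ s, χ c ∈ Set.Icc 0 1)
    (hδ₀ : 0 ≤ δ) (hδ : ∀ c ∈ s \ t, χ c ≤ δ) {v : ι → ℝ} {E : ℝ} (hE₀ : 0 ≤ E)
    (hE : ∀ c ∈ s, |v c| ≤ E) :
    |∑ c ∈ s, orderedWeight s χ c * v c - ∑ c ∈ t, orderedWeight t χ c * v c| ≤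
      (s.card + s.card ^ 2) * (δ * E) := by
  have outside : |∑ c ∈ s \ t, orderedWeight s χ c * v c| ≤ s.card * (δ * E) := by
    refine (Finset.abs_sum_le_sum_abs _ _).trans
      ((Finset.sum_le_card_nsmul _ _ (δ * E) fun c hc => ?_).trans ?_)
    · have hcs := (Finset.mem_sdiff.1 hc).1
      have hw := orderedWeight_mem_Icc hχ hcs
      rw [abs_mul, abs_of_nonneg hw.1]
      exact mul_le_mul (hw.2.trans (hδ c hc)) (hE c hcs) (abs_nonneg _) hδ₀
    · rw [nsmul_eq_mul]
      gcongr
      exact Finset.sdiff_subset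
  have inside : |∑ c ∈ t, (orderedWeight s χ c * v c - orderedWeight t χ c * v c)| ≤
      s.card * (s.card * δ * E) := by
    refine (Finset.abs_sum_le_sum_abs _ _).trans
      ((Finset.sum_le_card_nsmul _ _ (s.card * δ * E) fun c hc => ?_).trans ?_)
    · rw [← sub_mul, abs_mul]
      exact mul_le_mul (abs_orderedWeight_sub_le hts hχ hδ₀ hδ hc) (hE c (hts hc)) (abs_nonneg _)
        (by positivity)
    · rw [nsmul_eq_mul]
      gcongr
  rw [← Finset.sum_sdiff hts, add_sub_assoc, ← Finset.sum_sub_distrib]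
  refine (abs_add_le _ _).trans ((add_le_add outside inside).trans_eq ?_)
  ring

theorem add_sum_orderedWeight_sub (t : Finset ι) (χ P : ι → ℝ) (A B : ℝ) :
    (B + ∑ c ∈ t, orderedWeight t χ c * (P c - B)) -
      (A + ∑ c ∈ t, orderedWeight t χ c * (P c - A)) = (B - A) * ∏ c ∈ t, (1 - χ c) := by
  simp only [← one_sub_sum_orderedWeight, mul_sub, Finset.sum_sub_distrib, ← Finset.sum_mul]
  ring

end OrderedWeights

/-! ### Uniform atlases and the correction step -/

/-- A locally finite family of coordinate balls with uniform control: every ball meets at most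
`maxNbr` others, and the transition maps from a ball to its neighbours are power series converging
on a fixed larger polydisc with uniformly bounded norm. The balls have radius `2`; the concentric
balls of radius `1 / 2` already cover `M`. -/
structure UniformAtlas (d : ℕ) (M ι : Type*) where
  coord : ι → M → Fin d → ℝ
  ball : ι → Set M
  nbr : ι → Finset ι
  trans : ι → ι → (Fin d → ℝ) → Fin d → ℝ
  maxNbr : ℕ
  bound : ℝ
  four_le_bound : 4 ≤ bound
  card_nbr_le : ∀ a, (nbr a).card ≤ maxNbr
  mem_nbr : ∀ {a c x}, x ∈ ball a → x ∈ ball c → c ∈ nbr a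
  sum_sq_lt : ∀ {a x}, x ∈ ball a → ∑ i, coord a x i ^ 2 < 4
  exists_coord_eq : ∀ a y, ∑ i, y i ^ 2 < 4 → ∃ x ∈ ball a, coord a x = y
  trans_expansion : ∀ {a c}, c ∈ nbr a → ∀ i, HasExpansion 4 bound (fun y => trans a c y i)
  trans_coord : ∀ {a c x}, x ∈ ball a → c ∈ nbr a → trans a c (coord a x) = coord c x
  mem_ball : ∀ {a c x}, x ∈ ball a → c ∈ nbr a → ∑ i, coord c x i ^ 2 < 4 → x ∈ ball c
  exists_sum_sq_le : ∀ x, ∃ a, x ∈ ball a ∧ ∑ i, coord a x i ^ 2 ≤ 1 / 4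

namespace UniformAtlas

variable {d : ℕ} {M ι : Type*} (𝒜 : UniformAtlas d M ι) {a b c : ι} {x : M} {E ε : ℝ} {K : ℕ}
  {p : ι → (Fin d → ℝ) → ℝ}

/-- The local functions `p a` disagree under the transition maps by expansions of norm at most
`E`. -/
def HasMismatch (E : ℝ) (p : ι → (Fin d → ℝ) → ℝ) : Prop :=
  ∀ a, ∀ c ∈ 𝒜.nbr a, HasExpansion 4 E (fun y => p c (𝒜.trans a c y) - p a y)

/-- The functions `p a ∘ coord a` differ by at most `ε` where two balls overlap. -/
def HasSupMismatch (ε : ℝ) (p : ι → (Fin d → ℝ) → ℝ) : Prop :=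
  ∀ a b x, x ∈ 𝒜.ball a → x ∈ 𝒜.ball b → |p b (𝒜.coord b x) - p a (𝒜.coord a x)| ≤ ε

theorem abs_coord_le_two (hx : x ∈ 𝒜.ball a) (i : Fin d) : |𝒜.coord a x i| ≤ 2 := by
  have : 𝒜.coord a x i ^ 2 ≤ ∑ i, 𝒜.coord a x i ^ 2 :=
    Finset.single_le_sum (f := fun i => 𝒜.coord a x i ^ 2) (fun i _ => sq_nonneg _)
      (Finset.mem_univ i)
  exact abs_le_of_sq_le_sq (by linarith [𝒜.sum_sq_lt hx]) zero_le_two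

theorem abs_coord_le_four (hx : x ∈ 𝒜.ball a) (i : Fin d) : |𝒜.coord a x i| ≤ 4 :=
  (𝒜.abs_coord_le_two hx i).trans (by norm_num)

section

variable {𝒜}

theorem HasMismatch.abs_sub_le (hp : 𝒜.HasMismatch E p) (hx : x ∈ 𝒜.ball a) (hc : c ∈ 𝒜.nbr a) :
    |p c (𝒜.coord c x) - p a (𝒜.coord a x)| ≤ E := by
  simpa only [𝒜.trans_coord hx hc] using (hp a c hc).abs_le (𝒜.abs_coord_le_four hx)

theorem HasMismatch.add_polynomial (hp : 𝒜.HasMismatch E p) {N : ℕ} {B : ℝ}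
    {q : ι → (Fin d → ℝ) → ℝ} (hq : ∀ a, HasPolyExpansion N 4 B (q a)) :
    𝒜.HasMismatch (E + (𝒜.bound / 4) ^ N * B + B) (fun a y => p a y + q a y) := fun a c hc =>
  (((hp a c hc).add zero_le_four ((hq c).comp zero_le_four four_pos 𝒜.four_le_bound
    (𝒜.trans_expansion hc))).sub zero_le_four ((hq a).hasExpansion zero_le_four)).congr
    fun x _ => by ring

end

/-- The degree making `polyBump` a bump function on every box containing a ball and its
neighbours. -/
noncomputable def bumpDegree : ℕ := ⌈d * 𝒜.bound ^ 2⌉₊ + 1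

theorem bumpDegree_pos : 0 < 𝒜.bumpDegree := Nat.succ_pos _

theorem mul_sq_le_bumpDegree : d * 𝒜.bound ^ 2 ≤ 𝒜.bumpDegree := by
  rw [bumpDegree, Nat.cast_add_one]
  exact (Nat.le_ceil _).trans (le_add_of_nonneg_right zero_le_one)

theorem sum_sq_coord_le (hx : x ∈ 𝒜.ball a) (hc : c ∈ 𝒜.nbr a) :
    ∑ i, 𝒜.coord c x i ^ 2 ≤ 𝒜.bumpDegree := by
  have sq_le : ∀ i, 𝒜.coord c x i ^ 2 ≤ 𝒜.bound ^ 2 := fun i => by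
    rw [← 𝒜.trans_coord hx hc]
    exact sq_le_sq' (neg_le_of_abs_le ((𝒜.trans_expansion hc i).abs_le (𝒜.abs_coord_le_four hx)))
      (le_of_abs_le ((𝒜.trans_expansion hc i).abs_le (𝒜.abs_coord_le_four hx)))
  refine (Finset.sum_le_card_nsmul _ _ _ fun i _ => sq_le i).trans ?_
  simpa using 𝒜.mul_sq_le_bumpDegree

/-- The bump function centred at the ball `c`. -/
noncomputable def bump (K : ℕ) (c : ι) (x : M) : ℝ := polyBump 𝒜.bumpDegree K (𝒜.coord c x)

theorem bump_mem_Icc (K : ℕ) (hx : x ∈ 𝒜.ball a) (hc : c ∈ 𝒜.nbr a) :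
    𝒜.bump K c x ∈ Set.Icc 0 1 :=
  polyBump_mem_Icc K 𝒜.bumpDegree_pos (𝒜.sum_sq_coord_le hx hc)

theorem bump_le_pow (K : ℕ) (hx : x ∈ 𝒜.ball a) (hc : c ∈ 𝒜.nbr a) (hxc : x ∉ 𝒜.ball c) :
    𝒜.bump K c x ≤ (3 / 4) ^ K :=
  polyBump_le_pow K 𝒜.bumpDegree_pos (𝒜.sum_sq_coord_le hx hc)
    (not_lt.1 fun h => hxc (𝒜.mem_ball hx hc h))

variable [LinearOrder ι]

/-- The partition weight of the ball `c`, as a function of the coordinates of the ball `a`. -/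
noncomputable def weight (K : ℕ) (a c : ι) (y : Fin d → ℝ) : ℝ :=
  orderedWeight (𝒜.nbr a) (fun j => polyBump 𝒜.bumpDegree K (𝒜.trans a j y)) c

theorem weight_coord (K : ℕ) (hx : x ∈ 𝒜.ball a) (hc : c ∈ 𝒜.nbr a) :
    𝒜.weight K a c (𝒜.coord a x) = orderedWeight (𝒜.nbr a) (fun j => 𝒜.bump K j x) c := by
  simp only [weight, orderedWeight, bump, 𝒜.trans_coord hx hc]
  congr 1
  exact Finset.prod_congr rfl fun j hj => by rw [𝒜.trans_coord hx (Finset.mem_filter.1 hj).1]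

theorem exists_weight_expansion : ∃ W, 1 ≤ W ∧ ∀ K, 1 ≤ K → ∀ a, ∀ c ∈ 𝒜.nbr a,
    HasExpansion 4 (W ^ K) (𝒜.weight K a c) := by
  set T : ℝ := (1 + 2 ^ (𝒜.bumpDegree + 1)) ^ 2
  have one_le_T : 1 ≤ T := one_le_pow₀ (le_add_of_nonneg_right (by positivity))
  refine ⟨(2 * T) ^ (𝒜.maxNbr + 1), one_le_pow₀ (by linarith), fun K hK a c hc => ?_⟩
  have bump_expansion : ∀ j ∈ 𝒜.nbr a,
      HasExpansion 4 (T ^ K) (fun y => polyBump 𝒜.bumpDegree K (𝒜.trans a j y)) := fun j hj =>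
    .polyBump_comp K 𝒜.bumpDegree_pos zero_le_four
      (by simpa using 𝒜.mul_sq_le_bumpDegree) (𝒜.trans_expansion hj)
  have one_add_le : 1 + T ^ K ≤ (2 * T) ^ K := by
    have one_le_pow : 1 ≤ T ^ K := one_le_pow₀ one_le_T
    have : (2 : ℝ) ≤ 2 ^ K := le_self_pow₀ one_le_two (by lia)
    rw [mul_pow]
    nlinarith
  have one_sub_expansion : ∀ j ∈ 𝒜.nbr a, HasExpansion 4 ((2 * T) ^ K)
      (fun y => 1 - polyBump 𝒜.bumpDegree K (𝒜.trans a j y)) := fun j hj =>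
    ((HasExpansion.const zero_le_four 1).sub zero_le_four (bump_expansion j hj)).mono
      (by rwa [abs_one])
  refine ((bump_expansion c hc).mul zero_le_four (.prod zero_le_four ((𝒜.nbr a).filter (· < c))
    fun j hj => one_sub_expansion j (Finset.mem_filter.1 hj).1)).mono ?_
  have one_le_pow : 1 ≤ (2 * T) ^ K := one_le_pow₀ (by linarith)
  have card_le := (Finset.card_filter_le (𝒜.nbr a) (· < c)).trans (𝒜.card_nbr_le a)
  rw [Finset.prod_const]
  calc T ^ K * ((2 * T) ^ K) ^ ((𝒜.nbr a).filter (· < c)).card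
      ≤ (2 * T) ^ K * ((2 * T) ^ K) ^ 𝒜.maxNbr := by
        gcongr
        linarith
    _ = ((2 * T) ^ (𝒜.maxNbr + 1)) ^ K := by rw [← pow_succ', pow_right_comm]

/-- The weighted average of the discrepancies between the local functions `p`, by which `p a` is
to be corrected. -/
noncomputable def correction (K : ℕ) (p : ι → (Fin d → ℝ) → ℝ) (a : ι) (y : Fin d → ℝ) : ℝ :=
  ∑ c ∈ 𝒜.nbr a, 𝒜.weight K a c y * (p c (𝒜.trans a c y) - p a y)

theorem correction_coord (K : ℕ) (p : ι → (Fin d → ℝ) → ℝ) (hx : x ∈ 𝒜.ball a) :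
    𝒜.correction K p a (𝒜.coord a x) =
      ∑ c ∈ 𝒜.nbr a, orderedWeight (𝒜.nbr a) (fun j => 𝒜.bump K j x) c *
        (p c (𝒜.coord c x) - p a (𝒜.coord a x)) :=
  Finset.sum_congr rfl fun c hc => by rw [𝒜.weight_coord K hx hc, 𝒜.trans_coord hx hc]

theorem correction_expansion {W : ℝ} (hW : ∀ a, ∀ c ∈ 𝒜.nbr a, HasExpansion 4 W (𝒜.weight K a c))
    (hW₀ : 0 ≤ W) (hE : 0 ≤ E) (hp : 𝒜.HasMismatch E p) (a : ι) :
    HasExpansion 4 (𝒜.maxNbr * (W * E)) (𝒜.correction K p a) := by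
  refine (HasExpansion.sum zero_le_four (𝒜.nbr a) fun c hc =>
    (hW a c hc).mul zero_le_four (hp a c hc)).mono ?_
  rw [Finset.sum_const, nsmul_eq_mul]
  gcongr
  exact 𝒜.card_nbr_le a

theorem abs_correction_coord_le (hE : 0 ≤ E) (hε : 0 ≤ ε) (hp : 𝒜.HasMismatch E p)
    (hpε : 𝒜.HasSupMismatch ε p) (K : ℕ) (hx : x ∈ 𝒜.ball a) :
    |𝒜.correction K p a (𝒜.coord a x)| ≤ ε + 𝒜.maxNbr * ((3 / 4) ^ K * E) := by
  set w := orderedWeight (𝒜.nbr a) (fun j => 𝒜.bump K j x)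
  have hbump : ∀ c ∈ 𝒜.nbr a, 𝒜.bump K c x ∈ Set.Icc 0 1 := fun c => 𝒜.bump_mem_Icc K hx
  have term_le : ∀ c ∈ 𝒜.nbr a, |w c * (p c (𝒜.coord c x) - p a (𝒜.coord a x))| ≤
      w c * ε + (3 / 4) ^ K * E := by
    intro c hc
    have hw : w c ∈ Set.Icc 0 (𝒜.bump K c x) := orderedWeight_mem_Icc hbump hc
    rw [abs_mul, abs_of_nonneg hw.1]
    by_cases hxc : x ∈ 𝒜.ball c
    · exact le_add_of_le_of_nonneg (mul_le_mul_of_nonneg_left (hpε a c x hx hxc) hw.1)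
        (by positivity)
    · exact le_add_of_nonneg_of_le (mul_nonneg hw.1 hε)
        (mul_le_mul (hw.2.trans (𝒜.bump_le_pow K hx hc hxc)) (hp.abs_sub_le hx hc)
          (abs_nonneg _) (by positivity))
  rw [𝒜.correction_coord K p hx]
  calc |∑ c ∈ 𝒜.nbr a, w c * (p c (𝒜.coord c x) - p a (𝒜.coord a x))|
      ≤ ∑ c ∈ 𝒜.nbr a, (w c * ε + (3 / 4) ^ K * E) :=
        (Finset.abs_sum_le_sum_abs _ _).trans (Finset.sum_le_sum term_le)
    _ = (∑ c ∈ 𝒜.nbr a, w c) * ε + (𝒜.nbr a).card * ((3 / 4) ^ K * E) := by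
        rw [Finset.sum_add_distrib, ← Finset.sum_mul, Finset.sum_const, nsmul_eq_mul]
    _ ≤ ε + 𝒜.maxNbr * ((3 / 4) ^ K * E) := by
        gcongr
        exacts [mul_le_of_le_one_left hε (sum_orderedWeight_le_one hbump), 𝒜.card_nbr_le a]

theorem prod_one_sub_bump_le {t : Finset ι} (ht : ∀ c, c ∈ t ↔ x ∈ 𝒜.ball c) (K : ℕ) :
    |∏ c ∈ t, (1 - 𝒜.bump K c x)| ≤ (3 / 4) ^ K := by
  obtain ⟨e, hxe, he⟩ := 𝒜.exists_sum_sq_le x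
  have hbump : ∀ c ∈ t, 𝒜.bump K c x ∈ Set.Icc 0 1 := fun c hc =>
    𝒜.bump_mem_Icc K hxe (𝒜.mem_nbr hxe ((ht c).1 hc))
  have hrest := prod_one_sub_mem_Icc (s := t.erase e) fun c hc =>
    hbump c (Finset.mem_of_mem_erase hc)
  have het := (ht e).2 hxe
  rw [abs_of_nonneg (prod_one_sub_mem_Icc hbump).1, ← Finset.mul_prod_erase t _ het]
  exact (mul_le_of_le_one_right (sub_nonneg.2 (hbump e het).2) hrest.2).trans
    (one_sub_polyBump_le_pow K 𝒜.bumpDegree_pos he)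

theorem hasSupMismatch_add_correction (hE : 0 ≤ E) (hp : 𝒜.HasMismatch E p) (K : ℕ) :
    𝒜.HasSupMismatch ((2 * (𝒜.maxNbr + 𝒜.maxNbr ^ 2) + 1) * ((3 / 4) ^ K * E))
      (fun a y => p a y + 𝒜.correction K p a y) := by
  classical
  intro a b x hxa hxb
  set χ : ι → ℝ := fun c => 𝒜.bump K c x
  set P : ι → ℝ := fun c => p c (𝒜.coord c x)
  set t := (𝒜.nbr a).filter (fun c => x ∈ 𝒜.ball c) with ht
  have mem_t : ∀ c, c ∈ t ↔ x ∈ 𝒜.ball c := fun c => by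
    rw [ht, Finset.mem_filter]
    exact and_iff_right_of_imp (𝒜.mem_nbr hxa)
  have correction_near : ∀ e, x ∈ 𝒜.ball e →
      |𝒜.correction K p e (𝒜.coord e x) - ∑ c ∈ t, orderedWeight t χ c * (P c - P e)| ≤
        (𝒜.maxNbr + 𝒜.maxNbr ^ 2) * ((3 / 4) ^ K * E) := by
    intro e hxe
    have hte : t ⊆ 𝒜.nbr e := fun c hc => 𝒜.mem_nbr hxe ((mem_t c).1 hc)
    rw [𝒜.correction_coord K p hxe]
    refine (abs_sum_orderedWeight_sub_le (δ := (3 / 4) ^ K) hte (fun c => 𝒜.bump_mem_Icc K hxe)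
      (by positivity) (fun c hc => ?_) hE fun c => hp.abs_sub_le hxe).trans ?_
    · rw [Finset.mem_sdiff, mem_t] at hc
      exact 𝒜.bump_le_pow K hxe hc.1 hc.2
    · have := 𝒜.card_nbr_le e
      gcongr
  have averages_near : |(P b - P a) * ∏ c ∈ t, (1 - χ c)| ≤ (3 / 4) ^ K * E := by
    rw [abs_mul, mul_comm]
    exact mul_le_mul (𝒜.prod_one_sub_bump_le mem_t K) (hp.abs_sub_le hxa (𝒜.mem_nbr hxa hxb))
      (abs_nonneg _) (by positivity)
  rw [← add_sum_orderedWeight_sub t χ P (P a) (P b)] at averages_near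
  have near_a := abs_le.1 (correction_near a hxa)
  have near_b := abs_le.1 (correction_near b hxb)
  rw [abs_le] at averages_near ⊢
  constructor <;> linarith [near_a.1, near_a.2, near_b.1, near_b.2]

theorem exists_polynomial_near_correction :
    ∃ (β : ℕ) (W : ℝ), 1 ≤ W ∧ ∀ K : ℕ, 1 ≤ K → ∀ E : ℝ, 0 ≤ E →
      ∀ p, 𝒜.HasMismatch E p → ∃ q : ι → (Fin d → ℝ) → ℝ,
        (∀ a, HasPolyExpansion (β * K) 4 (𝒜.maxNbr * (W ^ K * E)) (q a)) ∧
        ∀ a x, x ∈ 𝒜.ball a → |𝒜.correction K p a (𝒜.coord a x) - q a (𝒜.coord a x)| ≤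
          𝒜.maxNbr * ((3 / 4) ^ K * E) := by
  obtain ⟨W, one_le_W, hW⟩ := 𝒜.exists_weight_expansion
  obtain ⟨β, hβ⟩ : ∃ β : ℕ, (2 / 4 : ℝ) ^ β * W ≤ 3 / 4 := by
    obtain ⟨β, hβ⟩ := exists_pow_lt_of_lt_one (show (0 : ℝ) < 3 / 4 / W by positivity)
      (show (2 / 4 : ℝ) < 1 by norm_num)
    exact ⟨β, ((lt_div_iff₀ (by positivity)).1 hβ).le⟩
  refine ⟨β, W, one_le_W, fun K hK E hE p hp => ?_⟩
  have r_expansion := 𝒜.correction_expansion (hW K hK) (by positivity) hE hp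
  choose q hq q_approx using fun a => (r_expansion a).exists_polynomial_approx zero_le_two
    (by norm_num) four_pos (β * K)
  refine ⟨q, hq, fun a x hx => ?_⟩
  calc |𝒜.correction K p a (𝒜.coord a x) - q a (𝒜.coord a x)|
      ≤ (2 / 4) ^ (β * K) * (𝒜.maxNbr * (W ^ K * E)) := q_approx a _ (𝒜.abs_coord_le_two hx)
    _ = 𝒜.maxNbr * (((2 / 4) ^ β * W) ^ K * E) := by rw [mul_pow, pow_mul]; ring
    _ ≤ 𝒜.maxNbr * ((3 / 4) ^ K * E) := by gcongr

/-- One step of the approximation: a mismatch of sup norm `ε` is replaced by one that is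
exponentially small in `K`, at the price of an exponential growth of the norm of its expansion and
of a correction by polynomials of degree proportional to `K`. -/
theorem exists_polynomial_correction :
    ∃ (β : ℕ) (Q C : ℝ), 1 ≤ Q ∧ 0 ≤ C ∧ ∀ K : ℕ, 1 ≤ K → ∀ E : ℝ, 0 ≤ E →
      ∀ p, 𝒜.HasMismatch E p → ∃ q : ι → (Fin d → ℝ) → ℝ,
        (∀ a, ∃ B, HasPolyExpansion (β * K) 4 B (q a)) ∧
        𝒜.HasMismatch (Q ^ K * E) (fun a y => p a y + q a y) ∧
        𝒜.HasSupMismatch (C * (3 / 4) ^ K * E) (fun a y => p a y + q a y) ∧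
        ∀ ε, 0 ≤ ε → 𝒜.HasSupMismatch ε p →
          ∀ a x, x ∈ 𝒜.ball a → |q a (𝒜.coord a x)| ≤ ε + C * (3 / 4) ^ K * E := by
  obtain ⟨β, W, one_le_W, hW⟩ := 𝒜.exists_polynomial_near_correction
  set m : ℝ := (𝒜.maxNbr : ℝ)
  have hm : 0 ≤ m := Nat.cast_nonneg _
  set V := (𝒜.bound / 4) ^ β * W
  have W_le_V : W ≤ V := le_mul_of_one_le_left (by positivity)
    (one_le_pow₀ ((one_le_div four_pos).2 𝒜.four_le_bound))
  refine ⟨β, (1 + 2 * m) * V, 2 * (m + m ^ 2) + 1 + 2 * m, one_le_mul_of_one_le_of_one_le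
    (by linarith) (one_le_W.trans W_le_V), by positivity, fun K hK E hE p hp => ?_⟩
  obtain ⟨q, hq, q_near⟩ := hW K hK E hE p hp
  refine ⟨q, fun a => ⟨_, hq a⟩, fun a c hc => (hp.add_polynomial hq a c hc).mono ?_,
    fun a b x hxa hxb => ?_, fun ε hε hpε a x hx => ?_⟩
  · have one_le_V_pow : 1 ≤ V ^ K := one_le_pow₀ (one_le_W.trans W_le_V)
    calc E + (𝒜.bound / 4) ^ (β * K) * (m * (W ^ K * E)) + m * (W ^ K * E)
        = 1 * E + m * V ^ K * E + m * W ^ K * E := by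
          rw [show V ^ K = (𝒜.bound / 4) ^ (β * K) * W ^ K by rw [mul_pow, pow_mul]]
          ring
      _ ≤ V ^ K * E + m * V ^ K * E + m * V ^ K * E := by gcongr
      _ = (1 + 2 * m) * V ^ K * E := by ring
      _ ≤ ((1 + 2 * m) * V) ^ K * E := by
          have : 1 + 2 * m ≤ (1 + 2 * m) ^ K := le_self_pow₀ (by linarith) (by lia)
          rw [mul_pow (1 + 2 * m) V K]
          gcongr
  · have near_a := abs_le.1 (q_near a x hxa)
    have near_b := abs_le.1 (q_near b x hxb)
    have corrected := abs_le.1 (𝒜.hasSupMismatch_add_correction hE hp K a b x hxa hxb)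
    rw [abs_le]
    constructor <;> linarith [near_a.1, near_a.2, near_b.1, near_b.2, corrected.1, corrected.2]
  · have near := abs_le.1 (q_near a x hx)
    have correction_le := abs_le.1 (𝒜.abs_correction_coord_le hE hε hp hpε K hx)
    have : 0 ≤ (2 * (m + m ^ 2) + 1) * ((3 / 4) ^ K * E) := by positivity
    rw [abs_le]
    constructor <;> linarith [near.1, near.2, correction_le.1, correction_le.2]

end UniformAtlas

/-! ### Series of polynomials -/

section PolySeries

variable {X κ : Type*} {k : X → κ → ℝ} {s : Set X} {om A : ℝ} {f g : X → ℝ}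

/-- In the coordinates `k`, the function `f` is on `s` the sum of polynomials of degree at most
`N j` that are bounded by `η j`, where `∑ j, η j * om ^ N j ≤ A`. By Bernstein's inequality such a
function is analytic when `om > 1`. -/
def HasPolySeries (k : X → κ → ℝ) (s : Set X) (om A : ℝ) (f : X → ℝ) : Prop :=
  ∃ (J : Type) (q : J → (κ → ℝ) → ℝ) (N : J → ℕ) (η : J → ℝ),
    (∀ j, ∃ B, HasPolyExpansion (N j) 4 B (q j)) ∧ (∀ j, 0 ≤ η j) ∧
    (∀ j, ∀ x ∈ s, |q j (k x)| ≤ η j) ∧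
    Summable (fun j => η j * om ^ N j) ∧ ∑' j, η j * om ^ N j ≤ A ∧
    ∀ x ∈ s, f x = ∑' j, q j (k x)

theorem HasPolyExpansion.hasPolySeries {N : ℕ} {B : ℝ} {q : (κ → ℝ) → ℝ} (om : ℝ)
    (h : HasPolyExpansion N 4 B q) (hk : ∀ x ∈ s, ∀ i, |k x i| ≤ 4) :
    HasPolySeries k s om (B * om ^ N) (fun x => q (k x)) := by
  have hq := h.hasExpansion zero_le_four
  refine ⟨Unit, fun _ => q, fun _ => N, fun _ => B, fun _ => ⟨B, h⟩,
    fun _ => hq.nonneg zero_le_four, fun _ x hx => hq.abs_le (hk x hx), Summable.of_finite, ?_,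
    fun x _ => ?_⟩ <;> simp

namespace HasPolySeries

theorem nonneg (hom : 0 ≤ om) (h : HasPolySeries k s om A f) : 0 ≤ A := by
  obtain ⟨J, q, N, η, -, hη, -, -, hA, -⟩ := h
  exact (tsum_nonneg fun j => mul_nonneg (hη j) (pow_nonneg hom _)).trans hA

theorem congr (h : HasPolySeries k s om A f) (hfg : ∀ x ∈ s, g x = f x) :
    HasPolySeries k s om A g := by
  obtain ⟨J, q, N, η, hq, hη, hqη, hs, hA, hf⟩ := h
  exact ⟨J, q, N, η, hq, hη, hqη, hs, hA, fun x hx => (hfg x hx).trans (hf x hx)⟩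

theorem tsum (hom : 1 ≤ om) {I : Type} {A : I → ℝ} {f : I → X → ℝ} (e : I → ℝ)
    (h : ∀ i, HasPolySeries k s om (A i) (f i)) (hs : Summable (fun i => |e i| * A i)) :
    HasPolySeries k s om (∑' i, |e i| * A i) (fun x => ∑' i, e i * f i x) := by
  choose J q N η hq hη hqη hηs hηA hf using h
  have term_nonneg : ∀ p : Σ i, J i, 0 ≤ |e p.1| * η p.1 p.2 * om ^ N p.1 p.2 := fun p =>
    mul_nonneg (mul_nonneg (abs_nonneg _) (hη _ _)) (by positivity)
  have inner_le : ∀ i, ∑' j, |e i| * η i j * om ^ N i j ≤ |e i| * A i := fun i => by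
    simp only [mul_assoc, tsum_mul_left]
    exact mul_le_mul_of_nonneg_left (hηA i) (abs_nonneg _)
  have summable : Summable (fun p : Σ i, J i => |e p.1| * η p.1 p.2 * om ^ N p.1 p.2) := by
    refine (summable_sigma_of_nonneg term_nonneg).2 ⟨fun i => ?_, Summable.of_nonneg_of_le
      (fun i => tsum_nonneg fun j => term_nonneg ⟨i, j⟩) inner_le hs⟩
    simpa only [mul_assoc] using (hηs i).mul_left |e i|
  have abs_le : ∀ (p : Σ i, J i), ∀ x ∈ s, |e p.1 * q p.1 p.2 (k x)| ≤ |e p.1| * η p.1 p.2 :=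
    fun p x hx => by
      rw [abs_mul]
      exact mul_le_mul_of_nonneg_left (hqη _ _ x hx) (abs_nonneg _)
  refine ⟨Σ i, J i, fun p y => e p.1 * q p.1 p.2 y, fun p => N p.1 p.2,
    fun p => |e p.1| * η p.1 p.2, fun p => ?_, fun p => mul_nonneg (abs_nonneg _) (hη _ _), abs_le,
    summable, ?_, fun x hx => ?_⟩
  · obtain ⟨B, hB⟩ := hq p.1 p.2
    exact ⟨_, hB.const_mul (e p.1)⟩
  · rw [summable.tsum_sigma]
    exact Summable.tsum_le_tsum inner_le summable.sigma hs
  · have summable_abs : Summable (fun p : Σ i, J i => |e p.1 * q p.1 p.2 (k x)|) :=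
      Summable.of_nonneg_of_le (fun _ => abs_nonneg _) (fun p => (abs_le p x hx).trans
        (le_mul_of_one_le_right (mul_nonneg (abs_nonneg _) (hη _ _)) (one_le_pow₀ hom))) summable
    rw [summable_abs.of_abs.tsum_sigma]
    exact tsum_congr fun i => by rw [hf i x hx, ← tsum_mul_left]

theorem add (hom : 1 ≤ om) {A' : ℝ} (hf : HasPolySeries k s om A f)
    (hg : HasPolySeries k s om A' g) : HasPolySeries k s om (A + A') (fun x => f x + g x) := by
  simpa using tsum hom (f := fun i : Bool => bif i then f else g)
    (A := fun i : Bool => bif i then A else A') (fun _ => 1)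
    (Bool.forall_bool.2 ⟨hg, hf⟩) Summable.of_finite

end HasPolySeries

end PolySeries

/-! ### Gluing by iterated corrections -/

theorem add_le_mul_pow {K Λ : ℕ} (hK : 1 ≤ K) (hΛ : 2 ≤ Λ) (n : ℕ) : K + n ≤ K * Λ ^ n := by
  have : n + 1 ≤ Λ ^ n := n.lt_pow_self hΛ
  nlinarith

theorem exists_seq_of_forall_exists {α : Type*} {good : ℕ → α → Prop} {next : ℕ → α → α → Prop}
    {x : α} (hx : good 0 x) (h : ∀ n x, good n x → ∃ y, good (n + 1) y ∧ next n x y) :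
    ∃ u : ℕ → α, u 0 = x ∧ ∀ n, good n (u n) ∧ next n (u n) (u (n + 1)) := by
  choose y hgood hnext using h
  let v : ∀ n, {x // good n x} := fun n =>
    n.rec ⟨x, hx⟩ fun n z => ⟨y n z.1 z.2, hgood n z.1 z.2⟩
  exact ⟨fun n => (v n).1, rfl, fun n => ⟨(v n).2, hnext n _ (v n).2⟩⟩

theorem exists_one_lt_pow_lt (n : ℕ) {c : ℝ} (hc : 1 < c) : ∃ om : ℝ, 1 < om ∧ om ^ n < c := by
  have pow_lt : ∀ᶠ om in nhds (1 : ℝ), om ^ n < c :=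
    (continuous_pow n).continuousAt.eventually_lt_const (by simpa using hc)
  obtain ⟨om, hom⟩ := ((pow_lt.filter_mono nhdsWithin_le_nhds).and
    (self_mem_nhdsWithin (s := Set.Ioi 1))).exists
  exact ⟨om, hom.2, hom.1⟩

theorem pow_mul_pow_le {K Λ : ℕ} (hK : 1 ≤ K) (hΛ : 2 ≤ Λ) {r : ℝ} (hr₀ : 0 ≤ r) (hr₁ : r ≤ 1)
    (n : ℕ) : r ^ (K * Λ ^ n) ≤ r ^ K * r ^ n := by
  rw [← pow_add]
  exact pow_le_pow_of_le_one hr₀ hr₁ (add_le_mul_pow hK hΛ n)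

theorem summable_pow_mul_pow {K Λ : ℕ} (hK : 1 ≤ K) (hΛ : 2 ≤ Λ) {r : ℝ} (hr₀ : 0 ≤ r)
    (hr₁ : r < 1) : Summable (fun n => r ^ (K * Λ ^ n)) :=
  Summable.of_nonneg_of_le (fun n => by positivity) (pow_mul_pow_le hK hΛ hr₀ hr₁.le)
    ((summable_geometric_of_lt_one hr₀ hr₁).mul_left _)

theorem summable_pow_mul_pow_degree {K Λ β : ℕ} (hK : 1 ≤ K) (hΛ : 2 ≤ Λ) {om : ℝ} (hom₀ : 0 ≤ om)
    (hom : om ^ (β * Λ) < 8 / 7) (C E : ℝ) :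
    Summable (fun n => C * (7 / 8) ^ (K * Λ ^ n) * E * om ^ (β * (K * Λ ^ (n + 1)))) := by
  refine (((summable_pow_mul_pow hK hΛ (r := 7 / 8 * om ^ (β * Λ)) (by positivity)
    (by linarith)).mul_left C).mul_right E).congr fun n => ?_
  rw [mul_pow, ← pow_mul om]
  ring_nf

theorem tsum_pow_mul_pow_le {K Λ : ℕ} (hK : 1 ≤ K) (hΛ : 2 ≤ Λ) {r : ℝ} (hr₀ : 0 ≤ r)
    (hr₁ : r < 1) : ∑' n, r ^ (K * Λ ^ n) ≤ r ^ K * (1 - r)⁻¹ := by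
  rw [← tsum_geometric_of_lt_one hr₀ hr₁, ← tsum_mul_left]
  exact (summable_pow_mul_pow hK hΛ hr₀ hr₁).tsum_le_tsum (pow_mul_pow_le hK hΛ hr₀ hr₁.le)
    ((summable_geometric_of_lt_one hr₀ hr₁).mul_left _)

namespace UniformAtlas

variable {d : ℕ} {M ι : Type*} (𝒜 : UniformAtlas d M ι)

theorem exists_eq_add_tsum {P : ℕ → ι → (Fin d → ℝ) → ℝ} {δ η : ℕ → ℝ}
    (hδ : Filter.Tendsto δ Filter.atTop (nhds 0)) (hP : ∀ n, 𝒜.HasSupMismatch (δ n) (P n))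
    (hη : Summable η) (hPη : ∀ n a, ∀ x ∈ 𝒜.ball a,
      |P (n + 1) a (𝒜.coord a x) - P n a (𝒜.coord a x)| ≤ η n) :
    ∃ f : M → ℝ, ∀ a, ∀ x ∈ 𝒜.ball a, f x = P 0 a (𝒜.coord a x) +
      ∑' n, (P (n + 1) a (𝒜.coord a x) - P n a (𝒜.coord a x)) := by
  set F : ι → M → ℝ := fun a x => P 0 a (𝒜.coord a x) +
    ∑' n, (P (n + 1) a (𝒜.coord a x) - P n a (𝒜.coord a x))
  have tendsto_F : ∀ a, ∀ x ∈ 𝒜.ball a,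
      Filter.Tendsto (fun n => P n a (𝒜.coord a x)) Filter.atTop (nhds (F a x)) := by
    intro a x hx
    have := (Summable.of_norm_bounded (f := fun n => P (n + 1) a (𝒜.coord a x) -
      P n a (𝒜.coord a x)) hη fun n => hPη n a x hx).hasSum.tendsto_sum_nat
    simpa only [Finset.sum_range_sub fun n => P n a (𝒜.coord a x), add_sub_cancel] using
      this.const_add (P 0 a (𝒜.coord a x))
  choose center hcenter using fun x => (𝒜.exists_sum_sq_le x).imp fun a h => h.1
  refine ⟨fun x => F (center x) x, fun a x hx => ?_⟩
  have := le_of_tendsto_of_tendsto' ((tendsto_F _ x (hcenter x)).sub (tendsto_F a x hx)).abs hδ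
    fun n => hP n a (center x) x hx (hcenter x)
  exact sub_eq_zero.1 (abs_nonpos_iff.1 this)

variable [LinearOrder ι]

/-- The growth rate `7 / 6` of the mismatch is beaten by the factor `3 / 4` of
`exists_polynomial_correction`, whatever the exponent `Λ` by which it increases. -/
theorem exists_correction_of_growth :
    ∃ (β Λ : ℕ) (C : ℝ), 2 ≤ Λ ∧ 0 ≤ C ∧ ∀ K : ℕ, 1 ≤ K → ∀ E : ℝ, 0 ≤ E →
      ∀ p, 𝒜.HasMismatch ((7 / 6) ^ K * E) p → ∃ p' : ι → (Fin d → ℝ) → ℝ,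
        𝒜.HasMismatch ((7 / 6) ^ (Λ * K) * E) p' ∧
        (∀ a, ∃ B, HasPolyExpansion (β * K) 4 B (fun y => p' a y - p a y)) ∧
        𝒜.HasSupMismatch (C * (7 / 8) ^ K * E) p' ∧
        ∀ ε, 0 ≤ ε → 𝒜.HasSupMismatch ε p → ∀ a, ∀ x ∈ 𝒜.ball a,
          |p' a (𝒜.coord a x) - p a (𝒜.coord a x)| ≤ ε + C * (7 / 8) ^ K * E := by
  obtain ⟨β, Q, C, hQ, hC, exists_correction⟩ := 𝒜.exists_polynomial_correction
  obtain ⟨n, hn⟩ := pow_unbounded_of_one_lt (Q * (7 / 6)) (show (1 : ℝ) < 7 / 6 by norm_num)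
  refine ⟨β, max n 2, C, le_max_right _ _, hC, fun K hK E hE p hp => ?_⟩
  have hΛ : Q * (7 / 6) ≤ (7 / 6 : ℝ) ^ max n 2 :=
    hn.le.trans (pow_le_pow_right₀ (by norm_num) (le_max_left _ _))
  have mul_pow_eq : C * (3 / 4) ^ K * ((7 / 6) ^ K * E) = C * (7 / 8) ^ K * E := by
    rw [show (7 / 8 : ℝ) = 3 / 4 * (7 / 6) by norm_num, mul_pow]
    ring
  obtain ⟨q, hq_poly, hq_mismatch, hq_sup, hq_le⟩ :=
    exists_correction K hK _ (by positivity) p hp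
  rw [mul_pow_eq] at hq_sup
  simp only [mul_pow_eq] at hq_le
  refine ⟨fun a y => p a y + q a y, fun a c hc => (hq_mismatch a c hc).mono ?_, ?_, hq_sup, ?_⟩
  · calc Q ^ K * ((7 / 6) ^ K * E) = (Q * (7 / 6)) ^ K * E := by rw [← mul_assoc, mul_pow]
      _ ≤ ((7 / 6) ^ max n 2) ^ K * E := by gcongr
      _ = (7 / 6) ^ (max n 2 * K) * E := by rw [pow_mul]
  · simpa only [add_sub_cancel_left] using hq_poly
  · simpa only [add_sub_cancel_left] using hq_le

theorem exists_correction_sequence :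
    ∃ (β Λ : ℕ) (C : ℝ), 2 ≤ Λ ∧ 0 ≤ C ∧ ∀ K : ℕ, 1 ≤ K → ∀ (p : ι → (Fin d → ℝ) → ℝ) (E ε : ℝ),
      0 ≤ E → 0 ≤ ε → 𝒜.HasMismatch E p → 𝒜.HasSupMismatch ε p →
      ∃ P : ℕ → ι → (Fin d → ℝ) → ℝ, P 0 = p ∧
        (∀ n a, ∃ B, HasPolyExpansion (β * (K * Λ ^ n)) 4 B (fun y => P (n + 1) a y - P n a y)) ∧
        (∀ n, 𝒜.HasSupMismatch (C * (7 / 8) ^ (K * Λ ^ n) * E) (P (n + 1))) ∧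
        (∀ a, ∀ x ∈ 𝒜.ball a,
          |P 1 a (𝒜.coord a x) - p a (𝒜.coord a x)| ≤ ε + C * (7 / 8) ^ K * E) ∧
        ∀ n a, ∀ x ∈ 𝒜.ball a, |P (n + 2) a (𝒜.coord a x) - P (n + 1) a (𝒜.coord a x)| ≤
          2 * C * (7 / 8) ^ (K * Λ ^ n) * E := by
  obtain ⟨β, Λ, C, hΛ, hC, exists_correction⟩ := 𝒜.exists_correction_of_growth
  refine ⟨β, Λ, C, hΛ, hC, fun K hK p E ε hE hε hp hpε => ?_⟩
  set k : ℕ → ℕ := fun n => K * Λ ^ n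
  have hk : ∀ n, 1 ≤ k n := fun n => hK.trans (le_of_add_le_left (add_le_mul_pow hK hΛ n))
  have k_succ : ∀ n, Λ * k n = k (n + 1) := fun n => by simp only [k]; ring
  obtain ⟨P, hP₀, hP⟩ := exists_seq_of_forall_exists (x := p)
    (good := fun n => 𝒜.HasMismatch ((7 / 6) ^ k n * E)) (fun a c hc => (hp a c hc).mono
      (le_mul_of_one_le_left hE (one_le_pow₀ (by norm_num)))) fun n p hp => by
        rw [← k_succ]
        exact exists_correction (k n) (hk n) E hE p hp
  refine ⟨P, hP₀, fun n => (hP n).2.1, fun n => (hP n).2.2.1, fun a x hx => ?_, fun n a x hx => ?_⟩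
  · simpa only [k, hP₀, zero_add, pow_zero, mul_one] using
      (hP 0).2.2.2 ε hε (by rwa [hP₀]) a x hx
  · have k_le : k n ≤ k (n + 1) := by
      rw [← k_succ]
      exact Nat.le_mul_of_pos_left _ (by lia)
    have pow_le : C * (7 / 8) ^ k (n + 1) * E ≤ C * (7 / 8) ^ k n * E := by
      have := pow_le_pow_of_le_one (show (0 : ℝ) ≤ 7 / 8 by norm_num) (by norm_num) k_le
      gcongr
    have := (hP (n + 1)).2.2.2 _ (by positivity) (hP n).2.2.1 a x hx
    linarith

/-- A function is tame if in every ball it is a polynomial series in the coordinates, with a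
common rate `om`. -/
def IsTame (om : ℝ) (f : M → ℝ) : Prop :=
  ∀ a, ∃ A, HasPolySeries (𝒜.coord a) (𝒜.ball a) om A f

/-- The gluing property with constants `om` and `C`: polynomial local data of mismatch `E` and
sup-mismatch `ε` are close to a global tame function. -/
def HasGluing (om C : ℝ) : Prop :=
  ∀ (p : ι → (Fin d → ℝ) → ℝ) (E ε : ℝ), 0 ≤ E → 0 ≤ ε →
    (∀ a, ∃ N B, HasPolyExpansion N 4 B (p a)) → 𝒜.HasMismatch E p → 𝒜.HasSupMismatch ε p →
    ∀ K : ℕ, 1 ≤ K → ∃ f : M → ℝ, 𝒜.IsTame om f ∧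
      ∀ a, ∀ x ∈ 𝒜.ball a, |f x - p a (𝒜.coord a x)| ≤ ε + C * (7 / 8) ^ K * E

theorem exists_hasGluing : ∃ om C : ℝ, 1 < om ∧ 0 ≤ C ∧ 𝒜.HasGluing om C := by
  obtain ⟨β, Λ, C, hΛ, hC, exists_seq⟩ := 𝒜.exists_correction_sequence
  obtain ⟨om, one_lt_om, hom⟩ := exists_one_lt_pow_lt (β * Λ) (show (1 : ℝ) < 8 / 7 by norm_num)
  refine ⟨om, 17 * C, one_lt_om, by positivity, fun p E ε hE hε hp_poly hp hpε K hK => ?_⟩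
  obtain ⟨P, hP₀, hP_poly, hP_sup, hP_one, hP_succ⟩ := exists_seq K hK p E ε hE hε hp hpε
  have pow_summable := summable_pow_mul_pow hK hΛ (show (0 : ℝ) ≤ 7 / 8 by norm_num) (by norm_num)
  have bound_summable := (pow_summable.mul_left (2 * C)).mul_right E
  obtain ⟨f, hf⟩ := 𝒜.exists_eq_add_tsum (P := fun n => P (n + 1))
    (by simpa using (pow_summable.tendsto_atTop_zero.const_mul C).mul_const E) hP_sup
    bound_summable hP_succ
  refine ⟨f, fun a => ?_, fun a x hx => ?_⟩
  · obtain ⟨N, B, hp_poly⟩ := hp_poly a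
    obtain ⟨B₁, hP_poly₁⟩ := hP_poly 0 a
    have hcoord : ∀ x ∈ 𝒜.ball a, ∀ i, |𝒜.coord a x i| ≤ 4 := fun x => 𝒜.abs_coord_le_four
    have tail : HasPolySeries (𝒜.coord a) (𝒜.ball a) om _
        (fun x => ∑' n, (P (n + 2) a (𝒜.coord a x) - P (n + 1) a (𝒜.coord a x))) :=
      ⟨ℕ, fun n y => P (n + 2) a y - P (n + 1) a y, fun n => β * (K * Λ ^ (n + 1)),
        fun n => 2 * C * (7 / 8) ^ (K * Λ ^ n) * E, fun n => hP_poly (n + 1) a,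
        fun n => by positivity, fun n => hP_succ n a,
        summable_pow_mul_pow_degree hK hΛ (by positivity) hom _ _, le_rfl, fun x _ => rfl⟩
    refine ⟨_, (((hp_poly.hasPolySeries om hcoord).add one_lt_om.le
      (hP_poly₁.hasPolySeries om hcoord)).add one_lt_om.le tail).congr fun x hx => ?_⟩
    rw [hf a x hx, hP₀, add_sub_cancel]
  · have tail_le : |∑' n, (P (n + 2) a (𝒜.coord a x) - P (n + 1) a (𝒜.coord a x))| ≤ _ :=
      tsum_of_norm_bounded (E := ℝ) bound_summable.hasSum fun n => hP_succ n a x hx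
    rw [tsum_mul_right, tsum_mul_left] at tail_le
    have tsum_le : 2 * C * (∑' n, (7 / 8) ^ (K * Λ ^ n)) * E ≤
        2 * C * ((7 / 8) ^ K * (1 - 7 / 8)⁻¹) * E := by
      gcongr
      exact tsum_pow_mul_pow_le hK hΛ (by norm_num) (by norm_num)
    rw [hf a x hx, add_sub_right_comm]
    refine (abs_add_le _ _).trans
      ((add_le_add (hP_one a x hx) (tail_le.trans tsum_le)).trans_eq ?_)
    ring

end UniformAtlas

/-! ### Power series and word expansions -/

section PowerSeries

variable {κ : Type*} {R B : ℝ} {f : (κ → ℝ) → ℝ}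

theorem wordMonomial_ofFn {n : ℕ} (w : Fin n → κ) (x : κ → ℝ) :
    wordMonomial (List.ofFn w) x = ∏ i, x (w i) := by
  simp [wordMonomial, List.map_ofFn, List.prod_ofFn]

/-- The polarization `v ↦ ∏ i, v i (w i)` of the monomial spelled by the word `w`. -/
noncomputable def multilinearMonomial {n : ℕ} (w : Fin n → κ) :
    ContinuousMultilinearMap ℝ (fun _ : Fin n => κ → ℝ) ℝ :=
  (ContinuousMultilinearMap.mkPiAlgebra ℝ (Fin n) ℝ).compContinuousLinearMap
    (fun i => ContinuousLinearMap.proj (w i))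

theorem multilinearMonomial_apply {n : ℕ} (w : Fin n → κ) (v : Fin n → κ → ℝ) :
    multilinearMonomial w v = ∏ i, v i (w i) := by
  simp [multilinearMonomial]

variable [Fintype κ]

theorem norm_multilinearMonomial_le {n : ℕ} (w : Fin n → κ) : ‖multilinearMonomial w‖ ≤ 1 := by
  refine ContinuousMultilinearMap.opNorm_le_bound zero_le_one fun v => ?_
  rw [multilinearMonomial_apply, norm_prod, one_mul]
  exact Finset.prod_le_prod (fun _ _ => norm_nonneg _) fun i _ => norm_le_pi_norm (v i) (w i)

/-- The formal multilinear series with prescribed coefficients on the word monomials. -/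
noncomputable def wordSeries (c : List κ → ℝ) : FormalMultilinearSeries ℝ (κ → ℝ) ℝ :=
  fun n => ∑ w : Fin n → κ, c (List.ofFn w) • multilinearMonomial w

theorem wordSeries_apply_diag (c : List κ → ℝ) (n : ℕ) (x : κ → ℝ) :
    wordSeries c n (fun _ => x) =
      ∑ w : Fin n → κ, c (List.ofFn w) * wordMonomial (List.ofFn w) x := by
  simp [wordSeries, multilinearMonomial_apply, wordMonomial_ofFn]

theorem norm_wordSeries_le (c : List κ → ℝ) (n : ℕ) :
    ‖wordSeries c n‖ ≤ ∑ w : Fin n → κ, |c (List.ofFn w)| := by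
  refine (norm_sum_le _ _).trans (Finset.sum_le_sum fun w _ => ?_)
  rw [norm_smul, Real.norm_eq_abs]
  exact mul_le_of_le_one_right (abs_nonneg _) (norm_multilinearMonomial_le w)

theorem hasSum_wordSeries {c : List κ → ℝ} {x : κ → ℝ}
    (hs : Summable fun w => c w * wordMonomial w x) :
    HasSum (fun n => wordSeries c n fun _ => x) (∑' w, c w * wordMonomial w x) := by
  let e := (List.equivSigmaTuple (α := κ)).symm
  rw [← e.tsum_eq]
  refine ((e.summable_iff.2 hs).hasSum.sigma fun n => hasSum_fintype _).congr_fun fun n => ?_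
  exact wordSeries_apply_diag c n x

theorem summable_norm_wordSeries_mul_pow {c : List κ → ℝ} (hR : 0 ≤ R)
    (hc : Summable fun w => |c w| * R ^ w.length) :
    Summable fun n => ‖wordSeries c n‖ * R ^ n := by
  have hsigma : Summable fun p : Σ n, Fin n → κ => |c (List.ofFn p.2)| * R ^ p.1 := by
    refine ((List.equivSigmaTuple (α := κ)).symm.summable_iff.2 hc).congr fun p => ?_
    simp [List.equivSigmaTuple]
  refine hsigma.sigma.of_nonneg_of_le (fun n => by positivity) fun n => ?_
  calc ‖wordSeries c n‖ * R ^ n ≤ (∑ w : Fin n → κ, |c (List.ofFn w)|) * R ^ n :=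
        mul_le_mul_of_nonneg_right (norm_wordSeries_le c n) (pow_nonneg hR n)
    _ = ∑' w : Fin n → κ, |c (List.ofFn w)| * R ^ n := by rw [tsum_fintype, Finset.sum_mul]

theorem HasExpansion.analyticAt (hR : 0 < R) (h : HasExpansion R B f) : AnalyticAt ℝ f 0 := by
  obtain ⟨c, hc, -, hf⟩ := h
  refine HasFPowerSeriesAt.analyticAt (p := wordSeries c)
    ⟨ENNReal.ofReal R, ?_, ENNReal.ofReal_pos.2 hR, fun {y} hy => ?_⟩
  · refine (wordSeries c).le_radius_of_summable (r := R.toNNReal) ?_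
    simpa only [Real.coe_toNNReal R hR.le] using summable_norm_wordSeries_mul_pow hR.le hc
  · have norm_lt : ‖y‖ < R := by
      rwa [Metric.mem_eball, edist_zero_right, ← ofReal_norm,
        ENNReal.ofReal_lt_ofReal_iff hR] at hy
    have abs_le : ∀ i, |y i| ≤ R := fun i => (norm_le_pi_norm y i).trans norm_lt.le
    rw [zero_add, hf y abs_le]
    exact hasSum_wordSeries (summable_abs_mul_wordMonomial (w := fun w => w) hc abs_le).of_abs


theorem multilinear_apply_diag {n : ℕ} [DecidableEq κ]
    (A : ContinuousMultilinearMap ℝ (fun _ : Fin n => κ → ℝ) ℝ) (x : κ → ℝ) :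
    A (fun _ => x) =
      ∑ w : Fin n → κ, A (fun i => Pi.single (w i) 1) * wordMonomial (List.ofFn w) x := by
  have basis_expansion : (fun _ : Fin n => x) = fun _ => ∑ j, x j • Pi.single j (1 : ℝ) :=
    funext fun _ => pi_eq_sum_univ' x
  rw [basis_expansion, ContinuousMultilinearMap.map_sum]
  refine Finset.sum_congr rfl fun w _ => ?_
  rw [ContinuousMultilinearMap.map_smul_univ, wordMonomial_ofFn, smul_eq_mul, mul_comm]

theorem hasExpansion_multilinear {n : ℕ} (hR : 0 ≤ R)
    (A : ContinuousMultilinearMap ℝ (fun _ : Fin n => κ → ℝ) ℝ) :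
    HasExpansion R (‖A‖ * (Fintype.card κ * R) ^ n) (fun x => A fun _ => x) := by
  classical
  have coeff_le (w : Fin n → κ) : |A fun i => Pi.single (w i) 1| ≤ ‖A‖ := by
    refine (A.le_opNorm _).trans (mul_le_of_le_one_right (norm_nonneg _) ?_)
    refine Finset.prod_le_one (fun _ _ => norm_nonneg _) fun i _ => ?_
    rw [Pi.norm_single, norm_one]
  refine ((HasExpansion.sum hR Finset.univ fun w _ => HasExpansion.monomial hR
    (A fun i => Pi.single (w i) 1) (List.ofFn w)).mono ?_).congr
      fun x _ => multilinear_apply_diag A x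
  calc ∑ w : Fin n → κ, |A fun i => Pi.single (w i) 1| * R ^ (List.ofFn w).length
      ≤ ∑ _w : Fin n → κ, ‖A‖ * R ^ n := Finset.sum_le_sum fun w _ => by
        rw [List.length_ofFn]
        exact mul_le_mul_of_nonneg_right (coeff_le w) (pow_nonneg hR n)
    _ = ‖A‖ * (Fintype.card κ * R) ^ n := by
        rw [Finset.sum_const, Finset.card_univ, Fintype.card_fun, Fintype.card_fin, nsmul_eq_mul]
        push_cast
        ring

theorem exists_hasExpansion_sub_partialSum {p : FormalMultilinearSeries ℝ (κ → ℝ) ℝ} {u : κ → ℝ}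
    (h : HasFPowerSeriesAt f p u) (k : ℕ) :
    ∃ R₀ B : ℝ, 0 < R₀ ∧ 0 ≤ B ∧ ∀ R, 0 ≤ R → R ≤ R₀ →
      HasExpansion R (B * R ^ k) (fun x => f (u + x) - p.partialSum k x) := by
  obtain ⟨r, hr⟩ := h
  obtain ⟨ρ, ρ_pos, ρ_lt⟩ := ENNReal.lt_iff_exists_nnreal_btwn.1 hr.r_pos
  replace ρ_pos : (0 : ℝ) < ρ := by exact_mod_cast ρ_pos
  have summable_p := p.summable_norm_mul_pow (ρ_lt.trans_le hr.r_le)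
  set D : ℝ := Fintype.card κ + 1
  have card_le : (Fintype.card κ : ℝ) ≤ D := le_add_of_nonneg_right zero_le_one
  have one_le : 1 ≤ D := le_add_of_nonneg_left (Nat.cast_nonneg _)
  have summable_tail : Summable fun l => ‖p (l + k)‖ * D ^ k * ρ ^ l := by
    refine (((summable_nat_add_iff k).2 summable_p).mul_left ((D / ρ) ^ k)).congr fun l => ?_
    rw [div_pow, pow_add]
    field_simp
  refine ⟨ρ / D, ∑' l, ‖p (l + k)‖ * D ^ k * ρ ^ l, by positivity,
    tsum_nonneg fun l => by positivity, fun R hR R_le => ?_⟩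
  have mul_le : D * R ≤ ρ := by rwa [le_div_iff₀' (by positivity)] at R_le
  rw [← tsum_mul_right]
  refine HasExpansion.tsum hR (F := fun l x => p (l + k) fun _ => x)
    (fun l => (hasExpansion_multilinear hR (p (l + k))).mono ?_) (summable_tail.mul_right _)
    fun x hx => ?_
  · calc ‖p (l + k)‖ * (Fintype.card κ * R) ^ (l + k)
        ≤ ‖p (l + k)‖ * (D * R) ^ (l + k) := by gcongr
      _ = ‖p (l + k)‖ * D ^ k * (D * R) ^ l * R ^ k := by rw [pow_add, mul_pow D R k]; ring
      _ ≤ ‖p (l + k)‖ * D ^ k * ρ ^ l * R ^ k := by gcongr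
  · have norm_le : ‖x‖ ≤ ρ := (pi_norm_le_iff_of_nonneg ρ_pos.le).2 fun i =>
      (hx i).trans ((le_mul_of_one_le_left hR one_le).trans mul_le)
    have mem_ball : x ∈ Metric.eball (0 : κ → ℝ) r := by
      rw [Metric.mem_eball, edist_zero_right]
      exact lt_of_le_of_lt (by exact_mod_cast norm_le) ρ_lt
    exact ((hasSum_nat_add_iff' k).2 (hr.hasSum mem_ball)).tsum_eq.symm

end PowerSeries

/-! ### Bernstein's inequality -/

section Bernstein

variable {κ : Type*} {R S B ℓ : ℝ}

theorem HasExpansion.re_mul_exp (hR : 0 ≤ R) (a : ℂ) {φ : (κ → ℝ) → ℝ} (hφ : HasExpansion R ℓ φ) :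
    HasExpansion R (‖a‖ * Real.exp ℓ) (fun x => (a * Complex.exp (φ x * Complex.I)).re) := by
  have hℓ := hφ.nonneg hR
  have hasSum_re (x : ℝ) : HasSum (fun n : ℕ => (a * Complex.I ^ n / n.factorial).re * x ^ n)
      (a * Complex.exp (x * Complex.I)).re := by
    rw [Complex.exp_eq_exp_ℂ]
    refine (Complex.hasSum_re ((NormedSpace.expSeries_div_hasSum_exp
      (x * Complex.I : ℂ)).mul_left a)).congr_fun fun n => ?_
    rw [← Complex.re_mul_ofReal, Complex.ofReal_pow]
    congr 1
    ring
  rw [Real.exp_eq_exp_ℝ, NormedSpace.exp_eq_tsum_div, ← tsum_mul_left]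
  refine HasExpansion.tsum hR
    (F := fun n x => (a * Complex.I ^ n / n.factorial).re * φ x ^ n) (fun n => ?_)
    ((Real.summable_pow_div_factorial ℓ).mul_left _) fun x _ => (hasSum_re (φ x)).tsum_eq.symm
  refine ((hφ.pow hR n).const_mul hR _).mono ?_
  calc |(a * Complex.I ^ n / n.factorial).re| * ℓ ^ n
      ≤ ‖a * Complex.I ^ n / n.factorial‖ * ℓ ^ n := by
        gcongr
        exact Complex.abs_re_le_norm _
    _ = ‖a‖ * (ℓ ^ n / n.factorial) := by
        rw [norm_div, norm_mul, norm_pow, Complex.norm_I, one_pow, mul_one, Complex.norm_natCast]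
        ring

theorem exists_pow_mul_exp_le (m : ℕ) {om : ℝ} (hom : 1 < om) : ∃ R C : ℝ, 0 < R ∧ 0 ≤ C ∧
    ∀ N : ℕ, (2 * N + 1 : ℝ) ^ m * Real.exp (2 * Real.pi * (m * (N * R))) ≤ C * om ^ N := by
  obtain ⟨τ, hτ, τ_pow_lt⟩ := exists_one_lt_pow_lt 4 hom
  have τ_pos : 0 < τ := one_pos.trans hτ
  obtain ⟨C, hC⟩ := (summable_pow_mul_geometric_of_norm_lt_one m (r := τ⁻¹) (by
    rw [norm_inv, Real.norm_of_nonneg τ_pos.le]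
    exact inv_lt_one_of_one_lt₀ hτ)).tendsto_atTop_zero.bddAbove_range
  have pow_le (n : ℕ) : (n : ℝ) ^ m ≤ C * τ ^ n := by
    have bound : (n : ℝ) ^ m * τ⁻¹ ^ n ≤ C := hC ⟨n, rfl⟩
    rwa [inv_pow, mul_inv_le_iff₀ (pow_pos τ_pos n)] at bound
  have C_nonneg : 0 ≤ C := by simpa using (pow_nonneg (Nat.cast_nonneg 0) m).trans (pow_le 0)
  set a := 2 * Real.pi * m with ha
  have : 0 ≤ a := by positivity
  have log_pos := Real.log_pos hτ
  refine ⟨Real.log τ / (a + 1), C * τ, by positivity, by positivity, fun N => ?_⟩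
  have exp_le : Real.exp (2 * Real.pi * (m * (N * (Real.log τ / (a + 1))))) ≤ τ ^ N := by
    rw [← Real.le_log_iff_exp_le (pow_pos τ_pos N), Real.log_pow]
    calc 2 * Real.pi * (m * (N * (Real.log τ / (a + 1))))
        = N * Real.log τ * (a / (a + 1)) := by rw [ha]; ring
      _ ≤ N * Real.log τ := mul_le_of_le_one_right (by positivity)
          ((div_le_one (by positivity)).2 (by linarith))
  calc (2 * N + 1 : ℝ) ^ m * Real.exp (2 * Real.pi * (m * (N * (Real.log τ / (a + 1)))))
      ≤ C * τ ^ (2 * N + 1) * τ ^ N :=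
        mul_le_mul (by exact_mod_cast pow_le (2 * N + 1)) exp_le (Real.exp_nonneg _)
          (by positivity)
    _ = C * τ * (τ ^ 3) ^ N := by ring
    _ ≤ C * τ * om ^ N := by
        gcongr
        exact (pow_le_pow_right₀ hτ.le (by norm_num)).trans τ_pow_lt.le

section Torus

open MeasureTheory UnitAddTorus

noncomputable local instance measureSpaceUnitAddCircle : MeasureSpace UnitAddCircle :=
  ⟨AddCircle.haarAddCircle⟩

local instance : IsProbabilityMeasure (volume : Measure UnitAddCircle) :=
  inferInstanceAs (IsProbabilityMeasure AddCircle.haarAddCircle)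

variable [Fintype κ]

theorem norm_le_norm_sum_mFourier {s : Finset (κ → ℤ)} (c : (κ → ℤ) → ℂ) {l : κ → ℤ}
    (hl : l ∈ s) : ‖c l‖ ≤ ‖∑ k ∈ s, c k • (mFourier k : C(UnitAddTorus κ, ℂ))‖ := by
  classical
  set F : C(UnitAddTorus κ, ℂ) := ∑ k ∈ s, c k • mFourier k with hF
  let toL2 := ContinuousMap.toLp (E := ℂ) 2 (volume : Measure (UnitAddTorus κ)) ℂ
  have inner_eq : inner ℂ (mFourierLp 2 l) (toL2 F) = c l := by
    rw [← (orthonormal_mFourier (d := κ)).inner_right_sum c hl, hF, map_sum]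
    simp only [map_smul, toL2, mFourierLp]
  have norm_toL2_le : ‖toL2‖ ≤ 1 := by
    refine (ContinuousMap.toLp_norm_le volume).trans ?_
    simp [measureUnivNNReal]
  calc ‖c l‖ ≤ ‖mFourierLp 2 l‖ * ‖toL2 F‖ := by
        rw [← inner_eq]
        exact norm_inner_le_norm _ _
    _ = ‖toL2 F‖ := by rw [(orthonormal_mFourier (d := κ)).1 l, one_mul]
    _ ≤ ‖F‖ := (toL2.le_opNorm F).trans (mul_le_of_le_one_left (norm_nonneg _) norm_toL2_le)

theorem mFourier_coe_apply (l : κ → ℤ) (θ : κ → ℝ) :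
    mFourier l (fun j => (θ j : UnitAddCircle)) =
      Complex.exp (((2 * Real.pi * ∑ j, l j * θ j : ℝ) : ℂ) * Complex.I) := by
  simp only [mFourier, ContinuousMap.coe_mk, fourier_coe_apply]
  rw [← Complex.exp_sum]
  congr 1
  push_cast
  rw [Finset.mul_sum, Finset.sum_mul]
  exact Finset.sum_congr rfl fun j _ => by ring

theorem hasExpansion_phase (hR : 0 ≤ R) {N : ℕ} {l : κ → ℤ} (hl : ∀ i, |l i| ≤ N) :
    HasExpansion R (2 * Real.pi * (Fintype.card κ * (N * R)))
      (fun θ : κ → ℝ => 2 * Real.pi * ∑ j, l j * θ j) := by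
  have sum := HasExpansion.sum hR Finset.univ fun j _ =>
    ((HasExpansion.coord hR j).const_mul hR (l j : ℝ)).mono
      (mul_le_mul_of_nonneg_right (by exact_mod_cast hl j : |(l j : ℝ)| ≤ N) hR)
  rw [Finset.sum_const, Finset.card_univ, nsmul_eq_mul] at sum
  simpa only [abs_of_pos Real.two_pi_pos] using sum.const_mul hR (2 * Real.pi)

variable [DecidableEq κ]

/-- The frequencies of trigonometric polynomials of degree at most `N` in each variable. -/
noncomputable def frequencyBox (κ : Type*) [Fintype κ] [DecidableEq κ] (N : ℕ) : Finset (κ → ℤ) :=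
  Fintype.piFinset fun _ => Finset.Icc (-(N : ℤ)) N

theorem mem_frequencyBox {N : ℕ} {l : κ → ℤ} : l ∈ frequencyBox κ N ↔ ∀ i, |l i| ≤ N := by
  simp [frequencyBox, abs_le]

theorem card_frequencyBox (N : ℕ) :
    (frequencyBox κ N).card = (2 * N + 1) ^ (Fintype.card κ) := by
  have : ((N : ℤ) + 1 + N).toNat = 2 * N + 1 := by omega
  simp [frequencyBox, this]

/-- Trigonometric polynomials of degree at most `N` in each variable. -/
noncomputable def trigPolynomials (κ : Type*) [Fintype κ] [DecidableEq κ] (N : ℕ) :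
    Submodule ℂ C(UnitAddTorus κ, ℂ) :=
  Submodule.span ℂ (mFourier '' (frequencyBox κ N : Set (κ → ℤ)))

theorem mFourier_mem_trigPolynomials {N : ℕ} {l : κ → ℤ} (hl : ∀ i, |l i| ≤ N) :
    mFourier l ∈ trigPolynomials κ N :=
  Submodule.subset_span ⟨l, mem_frequencyBox.2 hl, rfl⟩

theorem trigPolynomials_mono : Monotone (trigPolynomials κ) := fun N N' h =>
  Submodule.span_mono <| Set.image_mono fun l hl => by
    simp only [Finset.mem_coe, mem_frequencyBox] at hl ⊢
    exact fun i => (hl i).trans (by exact_mod_cast h)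

theorem mul_mem_trigPolynomials {N N' : ℕ} {F F' : C(UnitAddTorus κ, ℂ)}
    (hF : F ∈ trigPolynomials κ N) (hF' : F' ∈ trigPolynomials κ N') :
    F * F' ∈ trigPolynomials κ (N + N') := by
  have mem := Submodule.mul_mem_mul hF hF'
  rw [trigPolynomials, trigPolynomials, Submodule.span_mul_span] at mem
  refine Submodule.span_le.2 ?_ mem
  rintro _ ⟨_, ⟨l, hl, rfl⟩, _, ⟨l', hl', rfl⟩, rfl⟩
  have mul_eq : mFourier l * mFourier l' = mFourier (l + l') := by
    ext x
    exact mFourier_add.symm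
  simp only [Finset.mem_coe, mem_frequencyBox] at hl hl'
  change mFourier l * mFourier l' ∈ trigPolynomials κ (N + N')
  rw [mul_eq]
  refine mFourier_mem_trigPolynomials fun i => ?_
  push_cast
  exact (abs_add_le _ _).trans (add_le_add (hl i) (hl' i))

theorem one_mem_trigPolynomials (N : ℕ) : 1 ∈ trigPolynomials κ N :=
  mFourier_zero (d := κ) ▸ mFourier_mem_trigPolynomials fun i => by simp

theorem exists_trigPolynomial_eq_sin (y t : ℝ) (i : κ) : ∃ F ∈ trigPolynomials κ 1,
    ∀ θ : κ → ℝ, F (fun j => (θ j : UnitAddCircle)) =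
      ((y + t * Real.sin (2 * Real.pi * θ i) : ℝ) : ℂ) := by
  have abs_single_le (j : κ) : |(Pi.single i 1 : κ → ℤ) j| ≤ (1 : ℕ) := by
    obtain rfl | hj := eq_or_ne j i <;> simp [*]
  refine ⟨(y : ℂ) • 1 + (t / (2 * Complex.I)) •
    (mFourier (Pi.single i 1) - mFourier (-Pi.single i 1)), add_mem (Submodule.smul_mem _ _
      (one_mem_trigPolynomials 1)) (Submodule.smul_mem _ _ (sub_mem
        (mFourier_mem_trigPolynomials abs_single_le) (mFourier_mem_trigPolynomials fun j => ?_))),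
    fun θ => ?_⟩
  · rw [Pi.neg_apply, abs_neg]
    exact abs_single_le j
  · have sum_single : ∑ j, ((Pi.single i 1 : κ → ℤ) j : ℝ) * θ j = θ i := by
      simp [Pi.single_apply]
    simp only [ContinuousMap.add_apply, ContinuousMap.smul_apply, ContinuousMap.one_apply,
      ContinuousMap.sub_apply, mFourier_coe_apply, Pi.neg_apply, Int.cast_neg, neg_mul,
      Finset.sum_neg_distrib, sum_single, smul_eq_mul]
    push_cast
    rw [Complex.sin]
    field_simp
    ring_nf
    rw [Complex.I_sq]
    ring

theorem HasPolyExpansion.exists_trigPolynomial_eq {N : ℕ} {q : (κ → ℝ) → ℝ}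
    (h : HasPolyExpansion N S B q) (y : κ → ℝ) (t : ℝ) : ∃ F ∈ trigPolynomials κ N,
    ∀ θ : κ → ℝ, F (fun j => (θ j : UnitAddCircle)) =
      (q (fun i => y i + t * Real.sin (2 * Real.pi * θ i)) : ℂ) := by
  have exists_word (w : List κ) : ∃ F ∈ trigPolynomials κ w.length, ∀ θ : κ → ℝ,
      F (fun j => (θ j : UnitAddCircle)) =
        (wordMonomial w (fun i => y i + t * Real.sin (2 * Real.pi * θ i)) : ℂ) := by
    induction w with
    | nil => exact ⟨1, one_mem_trigPolynomials _, fun θ => by simp [wordMonomial_nil]⟩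
    | cons i w ih =>
      obtain ⟨F, F_mem, hF⟩ := ih
      obtain ⟨E, E_mem, hE⟩ := exists_trigPolynomial_eq_sin (y i) t i
      refine ⟨F * E, mul_mem_trigPolynomials F_mem E_mem, fun θ => ?_⟩
      rw [ContinuousMap.mul_apply, hF, hE, wordMonomial_cons, mul_comm, Complex.ofReal_mul]
  choose W W_mem hW using exists_word
  obtain ⟨s, c, hN, -, hq⟩ := h
  refine ⟨∑ w ∈ s, (c w : ℂ) • W w, Submodule.sum_mem _ fun w hw =>
    Submodule.smul_mem _ _ (trigPolynomials_mono (hN w hw) (W_mem w)), fun θ => ?_⟩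
  rw [hq, ContinuousMap.sum_apply]
  simp only [ContinuousMap.smul_apply, hW, smul_eq_mul]
  push_cast
  rfl

theorem hasExpansion_of_trigPolynomial (hR : 0 ≤ R) {N : ℕ} {F : C(UnitAddTorus κ, ℂ)}
    (hF : F ∈ trigPolynomials κ N) :
    HasExpansion R ((2 * N + 1) ^ Fintype.card κ *
        (‖F‖ * Real.exp (2 * Real.pi * (Fintype.card κ * (N * R)))))
      (fun θ : κ → ℝ => (F fun j => (θ j : UnitAddCircle)).re) := by
  obtain ⟨c, rfl⟩ : ∃ c : (κ → ℤ) → ℂ, ∑ l ∈ frequencyBox κ N, c l • mFourier l = F :=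
    (Submodule.mem_span_image_finset_iff_exists_fun' ℂ).1 hF
  set F : C(UnitAddTorus κ, ℂ) := ∑ l ∈ frequencyBox κ N, c l • mFourier l with hF_def
  have term (l) (hl : l ∈ frequencyBox κ N) := ((hasExpansion_phase hR
    (mem_frequencyBox.1 hl)).re_mul_exp hR (c l)).mono
      (mul_le_mul_of_nonneg_right (norm_le_norm_sum_mFourier c hl) (Real.exp_nonneg _))
  have sum := HasExpansion.sum hR (frequencyBox κ N) term
  rw [Finset.sum_const, card_frequencyBox, nsmul_eq_mul] at sum
  push_cast at sum
  refine sum.congr fun θ _ => ?_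
  rw [hF_def, ContinuousMap.sum_apply, Complex.re_sum]
  exact Finset.sum_congr rfl fun l _ => by
    rw [ContinuousMap.smul_apply, mFourier_coe_apply, smul_eq_mul]
    push_cast
    rfl

end Torus

theorem HasPolyExpansion.exists_hasExpansion_sin [Finite κ] {om : ℝ} (hom : 1 < om) :
    ∃ R C : ℝ, 0 < R ∧ 0 ≤ C ∧ ∀ (N : ℕ) (S B : ℝ) (q : (κ → ℝ) → ℝ), HasPolyExpansion N S B q →
      ∀ (y : κ → ℝ) (t η : ℝ), 0 ≤ η →
      (∀ θ : κ → ℝ, |q (fun i => y i + t * Real.sin (2 * Real.pi * θ i))| ≤ η) →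
      HasExpansion R (C * (η * om ^ N))
        (fun θ => q (fun i => y i + t * Real.sin (2 * Real.pi * θ i))) := by
  classical
  have := Fintype.ofFinite κ
  obtain ⟨R, C, hR, hC, growth_le⟩ := exists_pow_mul_exp_le (Fintype.card κ) hom
  refine ⟨R, C, hR, hC, fun N S B q hq y t η hη q_le => ?_⟩
  obtain ⟨F, F_mem, hF⟩ := hq.exists_trigPolynomial_eq y t
  have norm_F_le : ‖F‖ ≤ η := by
    refine (ContinuousMap.norm_le _ hη).2 fun x => ?_
    choose θ hθ using fun j => QuotientAddGroup.mk_surjective (x j)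
    obtain rfl : (fun j => (θ j : UnitAddCircle)) = x := funext hθ
    rw [hF, Complex.norm_real]
    exact q_le θ
  refine ((hasExpansion_of_trigPolynomial hR.le F_mem).mono ?_).congr fun θ _ => by
    rw [hF, Complex.ofReal_re]
  calc (2 * N + 1 : ℝ) ^ Fintype.card κ *
        (‖F‖ * Real.exp (2 * Real.pi * (Fintype.card κ * (N * R))))
      ≤ (2 * N + 1 : ℝ) ^ Fintype.card κ *
        (η * Real.exp (2 * Real.pi * (Fintype.card κ * (N * R)))) := by gcongr
    _ = (2 * N + 1 : ℝ) ^ Fintype.card κ *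
        Real.exp (2 * Real.pi * (Fintype.card κ * (N * R))) * η := by ring
    _ ≤ C * om ^ N * η := mul_le_mul_of_nonneg_right (growth_le N) hη
    _ = C * (η * om ^ N) := by ring

end Bernstein

/-! ### Analyticity of functions with a polynomial series -/

section Analyticity

variable {X κ : Type*} [Fintype κ] {k : X → κ → ℝ} {s : Set X} {om A : ℝ} {f : X → ℝ}

theorem analyticAt_arcsin_coord {t : ℝ} (y₀ : κ → ℝ) :
    AnalyticAt ℝ (fun y : κ → ℝ => fun i => Real.arcsin ((y i - y₀ i) / t) / (2 * Real.pi)) y₀ := by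
  refine analyticAt_pi_iff.2 fun i => ?_
  have analyticAt_arcsin : AnalyticAt ℝ Real.arcsin 0 :=
    (Real.contDiffAt_arcsin (by norm_num) (by norm_num)).analyticAt
  have analyticAt_coord : AnalyticAt ℝ (fun y : κ → ℝ => (y i - y₀ i) / t) y₀ :=
    (((ContinuousLinearMap.proj (R := ℝ) (φ := fun _ : κ => ℝ) i).analyticAt y₀).sub
      analyticAt_const).div_const
  exact (analyticAt_arcsin.comp_of_eq analyticAt_coord (by simp)).div_const

theorem HasPolySeries.exists_analyticAt_comp (hom : 1 < om) (h : HasPolySeries k s om A f) :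
    ∃ F : (κ → ℝ) → ℝ, (∀ y ∈ interior (k '' s), AnalyticAt ℝ F y) ∧ ∀ x ∈ s, f x = F (k x) := by
  obtain ⟨J, q, N, η, hq, η_nonneg, q_le, η_summable, -, hf⟩ := h
  refine ⟨fun y => ∑' j, q j y, fun y₀ hy₀ => ?_, hf⟩
  obtain ⟨R, C, hR, -, bernstein⟩ := HasPolyExpansion.exists_hasExpansion_sin (κ := κ) hom
  obtain ⟨t, ht, closedBall_subset⟩ :=
    Metric.nhds_basis_closedBall.mem_iff.1 (mem_interior_iff_mem_nhds.1 hy₀)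
  let wave : (κ → ℝ) → κ → ℝ := fun θ i => y₀ i + t * Real.sin (2 * Real.pi * θ i)
  have wave_mem (θ : κ → ℝ) : wave θ ∈ k '' s := by
    refine closedBall_subset ((dist_pi_le_iff ht.le).2 fun i => ?_)
    rw [Real.dist_eq, add_sub_cancel_left, abs_mul, abs_of_pos ht]
    exact mul_le_of_le_one_right ht.le (Real.abs_sin_le_one _)
  have expansion : HasExpansion R (∑' j, C * (η j * om ^ N j)) (fun θ => ∑' j, q j (wave θ)) := by
    refine HasExpansion.tsum hR.le (fun j => ?_) (η_summable.mul_left C) fun θ _ => rfl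
    obtain ⟨B, hB⟩ := hq j
    refine bernstein _ _ B _ hB _ _ _ (η_nonneg j) fun θ => ?_
    obtain ⟨x, hx, hxθ⟩ := wave_mem θ
    change |q j (wave θ)| ≤ η j
    exact hxθ ▸ q_le j x hx
  refine ((expansion.analyticAt hR).comp_of_eq (analyticAt_arcsin_coord (t := t) y₀)
    (by ext i; simp)).congr ?_
  filter_upwards [Metric.closedBall_mem_nhds y₀ ht] with y hy
  refine tsum_congr fun j => congrArg (q j) (funext fun i => ?_)
  obtain ⟨le_sub, sub_le⟩ := abs_le.1 ((Real.dist_eq (y i) (y₀ i)).symm.trans_le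
    ((dist_le_pi_dist y y₀ i).trans hy))
  dsimp only [wave]
  rw [mul_div_cancel₀ _ Real.two_pi_pos.ne', Real.sin_arcsin, mul_div_cancel₀ _ ht.ne',
    add_sub_cancel]
  · rwa [le_div_iff₀ ht, neg_one_mul]
  · rwa [div_le_one ht]

end Analyticity

/-! ### A metric with bi-Lipschitz charts -/

section BilipschitzCharts

open Filter Topology

section LinearAlgebra

variable {E H : Type*} [NormedAddCommGroup E] [InnerProductSpace ℝ E]
  [NormedAddCommGroup H] [InnerProductSpace ℝ H]

theorem exists_continuousLinearEquiv_norm_eq [FiniteDimensional ℝ E] (T : E →L[ℝ] H)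
    (hT : Function.Injective T) : ∃ A : E ≃L[ℝ] E, ∀ w, ‖A w‖ = ‖T w‖ := by
  let e := LinearEquiv.ofInjective (T : E →ₗ[ℝ] H) hT
  let isometry := (stdOrthonormalBasis ℝ (LinearMap.range (T : E →ₗ[ℝ] H))).equiv
    (stdOrthonormalBasis ℝ E) (finCongr e.finrank_eq.symm)
  exact ⟨(e.trans isometry.toLinearEquiv).toContinuousLinearEquiv,
    fun w => isometry.norm_map (e w)⟩

theorem exists_bilipschitz_of_hasStrictFDerivAt [FiniteDimensional ℝ E] {h : E → H} {T : E →L[ℝ] H}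
    {u₀ : E} (hh : HasStrictFDerivAt h T u₀) (hT : ∀ w, ‖w‖ ≤ ‖T w‖) :
    ∃ A : E ≃L[ℝ] E, ∃ V ∈ 𝓝 u₀, ∀ u ∈ V, ∀ v ∈ V,
      ‖A u - A v‖ ≤ 2 * ‖h u - h v‖ ∧ ‖h u - h v‖ ≤ 2 * ‖A u - A v‖ := by
  have injective : Function.Injective T := (injective_iff_map_eq_zero T).2 fun w hw =>
    norm_le_zero_iff.1 ((hT w).trans_eq (by rw [hw, norm_zero]))
  obtain ⟨A, norm_A⟩ := exists_continuousLinearEquiv_norm_eq T injective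
  have remainder_le := hh.isLittleO.def (c := 1 / 2) (by norm_num)
  rw [nhds_prod_eq] at remainder_le
  obtain ⟨V, hV, remainder_le⟩ := mem_prod_self_iff.1 remainder_le
  refine ⟨A, V, hV, fun u hu v hv => ?_⟩
  replace remainder_le : ‖h u - h v - T (u - v)‖ ≤ 1 / 2 * ‖u - v‖ :=
    remainder_le (Set.mk_mem_prod hu hv)
  rw [← map_sub, norm_A]
  have := hT (u - v)
  have := norm_sub_norm_le (h u - h v) (T (u - v))
  have := norm_sub_norm_le (T (u - v)) (h u - h v)
  rw [norm_sub_rev (T (u - v))] at this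
  constructor <;> linarith

theorem norm_le_norm_of_comp_eventuallyEq_id {h : E → H} {T : E →L[ℝ] H} {u₀ : E}
    (hh : HasFDerivAt h T u₀) {P : H →L[ℝ] E} (hP : ∀ g, ‖P g‖ ≤ ‖g‖)
    (hPh : ∀ᶠ u in 𝓝 u₀, P (h u) = u) (w : E) : ‖w‖ ≤ ‖T w‖ := by
  have comp_eq : P ∘L T = ContinuousLinearMap.id ℝ E :=
    (P.hasFDerivAt.comp u₀ hh).unique ((hasFDerivAt_id u₀).congr_of_eventuallyEq hPh)
  calc ‖w‖ = ‖P (T w)‖ := by rw [← ContinuousLinearMap.comp_apply, comp_eq]; rfl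
    _ ≤ ‖T w‖ := hP _

end LinearAlgebra

variable {E M : Type*} [NormedAddCommGroup E] [InnerProductSpace ℝ E]
  [TopologicalSpace M] [ChartedSpace E M]

theorem transHomeomorph_mem_maximalAtlas {n : WithTop ℕ∞}
    {ψ : OpenPartialHomeomorph M E} (hψ : ψ ∈ IsManifold.maximalAtlas 𝓘(ℝ, E) n M)
    {e : E ≃ₜ E} (he : ContDiff ℝ n e) (he_symm : ContDiff ℝ n e.symm) :
    ψ.transHomeomorph e ∈ IsManifold.maximalAtlas 𝓘(ℝ, E) n M := by
  have mem_groupoid : e.toOpenPartialHomeomorph ∈ contDiffGroupoid n 𝓘(ℝ, E) := by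
    rw [contDiffGroupoid, mem_groupoid_of_pregroupoid]
    simp only [contDiffPregroupoid, mfld_simps]
    exact ⟨he.contDiffOn, he_symm.contDiffOn⟩
  rw [OpenPartialHomeomorph.transHomeomorph_eq_trans]
  intro φ hφ
  obtain ⟨symm_trans_mem, trans_symm_mem⟩ := hψ φ hφ
  constructor
  · rw [OpenPartialHomeomorph.trans_symm_eq_symm_trans_symm, OpenPartialHomeomorph.trans_assoc]
    exact StructureGroupoid.trans _ (StructureGroupoid.symm _ mem_groupoid) symm_trans_mem
  · rw [← OpenPartialHomeomorph.trans_assoc]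
    exact StructureGroupoid.trans _ trans_symm_mem mem_groupoid

/-- On the `ρ`-ball of radius `r` around `x`, the analytic chart `ψ` is bi-Lipschitz with
constant `2` from the distance function `ρ` to the norm distance. -/
structure IsBilipschitzChart (ρ : M → M → ℝ) (ψ : OpenPartialHomeomorph M E) (x : M) (r : ℝ) :
    Prop where
  mem_maximalAtlas : ψ ∈ IsManifold.maximalAtlas 𝓘(ℝ, E) ω M
  pos : 0 < r
  mem_source : ∀ y, ρ x y < r → y ∈ ψ.source
  bilipschitz : ∀ y z, ρ x y < r → ρ x z < r →
    ‖ψ y - ψ z‖ ≤ 2 * ρ y z ∧ ρ y z ≤ 2 * ‖ψ y - ψ z‖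

variable [FiniteDimensional ℝ E] {ι : Type*}

section Embedding

variable [DecidableEq ι] (f : SmoothBumpCovering ι 𝓘(ℝ, E) M)

/-- The embedding into a Hilbert space glued from the charts at the centres of a bump covering. The
additional real coordinate of the `i`-th component records the value of the `i`-th bump function. -/
noncomputable def bumpEmbedding (x : M) : lp (fun _ : ι => WithLp 2 (ℝ × E)) 2 :=
  ∑ᶠ i, f i x • lp.singleContinuousLinearMap ℝ (fun _ : ι => WithLp 2 (ℝ × E)) 2 i
    (WithLp.toLp 2 (1, chartAt E (f.c i) x))


theorem evalCLM_bumpEmbedding (x : M) (i : ι) :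
    lp.evalCLM ℝ (fun _ : ι => WithLp 2 (ℝ × E)) 2 i (bumpEmbedding f x) =
      f i x • WithLp.toLp 2 (1, chartAt E (f.c i) x) := by
  have finite_support : (Function.support fun j => f j x • lp.singleContinuousLinearMap ℝ
      (fun _ : ι => WithLp 2 (ℝ × E)) 2 j (WithLp.toLp 2 (1, chartAt E (f.c j) x))).Finite :=
    (f.locallyFinite.point_finite x).subset fun j hj => left_ne_zero_of_smul hj
  rw [bumpEmbedding, map_finsum _ finite_support, finsum_eq_single _ i fun j hj => ?_]
  · rw [map_smul]
    exact congrArg _ (lp.single_apply_self 2 i _)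
  · rw [map_smul]
    exact (congrArg _ (lp.single_apply_ne 2 j _ hj.symm)).trans (smul_zero _)

theorem contMDiff_bumpEmbedding [T2Space M] [IsManifold 𝓘(ℝ, E) ∞ M] :
    ContMDiff 𝓘(ℝ, E) 𝓘(ℝ, lp (fun _ : ι => WithLp 2 (ℝ × E)) 2) ∞ (bumpEmbedding f) := by
  refine contMDiff_finsum (fun i => (f i).contMDiff_smul ?_)
    (f.locallyFinite.subset fun i => Function.support_smul_subset_left (f i) _)
  have contDiff_single : ContDiff ℝ ∞ fun v : E =>
      lp.singleContinuousLinearMap ℝ (fun _ : ι => WithLp 2 (ℝ × E)) 2 i (WithLp.toLp 2 (1, v)) :=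
    (ContinuousLinearMap.contDiff _).comp
      ((WithLp.prodContinuousLinearEquiv 2 ℝ ℝ E).symm.contDiff.comp
        (contDiff_const.prodMk contDiff_id))
  exact contDiff_single.contMDiff.comp_contMDiffOn contMDiffOn_chart

theorem tendsto_bump_comap_bumpEmbedding (x : M) (i : ι) :
    Tendsto (f i) (comap (bumpEmbedding f) (𝓝 (bumpEmbedding f x))) (𝓝 (f i x)) := by
  have tendsto_fst := (((WithLp.continuous_fst 2 ℝ E).comp
    (lp.evalCLM ℝ (fun _ : ι => WithLp 2 (ℝ × E)) 2 i).continuous).tendsto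
      (bumpEmbedding f x)).comp (tendsto_comap (f := bumpEmbedding f))
  simpa [Function.comp_def, evalCLM_bumpEmbedding] using tendsto_fst

theorem tendsto_chartAt_comap_bumpEmbedding {x : M} {i : ι} (hx : f i x = 1) :
    Tendsto (chartAt E (f.c i)) (comap (bumpEmbedding f) (𝓝 (bumpEmbedding f x)))
      (𝓝 (chartAt E (f.c i) x)) := by
  have tendsto_bump := tendsto_bump_comap_bumpEmbedding f x i
  rw [hx] at tendsto_bump
  have tendsto_snd := (((WithLp.continuous_snd 2 ℝ E).comp
    (lp.evalCLM ℝ (fun _ : ι => WithLp 2 (ℝ × E)) 2 i).continuous).tendsto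
      (bumpEmbedding f x)).comp (tendsto_comap (f := bumpEmbedding f))
  have tendsto_smul : Tendsto (fun y => f i y • chartAt E (f.c i) y)
      (comap (bumpEmbedding f) (𝓝 (bumpEmbedding f x))) (𝓝 (chartAt E (f.c i) x)) := by
    simpa [Function.comp_def, evalCLM_bumpEmbedding, hx] using tendsto_snd
  have tendsto_inv_smul := (tendsto_bump.inv₀ one_ne_zero).smul tendsto_smul
  rw [inv_one, one_smul] at tendsto_inv_smul
  refine tendsto_inv_smul.congr' ?_
  filter_upwards [tendsto_bump.eventually_ne one_ne_zero] with y hy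
  exact inv_smul_smul₀ hy _

theorem isEmbedding_bumpEmbedding [T2Space M] [IsManifold 𝓘(ℝ, E) ∞ M] :
    IsEmbedding (bumpEmbedding f) := by
  suffices h : IsInducing (bumpEmbedding f) from ⟨h, h.injective⟩
  refine isInducing_iff_nhds.2 fun x => le_antisymm
    (map_le_iff_le_comap.1 (contMDiff_bumpEmbedding f).continuous.continuousAt) ?_
  set i := f.ind x (Set.mem_univ x)
  set ψ := chartAt E (f.c i)
  have bump_eq_one : f i x = 1 := f.apply_ind x _
  have mem_source : x ∈ ψ.source := f.mem_chartAt_ind_source x _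
  have tendsto_symm := (ψ.continuousAt_symm (ψ.map_source mem_source)).tendsto.comp
    (tendsto_chartAt_comap_bumpEmbedding f bump_eq_one)
  rw [ψ.left_inv mem_source] at tendsto_symm
  refine tendsto_id'.1 (tendsto_symm.congr' ?_)
  filter_upwards [(tendsto_bump_comap_bumpEmbedding f x i).eventually_ne
    (bump_eq_one ▸ one_ne_zero)] with y hy
  exact ψ.left_inv ((f i).support_subset_source hy)

theorem norm_le_norm_fderiv_bumpEmbedding {x : M} {i : ι}
    (hx : x ∈ (chartAt E (f.c i)).source) (hfx : f i =ᶠ[𝓝 x] 1)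
    {T : E →L[ℝ] lp (fun _ : ι => WithLp 2 (ℝ × E)) 2}
    (hT : HasFDerivAt (bumpEmbedding f ∘ (chartAt E (f.c i)).symm) T (chartAt E (f.c i) x))
    (w : E) : ‖w‖ ≤ ‖T w‖ := by
  set ψ := chartAt E (f.c i)
  have tendsto_symm := (ψ.continuousAt_symm (ψ.map_source hx)).tendsto
  rw [ψ.left_inv hx] at tendsto_symm
  refine norm_le_norm_of_comp_eventuallyEq_id hT (P := WithLp.sndL 2 ℝ ℝ E ∘L
    lp.evalCLM ℝ (fun _ : ι => WithLp 2 (ℝ × E)) 2 i)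
    (fun g => (WithLp.norm_snd_le (p := 2) (α := ℝ) (β := E) (g i)).trans
      (lp.norm_apply_le_norm two_ne_zero g i)) ?_ w
  filter_upwards [tendsto_symm.eventually hfx, ψ.open_target.mem_nhds (ψ.map_source hx)]
    with u bump_eq_one hu
  change (lp.evalCLM ℝ (fun _ : ι => WithLp 2 (ℝ × E)) 2 i (bumpEmbedding f (ψ.symm u))).snd = u
  rw [evalCLM_bumpEmbedding, bump_eq_one]
  exact (one_smul ℝ _).trans (ψ.right_inv hu)

theorem exists_isBilipschitzChart_bumpEmbedding [T2Space M] [IsManifold 𝓘(ℝ, E) ω M] (x : M) :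
    ∃ (ψ : OpenPartialHomeomorph M E) (r : ℝ),
      IsBilipschitzChart (fun y z => dist (bumpEmbedding f y) (bumpEmbedding f z)) ψ x r := by
  have : IsManifold 𝓘(ℝ, E) ∞ M := .of_le (n := ω) le_top
  set i := f.ind x (Set.mem_univ x)
  set φ := chartAt E (f.c i)
  have mem_source : x ∈ φ.source := f.mem_chartAt_ind_source x _
  have contDiffAt_comp : ContDiffAt ℝ ∞ (bumpEmbedding f ∘ φ.symm) (φ x) :=
    (contMDiffOn_iff_contDiffOn.1 ((contMDiff_bumpEmbedding f).comp_contMDiffOn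
      contMDiffOn_chart_symm)).contDiffAt (φ.open_target.mem_nhds (φ.map_source mem_source))
  have hasStrictFDerivAt := contDiffAt_comp.hasStrictFDerivAt (by simp)
  obtain ⟨A, V, hV, bilipschitz⟩ := exists_bilipschitz_of_hasStrictFDerivAt hasStrictFDerivAt
    (norm_le_norm_fderiv_bumpEmbedding f mem_source (f.eventuallyEq_one x _)
      hasStrictFDerivAt.hasFDerivAt)
  have mem_nhds : φ.source ∩ φ ⁻¹' V ∈ 𝓝 x := inter_mem (φ.open_source.mem_nhds mem_source)
    ((φ.continuousAt mem_source).preimage_mem_nhds hV)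
  rw [(isEmbedding_bumpEmbedding f).isInducing.nhds_eq_comap] at mem_nhds
  obtain ⟨r, hr, ball_subset⟩ := (Metric.nhds_basis_ball.comap _).mem_iff.1 mem_nhds
  replace ball_subset : ∀ y, dist (bumpEmbedding f x) (bumpEmbedding f y) < r →
      y ∈ φ.source ∩ φ ⁻¹' V := fun y hy => ball_subset (by simpa [dist_comm] using hy)
  refine ⟨φ.transHomeomorph A.toHomeomorph, r,
    transHomeomorph_mem_maximalAtlas (IsManifold.chart_mem_maximalAtlas (f.c i)) A.contDiff
      A.symm.contDiff, hr, fun y hy => ?_, fun y z hy hz => ?_⟩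
  · simpa using (ball_subset y hy).1
  · simpa [dist_eq_norm, φ.left_inv (ball_subset y hy).1, φ.left_inv (ball_subset z hz).1]
      using bilipschitz _ (ball_subset y hy).2 _ (ball_subset z hz).2

end Embedding

end BilipschitzCharts

/-! ### Difference quotients at small scales -/

section DifferenceQuotients

variable {κ : Type*} {R S B τ : ℝ} {f : (κ → ℝ) → ℝ} {u : κ → ℝ}

theorem hasExpansion_coord_affine (hS : 0 ≤ S) (hτ : 0 ≤ τ) (hτS : τ * S ≤ R / 2)
    (hu : ∀ i, |u i| ≤ R / 2) (i : κ) : HasExpansion S R (fun v => u i + τ * v i) := by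
  refine ((HasExpansion.const hS (u i)).add hS (.const_mul hS τ (.coord hS i))).mono ?_
  rw [abs_of_nonneg hτ]
  linarith [hu i]

theorem hasExpansion_differenceQuotient_wordMonomial (hR : 0 < R) (hS : 0 ≤ S) (hτ : 0 < τ)
    (hτS : τ * S ≤ R / 2) (hu : ∀ i, |u i| ≤ R / 2) (w : List κ) :
    HasExpansion S (2 * S / R * R ^ w.length)
      (fun v => (wordMonomial w (u + τ • v) - wordMonomial w u) / τ) := by
  induction w with
  | nil =>
    refine ((HasExpansion.const hS 0).mono ?_).congr fun v _ => by simp [wordMonomial_nil]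
    rw [abs_zero]
    positivity
  | cons i w ih =>
    have coord_expansion := hasExpansion_coord_affine hS hτ.le hτS hu
    refine (((ih.const_mul hS (u i)).add hS ((HasExpansion.coord hS i).mul hS
      (HasExpansion.wordMonomial_comp hS coord_expansion w))).mono ?_).congr fun v _ => ?_
    · calc |u i| * (2 * S / R * R ^ w.length) + S * R ^ w.length
          ≤ R / 2 * (2 * S / R * R ^ w.length) + S * R ^ w.length := by
            gcongr
            exact hu i
        _ = 2 * S / R * R ^ (i :: w).length := by
            rw [List.length_cons, pow_succ]
            field_simp
            ring
    · change _ = u i * _ + v i * wordMonomial w (u + τ • v)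
      simp only [wordMonomial_cons, Pi.add_apply, Pi.smul_apply, smul_eq_mul]
      field_simp
      ring

theorem HasExpansion.differenceQuotient (hR : 0 < R) (h : HasExpansion R B f) (hS : 0 ≤ S)
    (hτ : 0 < τ) (hτS : τ * S ≤ R / 2) (hu : ∀ i, |u i| ≤ R / 2) :
    HasExpansion S (2 * S / R * B) (fun v => (f (u + τ • v) - f u) / τ) := by
  obtain ⟨c, hc, hcB, hf⟩ := h
  have summable_bound : Summable fun w : List κ => |c w| * (2 * S / R * R ^ w.length) :=
    (hc.mul_left (2 * S / R)).congr fun w => by ring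
  refine (HasExpansion.tsum hS (fun w => (hasExpansion_differenceQuotient_wordMonomial hR hS hτ
    hτS hu w).const_mul hS (c w)) summable_bound fun v hv => ?_).mono ?_
  · have mem_box : ∀ i, |(u + τ • v) i| ≤ R :=
      (hasExpansion_coord_affine hS hτ.le hτS hu · |>.abs_le hv)
    have mem_box' : ∀ i, |u i| ≤ R := fun i => (hu i).trans (half_le_self hR.le)
    rw [hf _ mem_box, hf _ mem_box',
      ← (summable_abs_mul_wordMonomial hc mem_box).of_abs.tsum_sub
        (summable_abs_mul_wordMonomial hc mem_box').of_abs, ← tsum_div_const]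
    exact tsum_congr fun w => by ring
  · calc ∑' w, |c w| * (2 * S / R * R ^ w.length)
        = 2 * S / R * ∑' w, |c w| * R ^ w.length := by
          rw [← tsum_mul_left]
          exact tsum_congr fun w => by ring
      _ ≤ 2 * S / R * B := by gcongr

/-- The degree-two remainder at scale `R` has norm `O(R ^ 2)`, and the difference quotient costs a
factor `S / R`; so only the linear part survives when `R → 0`. -/
theorem exists_hasExpansion_differenceQuotient [Fintype κ] {u₀ : κ → ℝ} (hf : AnalyticAt ℝ f u₀)
    (hS : 0 < S) : ∃ ρ : ℝ, 0 < ρ ∧ ∀ u : κ → ℝ, (∀ i, |u i - u₀ i| ≤ ρ) → ∀ τ, 0 < τ → τ ≤ ρ →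
      HasExpansion S (S * (Fintype.card κ * ‖fderiv ℝ f u₀‖ + 2))
        (fun v => (f (u + τ • v) - f u) / τ) := by
  obtain ⟨p, hp⟩ := hf
  obtain ⟨R₀, B, hR₀, hB, remainder_expansion⟩ := exists_hasExpansion_sub_partialSum hp 2
  set R := min R₀ (1 / (B + 1))
  have hR : 0 < R := lt_min hR₀ (by positivity)
  have hBR : B * R ≤ 1 := by
    have : R * (B + 1) ≤ 1 := (le_div_iff₀ (by positivity)).1 (min_le_right _ _)
    linarith
  refine ⟨min (R / 2) (R / 2 / S), by positivity, fun u hu τ hτ hτρ => ?_⟩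
  have quotient_expansion := (remainder_expansion R hR.le (min_le_left _ _)).differenceQuotient hR
    hS.le hτ ((le_div_iff₀ hS).1 (hτρ.trans (min_le_right _ _)))
    (u := u - u₀) fun i => (hu i).trans (min_le_left _ _)
  refine (((hasExpansion_multilinear hS.le (p 1)).add hS.le quotient_expansion).mono ?_).congr
    fun v _ => ?_
  · calc ‖p 1‖ * (Fintype.card κ * S) ^ 1 + 2 * S / R * (B * R ^ 2)
        = S * (Fintype.card κ * ‖p 1‖ + 2 * (B * R)) := by field_simp
      _ ≤ S * (Fintype.card κ * ‖fderiv ℝ f u₀‖ + 2) := by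
          rw [hp.fderiv_eq, LinearIsometryEquiv.norm_map]
          gcongr
          linarith
  · set L := continuousMultilinearCurryFin1 ℝ (κ → ℝ) ℝ (p 1)
    have partialSum_two (x : κ → ℝ) : p.partialSum 2 x = p 0 0 + L x := by
      rw [FormalMultilinearSeries.partialSum, Finset.sum_range_succ, Finset.sum_range_one]
      exact congrArg₂ _ (congrArg _ (Subsingleton.elim _ _)) rfl
    have linear_part : p 1 (fun _ => v) = L v := rfl
    rw [linear_part, show u - u₀ + τ • v = (u + τ • v) - u₀ by abel, add_sub_cancel,
      add_sub_cancel, partialSum_two, partialSum_two, map_sub, map_sub, map_add, map_smul,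
      smul_eq_mul]
    field_simp
    ring

end DifferenceQuotients

/-! ### Slowly varying scales and nets -/

section Nets

variable {M : Type*} [PseudoMetricSpace M]

/-- A `1 / 100`-Lipschitz scale, so that nearby points have comparable scales. -/
theorem exists_scale {good : M → ℝ → Prop} (h : ∀ y, ∃ t, 0 < t ∧ good y t)
    (hle : ∀ y t, good y t → t ≤ 1) :
    ∃ τ : M → ℝ, (∀ a, 0 < τ a) ∧ (∀ a b, τ a - τ b ≤ dist a b / 100) ∧
      ∀ a, ∃ y t, good y t ∧ dist y a + 50 * τ a < t := by
  let A : M → Set ℝ := fun z => {s | ∃ y t, good y t ∧ s = t - dist y z}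
  have bddAbove (z : M) : BddAbove (A z) := by
    refine ⟨1, ?_⟩
    rintro s ⟨y, t, hyt, rfl⟩
    linarith [hle y t hyt, dist_nonneg (x := y) (y := z)]
  have pos (z : M) : 0 < sSup (A z) := by
    obtain ⟨t, ht, hzt⟩ := h z
    exact ht.trans_le (le_csSup (bddAbove z) ⟨z, t, hzt, by simp⟩)
  have nonempty (z : M) : (A z).Nonempty := by
    obtain ⟨t, -, hzt⟩ := h z
    exact ⟨_, z, t, hzt, rfl⟩
  refine ⟨fun z => sSup (A z) / 100, fun a => by linarith [pos a], fun a b => ?_, fun a => ?_⟩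
  · have : sSup (A a) ≤ sSup (A b) + dist a b := by
      refine csSup_le (nonempty a) ?_
      rintro s ⟨y, t, hyt, rfl⟩
      linarith [le_csSup (bddAbove b) ⟨y, t, hyt, rfl⟩, dist_triangle y a b]
    linarith
  · obtain ⟨s, ⟨y, t, hyt, rfl⟩, half_lt⟩ := exists_lt_of_lt_csSup (nonempty a)
      (half_lt_self (pos a))
    exact ⟨y, t, hyt, by linarith⟩

/-- `N` is separated at a fifth of the scale `τ`, which may vary from point to point. -/
def IsScaleSeparated (τ : M → ℝ) (N : Set M) : Prop :=
  N.Pairwise fun a c => min (τ a) (τ c) / 5 ≤ dist a c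

theorem exists_isScaleSeparated_dist_lt {τ : M → ℝ} (hτ : ∀ a, 0 < τ a) :
    ∃ N : Set M, IsScaleSeparated τ N ∧ ∀ x, ∃ a ∈ N, dist a x < τ a / 5 := by
  obtain ⟨N, hN⟩ := zorn_subset {N : Set M | IsScaleSeparated τ N} fun c hc hchain =>
    ⟨⋃₀ c, (Set.pairwise_sUnion hchain.directedOn).2 hc, fun s hs => Set.subset_sUnion_of_mem hs⟩
  refine ⟨N, hN.prop, fun x => ?_⟩
  by_contra! h
  have mem : x ∈ N := by
    refine hN.mem_of_prop_insert (hN.prop.insert fun a ha _ => ?_)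
    have := h a ha
    rw [dist_comm x a]
    constructor <;> linarith [min_le_left (τ a) (τ x), min_le_right (τ x) (τ a)]
  have := h x mem
  rw [dist_self] at this
  linarith [hτ x]

theorem IsScaleSeparated.countable [SecondCountableTopology M] {τ : M → ℝ} (hτ : ∀ a, 0 < τ a)
    (hlip : ∀ a b, τ a - τ b ≤ dist a b / 100) {N : Set M} (hN : IsScaleSeparated τ N) :
    N.Countable := by
  have disjoint : N.PairwiseDisjoint fun a => Metric.ball a (τ a / 20) := by
    intro a ha c hc hac
    refine Set.disjoint_left.2 fun z hza hzc => ?_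
    rw [Metric.mem_ball] at hza hzc
    have separated : min (τ a) (τ c) / 5 ≤ dist a c := hN ha hc hac
    have := dist_triangle_left a c z
    have := hlip a c
    have := hlip c a
    rw [dist_comm c] at this
    rcases min_choice (τ a) (τ c) with h | h <;> rw [h] at separated <;> linarith [hτ a, hτ c]
  exact disjoint.countable_of_isOpen (fun _ _ => Metric.isOpen_ball)
    fun a _ => ⟨a, Metric.mem_ball_self (by linarith [hτ a])⟩

theorem exists_card_le_of_separated {E α : Type*} [NormedAddCommGroup E] [ProperSpace E]
    (R : ℝ) {ε : ℝ} (hε : 0 < ε) :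
    ∃ m : ℕ, ∀ {s : Set α} {u : α → E}, (∀ c ∈ s, ‖u c‖ ≤ R) →
      (s.Pairwise fun c c' => ε ≤ ‖u c - u c'‖) → ∃ h : s.Finite, h.toFinset.card ≤ m := by
  obtain ⟨t, -, ht, cover⟩ :=
    (isCompact_closedBall (0 : E) R).finite_cover_balls (e := ε / 2) (by linarith)
  refine ⟨ht.toFinset.card, fun {s u} bounded separated => ?_⟩
  have exists_near (c : α) (hc : c ∈ s) : ∃ p ∈ t, dist (u c) p < ε / 2 := by
    simpa using cover (mem_closedBall_zero_iff.2 (bounded c hc))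
  choose! p hpt hp using exists_near
  have injOn : Set.InjOn p s := by
    intro c hc c' hc' hcc
    by_contra hne
    have le_norm : ε ≤ ‖u c - u c'‖ := separated hc hc' hne
    have dist_lt := hp c' hc'
    rw [← hcc] at dist_lt
    rw [← dist_eq_norm] at le_norm
    linarith [dist_triangle_right (u c) (u c') (p c), hp c hc]
  have finite : s.Finite := Set.Finite.of_injOn hpt injOn ht
  exact ⟨finite, Finset.card_le_card_of_injOn p (by simpa [Set.MapsTo] using hpt) (by simpa)⟩

end Nets

/-! ### Charts at a controlled scale -/

section ChartTransitions

variable {d : ℕ} {M : Type*} [TopologicalSpace M]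

/-- The `k`-th coordinate of the transition from the chart `ψ` to the chart `ψ'`, as a function of
plain tuples. -/
noncomputable def coordTransition (ψ ψ' : OpenPartialHomeomorph M (EuclideanSpace ℝ (Fin d)))
    (k : Fin d) (v : Fin d → ℝ) : ℝ :=
  ψ' (ψ.symm (WithLp.toLp 2 v)) k

theorem coordTransition_ofLp {ψ ψ' : OpenPartialHomeomorph M (EuclideanSpace ℝ (Fin d))} {x : M}
    (hx : x ∈ ψ.source) (k : Fin d) : coordTransition ψ ψ' k (ψ x).ofLp = ψ' x k := by
  rw [coordTransition, WithLp.toLp_ofLp, ψ.left_inv hx]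

theorem analyticAt_coordTransition [ChartedSpace (EuclideanSpace ℝ (Fin d)) M]
    {ψ ψ' : OpenPartialHomeomorph M (EuclideanSpace ℝ (Fin d))}
    (hψ : ψ ∈ IsManifold.maximalAtlas 𝓘(ℝ, EuclideanSpace ℝ (Fin d)) ω M)
    (hψ' : ψ' ∈ IsManifold.maximalAtlas 𝓘(ℝ, EuclideanSpace ℝ (Fin d)) ω M) {y : M}
    (hy : y ∈ ψ.source) (hy' : y ∈ ψ'.source) (k : Fin d) :
    AnalyticAt ℝ (coordTransition ψ ψ' k) (ψ y).ofLp := by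
  have analyticAt : ContDiffAt ℝ ω (fun u => ψ' (ψ.symm u)) (ψ y) := by
    have symm_at := (contMDiffOn_symm_of_mem_maximalAtlas hψ).contMDiffAt
      (ψ.open_target.mem_nhds (ψ.map_source hy))
    refine (ContMDiffAt.comp_of_eq ?_ symm_at (ψ.left_inv hy)).contDiffAt
    exact (contMDiffOn_of_mem_maximalAtlas hψ').contMDiffAt (ψ'.open_source.mem_nhds hy')
  have hcomp : ContDiffAt ℝ ω (fun v => ψ' (ψ.symm (WithLp.toLp 2 v))) (ψ y).ofLp :=
    ContDiffAt.comp (g := fun u => ψ' (ψ.symm u)) (ψ y).ofLp analyticAt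
      (EuclideanSpace.equiv (Fin d) ℝ).symm.contDiff.contDiffAt
  exact ((contDiffAt_piLp 2).1 hcomp k).analyticAt

end ChartTransitions

section ScaledCharts

variable {d : ℕ} {M : Type*} [PseudoMetricSpace M] [ChartedSpace (EuclideanSpace ℝ (Fin d)) M]

/-- A bound for the coefficients of every rescaled transition between bi-Lipschitz charts; `4` is
the product of the two bi-Lipschitz constants. -/
noncomputable def transitionBound (d : ℕ) : ℝ :=
  4 * (d * (4 * ‖(EuclideanSpace.equiv (Fin d) ℝ).symm.toContinuousLinearMap‖) + 2)

theorem norm_fderiv_coordTransition_le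
    {ψ ψ' : OpenPartialHomeomorph M (EuclideanSpace ℝ (Fin d))} {x x' y : M} {r r' : ℝ}
    (hψ : IsBilipschitzChart dist ψ x r) (hψ' : IsBilipschitzChart dist ψ' x' r')
    (hy : dist x y < r) (hy' : dist x' y < r') (k : Fin d) :
    ‖fderiv ℝ (coordTransition ψ ψ' k) (ψ y).ofLp‖ ≤
      4 * ‖(EuclideanSpace.equiv (Fin d) ℝ).symm.toContinuousLinearMap‖ := by
  set T := (EuclideanSpace.equiv (Fin d) ℝ).symm.toContinuousLinearMap
  have hys := hψ.mem_source y hy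
  have tendsto : Filter.Tendsto (fun v => ψ.symm (WithLp.toLp 2 v)) (nhds (ψ y).ofLp) (nhds y) := by
    have := (ψ.continuousAt_symm (ψ.map_source hys)).tendsto
    rw [ψ.left_inv hys] at this
    exact this.comp (T.continuous.tendsto _)
  have eventually_target : ∀ᶠ v in nhds (ψ y).ofLp, WithLp.toLp 2 v ∈ ψ.target :=
    T.continuous.continuousAt.eventually_mem (ψ.open_target.mem_nhds (ψ.map_source hys))
  have eventually_lt {z : M} {s : ℝ} (h : dist z y < s) : ∀ᶠ w in nhds y, dist z w < s :=
    (continuous_const.dist continuous_id).continuousAt.eventually_lt_const h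
  refine norm_fderiv_le_of_lip' ℝ (by positivity) ?_
  filter_upwards [tendsto.eventually (eventually_lt hy), tendsto.eventually (eventually_lt hy'),
    eventually_target] with v hv hv' htarget
  have outer := (hψ'.bilipschitz _ _ hv' hy').1
  have inner := (hψ.bilipschitz _ _ hv hy).2
  rw [ψ.right_inv htarget] at inner
  have hT : ‖WithLp.toLp 2 v - ψ y‖ ≤ ‖T‖ * ‖v - (ψ y).ofLp‖ := T.le_opNorm (v - (ψ y).ofLp)
  have coord := PiLp.norm_apply_le (p := 2) (ψ' (ψ.symm (WithLp.toLp 2 v)) - ψ' y) k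
  rw [coordTransition_ofLp hys]
  change ‖coordTransition ψ ψ' k v - ψ' y k‖ ≤ _ at coord
  linarith

theorem exists_hasExpansion_coordTransition
    {ψ ψ' : OpenPartialHomeomorph M (EuclideanSpace ℝ (Fin d))} {x x' y : M} {r r' : ℝ}
    (hψ : IsBilipschitzChart dist ψ x r) (hψ' : IsBilipschitzChart dist ψ' x' r')
    (hy : dist x y < r) (hy' : dist x' y < r') (k : Fin d) :
    ∃ ρ, 0 < ρ ∧ ∀ a, dist x a < r → 2 * dist a y ≤ ρ → ∀ τ, 0 < τ → τ ≤ ρ →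
      HasExpansion 4 (transitionBound d)
        (fun v => (coordTransition ψ ψ' k ((ψ a).ofLp + τ • v) - ψ' a k) / τ) := by
  obtain ⟨ρ, hρ, hexp⟩ := exists_hasExpansion_differenceQuotient
    (analyticAt_coordTransition hψ.mem_maximalAtlas hψ'.mem_maximalAtlas (hψ.mem_source y hy)
      (hψ'.mem_source y hy') k) (S := 4) (by norm_num)
  refine ⟨ρ, hρ, fun a ha hay τ hτ hτρ => ?_⟩
  rw [← coordTransition_ofLp (hψ.mem_source a ha)]
  refine (hexp (ψ a).ofLp (fun i => ?_) τ hτ hτρ).mono ?_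
  · have := PiLp.norm_apply_le (p := 2) (ψ a - ψ y) i
    exact this.trans ((hψ.bilipschitz a y ha hy).1.trans hay)
  · rw [transitionBound, Fintype.card_fin]
    gcongr 4 * (d * ?_ + 2)
    exact norm_fderiv_coordTransition_le hψ hψ' hy hy' k

theorem eventually_hasExpansion_coordTransition
    {ψ ψ' : OpenPartialHomeomorph M (EuclideanSpace ℝ (Fin d))} {x x' y : M} {r r' : ℝ}
    (hψ : IsBilipschitzChart dist ψ x r) (hψ' : IsBilipschitzChart dist ψ' x' r')
    (hy : dist x y < r) (hy' : dist x' y < r') :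
    ∀ᶠ t in nhdsWithin (0 : ℝ) (Set.Ioi 0), ∀ a, dist y a < t → ∀ τ, 0 < τ → τ ≤ t → ∀ k,
      HasExpansion 4 (transitionBound d)
        (fun v => (coordTransition ψ ψ' k ((ψ a).ofLp + τ • v) - ψ' a k) / τ) := by
  choose ρ hρ hexp using exists_hasExpansion_coordTransition hψ hψ' hy hy'
  have eventually_le : ∀ᶠ t in nhdsWithin (0 : ℝ) (Set.Ioi 0), ∀ k, 2 * t < ρ k :=
    Filter.eventually_all.2 fun k => nhdsWithin_le_nhds <|
      (continuous_const.mul continuous_id).continuousAt.eventually_lt_const (by simpa using hρ k)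
  filter_upwards [eventually_le, nhdsWithin_le_nhds (Iio_mem_nhds (sub_pos.2 hy))]
    with t ht htr a ha τ hτ hτt k
  rw [Set.mem_Iio] at htr
  refine hexp k a ?_ ?_ τ hτ (by linarith [ht k])
  · linarith [dist_triangle x y a]
  · rw [dist_comm]
    linarith [ht k]

theorem IsBilipschitzChart.eventually_mem_target
    {ψ : OpenPartialHomeomorph M (EuclideanSpace ℝ (Fin d))} {x y : M} {r : ℝ}
    (hψ : IsBilipschitzChart dist ψ x r) (hy : dist x y < r) :
    ∀ᶠ t in nhdsWithin (0 : ℝ) (Set.Ioi 0), ∀ a, dist y a < t → ∀ u, ‖u - ψ a‖ < 10 * t →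
      u ∈ ψ.target ∧ dist x (ψ.symm u) < r := by
  have hys := hψ.mem_source y hy
  have tendsto : Filter.Tendsto ψ.symm (nhds (ψ y)) (nhds y) := by
    have := (ψ.continuousAt_symm (ψ.map_source hys)).tendsto
    rwa [ψ.left_inv hys] at this
  have eventually_lt : ∀ᶠ w in nhds y, dist x w < r :=
    (continuous_const.dist continuous_id).continuousAt.eventually_lt_const hy
  obtain ⟨ρ, hρ, hball⟩ := Metric.eventually_nhds_iff.1
    (Filter.Eventually.and (ψ.open_target.mem_nhds (ψ.map_source hys))
      (tendsto.eventually eventually_lt))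
  filter_upwards [nhdsWithin_le_nhds (Iio_mem_nhds (show 0 < ρ / 12 by positivity)),
    nhdsWithin_le_nhds (Iio_mem_nhds (sub_pos.2 hy))] with t ht htr a ha u hu
  rw [Set.mem_Iio] at ht htr
  refine hball ?_
  have := (hψ.bilipschitz a y (by linarith [dist_triangle x y a]) hy).1
  rw [dist_comm a y] at this
  rw [dist_eq_norm]
  linarith [norm_sub_le_norm_sub_add_norm_sub u (ψ a) (ψ y)]

end ScaledCharts

section ScaledCharts

theorem exists_locallyFinite_center {M : Type*} [PseudoMetricSpace M] {r : M → ℝ}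
    (hr : ∀ x, 0 < r x) :
    ∃ p : M → M, ∀ y, ∃ F : Finset M, ∀ᶠ a in nhds y, p a ∈ F ∧ dist (p a) y < r (p a) := by
  obtain ⟨v, -, v_cover, v_locallyFinite, v_subset⟩ := precise_refinement
    (fun x => Metric.ball x (r x / 2)) (fun _ => Metric.isOpen_ball)
    (Set.iUnion_eq_univ_iff.2 fun x => ⟨x, Metric.mem_ball_self (half_pos (hr x))⟩)
  choose p hp using Set.iUnion_eq_univ_iff.1 v_cover
  refine ⟨p, fun y => ?_⟩
  obtain ⟨V, hV, finite⟩ := v_locallyFinite y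
  have eventually_near : ∀ᶠ a in nhds y, ∀ x ∈ finite.toFinset, dist a y < r x / 2 :=
    (Filter.eventually_all_finset _).2 fun x _ => Metric.ball_mem_nhds y (half_pos (hr x))
  refine ⟨finite.toFinset, ?_⟩
  filter_upwards [hV, eventually_near] with a ha hnear
  have mem : p a ∈ finite.toFinset := by simpa using ⟨a, hp a, ha⟩
  have := Metric.mem_ball'.1 (v_subset _ (hp a))
  exact ⟨mem, by linarith [dist_triangle (p a) a y, hnear _ mem]⟩

variable {d : ℕ} {M : Type*} [PseudoMetricSpace M]

/-- All geometric estimates hold on the ball of radius `t` about `y`, for the assignment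
`a ↦ chart a` of a chart to every point, with `chart a` restricted to `domain a`. -/
def IsControlledScale (chart : M → OpenPartialHomeomorph M (EuclideanSpace ℝ (Fin d)))
    (domain : M → Set M) (y : M) (t : ℝ) : Prop :=
  t ≤ 1 ∧ ∀ a, dist y a < t → (∀ z, dist y z < t → z ∈ domain a) ∧
    (∀ u, ‖u - chart a a‖ < 10 * t → u ∈ (chart a).target ∧ (chart a).symm u ∈ domain a) ∧
    ∀ c, dist y c < t → ∀ τ, 0 < τ → τ ≤ t → ∀ k, HasExpansion 4 (transitionBound d) fun v =>
      (coordTransition (chart a) (chart c) k ((chart a a).ofLp + τ • v) - chart c a k) / τ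

variable [ChartedSpace (EuclideanSpace ℝ (Fin d)) M]

theorem exists_isControlledScale {p : M → M} {r : M → ℝ}
    {ψ : M → OpenPartialHomeomorph M (EuclideanSpace ℝ (Fin d))}
    (hψ : ∀ x, IsBilipschitzChart dist (ψ x) x (r x)) {y : M} {F : Finset M}
    (hF : ∀ᶠ a in nhds y, p a ∈ F ∧ dist (p a) y < r (p a)) :
    ∃ t, 0 < t ∧
      IsControlledScale (fun a => ψ (p a)) (fun a => {z | dist (p a) z < r (p a)}) y t := by
  have eventually_domain (x : M) (hx : dist x y < r x) :
      ∀ᶠ t in nhdsWithin (0 : ℝ) (Set.Ioi 0), ∀ z, dist y z < t → dist x z < r x := by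
    filter_upwards [nhdsWithin_le_nhds (Iio_mem_nhds (sub_pos.2 hx))] with t ht z hz
    rw [Set.mem_Iio] at ht
    linarith [dist_triangle x y z]
  have eventually_controlled : ∀ᶠ t in nhdsWithin (0 : ℝ) (Set.Ioi 0), ∀ x ∈ F, dist x y < r x →
      (∀ z, dist y z < t → dist x z < r x) ∧
      (∀ a, dist y a < t → ∀ u, ‖u - ψ x a‖ < 10 * t →
        u ∈ (ψ x).target ∧ dist x ((ψ x).symm u) < r x) ∧
      ∀ x' ∈ F, dist x' y < r x' → ∀ a, dist y a < t → ∀ τ, 0 < τ → τ ≤ t → ∀ k,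
        HasExpansion 4 (transitionBound d) fun v =>
          (coordTransition (ψ x) (ψ x') k ((ψ x a).ofLp + τ • v) - ψ x' a k) / τ := by
    simp only [Filter.eventually_all_finset, Filter.eventually_imp_distrib_left,
      Filter.eventually_and]
    exact fun x _ hx => ⟨eventually_domain x hx, (hψ x).eventually_mem_target hx,
      fun x' _ hx' => eventually_hasExpansion_coordTransition (hψ x) (hψ x') hx hx'⟩
  obtain ⟨s, hs, hball⟩ := Metric.eventually_nhds_iff.1 hF
  have eventually_le : ∀ᶠ t in nhdsWithin (0 : ℝ) (Set.Ioi 0), t ≤ 1 :=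
    nhdsWithin_le_nhds (Iic_mem_nhds one_pos)
  have eventually_lt : ∀ᶠ t in nhdsWithin (0 : ℝ) (Set.Ioi 0), t < s :=
    nhdsWithin_le_nhds (Iio_mem_nhds hs)
  obtain ⟨t, ⟨⟨controlled, ht_one⟩, hts⟩, ht⟩ :=
    (((eventually_controlled.and eventually_le).and eventually_lt).and
      self_mem_nhdsWithin).exists
  have center_mem {a : M} (ha : dist y a < t) : p a ∈ F ∧ dist (p a) y < r (p a) :=
    hball (by rw [dist_comm]; exact ha.trans hts)
  refine ⟨t, ht, ht_one, fun a ha => ?_⟩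
  obtain ⟨domain, target, expansion⟩ := controlled _ (center_mem ha).1 (center_mem ha).2
  exact ⟨domain, target a ha, fun c hc => expansion _ (center_mem hc).1 (center_mem hc).2 a ha⟩

variable (d M) in
/-- A choice of a bi-Lipschitz analytic chart and of a `1 / 100`-Lipschitz scale at every point,
such that charts at points within `50` scales of each other are uniformly comparable. -/
structure ScaledCharts where
  chart : M → OpenPartialHomeomorph M (EuclideanSpace ℝ (Fin d))
  domain : M → Set M
  scale : M → ℝ
  mem_maximalAtlas : ∀ a, chart a ∈ IsManifold.maximalAtlas 𝓘(ℝ, EuclideanSpace ℝ (Fin d)) ω M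
  isOpen_domain : ∀ a, IsOpen (domain a)
  domain_subset_source : ∀ a, domain a ⊆ (chart a).source
  bilipschitz : ∀ {a x z}, x ∈ domain a → z ∈ domain a →
    ‖chart a x - chart a z‖ ≤ 2 * dist x z ∧ dist x z ≤ 2 * ‖chart a x - chart a z‖
  scale_pos : ∀ a, 0 < scale a
  scale_sub_le : ∀ a b, scale a - scale b ≤ dist a b / 100
  mem_domain : ∀ {a c z}, dist c a < 50 * scale a → dist z a < 50 * scale a → z ∈ domain c
  mem_target : ∀ {a u}, ‖u - chart a a‖ < 100 * scale a →
    u ∈ (chart a).target ∧ (chart a).symm u ∈ domain a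
  hasExpansion : ∀ {a c}, dist c a < 50 * scale a → ∀ k,
    HasExpansion 4 (transitionBound d) fun v =>
      (coordTransition (chart a) (chart c) k ((chart a a).ofLp + scale a • v) - chart c a k) /
        scale a

theorem nonempty_scaledCharts
    (h : ∀ x : M, ∃ (ψ : OpenPartialHomeomorph M (EuclideanSpace ℝ (Fin d))) (r : ℝ),
      IsBilipschitzChart dist ψ x r) :
    Nonempty (ScaledCharts d M) := by
  choose ψ r hψ using h
  obtain ⟨p, hp⟩ := exists_locallyFinite_center fun x => (hψ x).pos
  obtain ⟨τ, hτ, hτ_lip, controlled⟩ := exists_scale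
    (fun y => (hp y).elim fun _ => exists_isControlledScale hψ) fun _ _ ht => ht.1
  exact ⟨{
    chart := fun a => ψ (p a)
    domain := fun a => {z | dist (p a) z < r (p a)}
    scale := τ
    mem_maximalAtlas := fun a => (hψ _).mem_maximalAtlas
    isOpen_domain := fun a => isOpen_lt (by fun_prop) continuous_const
    domain_subset_source := fun a => (hψ _).mem_source
    bilipschitz := fun {a x z} => (hψ (p a)).bilipschitz x z
    scale_pos := hτ
    scale_sub_le := hτ_lip
    mem_domain := fun {a c z} hc hz => by
      obtain ⟨y, t, good, hyt⟩ := controlled a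
      rw [dist_comm] at hc hz
      exact (good.2 c (by linarith [dist_triangle y a c])).1 z (by linarith [dist_triangle y a z])
    mem_target := fun {a u} hu => by
      obtain ⟨y, t, good, hyt⟩ := controlled a
      have := hτ a
      have := dist_nonneg (x := y) (y := a)
      exact (good.2 a (by linarith)).2.1 u (by linarith)
    hasExpansion := fun {a c} hc k => by
      obtain ⟨y, t, good, hyt⟩ := controlled a
      have := hτ a
      have := dist_nonneg (x := y) (y := a)
      rw [dist_comm] at hc
      exact (good.2 a (by linarith)).2.2 c (by linarith [dist_triangle y a c]) (τ a) (hτ a)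
        (by linarith) k }⟩

end ScaledCharts

namespace ScaledCharts

variable {d : ℕ} {M : Type*} [PseudoMetricSpace M] [ChartedSpace (EuclideanSpace ℝ (Fin d)) M]
  (S : ScaledCharts d M)

/-- The chart at `a`, translated to send `a` to `0` and rescaled to unit size. -/
noncomputable def rescaledChart (a : M) : OpenPartialHomeomorph M (EuclideanSpace ℝ (Fin d)) :=
  (S.chart a).transHomeomorph <| (Homeomorph.subRight (S.chart a a)).trans <|
    Homeomorph.smulOfNeZero (S.scale a)⁻¹ (inv_ne_zero (S.scale_pos a).ne')

theorem rescaledChart_apply (a x : M) :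
    S.rescaledChart a x = (S.scale a)⁻¹ • (S.chart a x - S.chart a a) :=
  rfl

theorem rescaledChart_symm_apply (a : M) (u : EuclideanSpace ℝ (Fin d)) :
    (S.rescaledChart a).symm u = (S.chart a).symm (S.scale a • u + S.chart a a) := by
  change (S.chart a).symm ((S.scale a)⁻¹⁻¹ • u + S.chart a a) = _
  rw [inv_inv]

theorem mem_rescaledChart_target {a : M} {u : EuclideanSpace ℝ (Fin d)} :
    u ∈ (S.rescaledChart a).target ↔ S.scale a • u + S.chart a a ∈ (S.chart a).target := by
  change (S.scale a)⁻¹⁻¹ • u + S.chart a a ∈ (S.chart a).target ↔ _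
  rw [inv_inv]

theorem rescaledChart_mem_maximalAtlas (a : M) :
    S.rescaledChart a ∈ IsManifold.maximalAtlas 𝓘(ℝ, EuclideanSpace ℝ (Fin d)) ω M := by
  refine transHomeomorph_mem_maximalAtlas (S.mem_maximalAtlas a) ?_ ?_
  · change ContDiff ℝ ω fun u => (S.scale a)⁻¹ • (u - S.chart a a)
    fun_prop
  · change ContDiff ℝ ω fun u => (S.scale a)⁻¹⁻¹ • u + S.chart a a
    fun_prop

theorem norm_rescaledChart (a x : M) :
    ‖S.rescaledChart a x‖ = ‖S.chart a x - S.chart a a‖ / S.scale a := by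
  rw [rescaledChart_apply, norm_smul, norm_inv, Real.norm_of_nonneg (S.scale_pos a).le,
    inv_mul_eq_div]

/-- The points which the rescaled chart at `a` sends into the ball of radius `2`. -/
def ball (a : M) : Set M :=
  {x ∈ S.domain a | ‖S.rescaledChart a x‖ < 2}

theorem mem_domain_self (a : M) : a ∈ S.domain a := by
  have := S.scale_pos a
  exact S.mem_domain (a := a) (by simpa) (by simpa)

theorem isOpen_ball (a : M) : IsOpen (S.ball a) :=
  ContinuousOn.isOpen_inter_preimage (t := {u : EuclideanSpace ℝ (Fin d) | ‖u‖ < 2})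
    ((S.rescaledChart a).continuousOn.mono (S.domain_subset_source a)) (S.isOpen_domain a)
    (isOpen_lt continuous_norm continuous_const)

theorem dist_lt_of_mem_ball {a x : M} (hx : x ∈ S.ball a) : dist x a < 4 * S.scale a := by
  have norm_lt := hx.2
  rw [norm_rescaledChart, div_lt_iff₀ (S.scale_pos a)] at norm_lt
  linarith [(S.bilipschitz hx.1 (S.mem_domain_self a)).2]

theorem smul_add_mem_target {a : M} {u : EuclideanSpace ℝ (Fin d)} (hu : ‖u‖ ≤ 2) :
    S.scale a • u + S.chart a a ∈ (S.chart a).target ∧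
      (S.chart a).symm (S.scale a • u + S.chart a a) ∈ S.domain a := by
  have := S.scale_pos a
  refine S.mem_target ?_
  rw [add_sub_cancel_right, norm_smul, Real.norm_of_nonneg this.le]
  nlinarith

theorem symm_mem_ball {a : M} {u : EuclideanSpace ℝ (Fin d)} (hu : ‖u‖ < 2) :
    (S.rescaledChart a).symm u ∈ S.ball a := by
  obtain ⟨target, domain⟩ := S.smul_add_mem_target (a := a) hu.le
  refine ⟨by rwa [rescaledChart_symm_apply], ?_⟩
  rwa [(S.rescaledChart a).right_inv (S.mem_rescaledChart_target.2 target)]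

theorem mem_ball_of_dist_lt {a x : M} (h : dist a x < S.scale a / 5) :
    x ∈ S.ball a ∧ ‖S.rescaledChart a x‖ ≤ 1 / 2 := by
  have scale_pos := S.scale_pos a
  rw [dist_comm] at h
  have domain : x ∈ S.domain a := S.mem_domain (a := a) (by simpa) (by linarith)
  have norm_le : ‖S.rescaledChart a x‖ ≤ 1 / 2 := by
    rw [norm_rescaledChart, div_le_iff₀ scale_pos]
    linarith [(S.bilipschitz domain (S.mem_domain_self a)).1]
  exact ⟨⟨domain, by linarith⟩, norm_le⟩

/-- The points that are close to `a` at both scales. -/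
def neighbors (a : M) : Set M :=
  {c | dist a c < 10 * S.scale a ∧ dist a c < 10 * S.scale c}

variable {S}

theorem mem_neighbors_comm {a c : M} : c ∈ S.neighbors a ↔ a ∈ S.neighbors c := by
  simp only [neighbors, Set.mem_ofPred_eq, dist_comm a c, and_comm]

theorem scale_comparable {a c : M} (h : c ∈ S.neighbors a) :
    S.scale a < 2 * S.scale c ∧ 9 / 10 * S.scale a ≤ S.scale c := by
  have := S.scale_sub_le a c
  have := S.scale_pos a
  constructor <;> linarith [h.1, h.2]

theorem mem_domain_of_mem_neighbors {a c x : M} (h : c ∈ S.neighbors a)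
    (hx : dist x a < 50 * S.scale a) : x ∈ S.domain c := by
  refine S.mem_domain (a := a) ?_ hx
  rw [dist_comm]
  linarith [h.1, S.scale_pos a]

theorem mem_neighbors_of_mem_ball {a c x : M} (ha : x ∈ S.ball a) (hc : x ∈ S.ball c) :
    c ∈ S.neighbors a := by
  have hxa := S.dist_lt_of_mem_ball ha
  have hxc := S.dist_lt_of_mem_ball hc
  have triangle := dist_triangle_left a c x
  have hac := S.scale_sub_le a c
  have hca := S.scale_sub_le c a
  rw [dist_comm c a] at hca
  constructor <;> linarith

theorem mem_ball_of_norm_lt {a c x : M} (hx : x ∈ S.ball a) (hc : c ∈ S.neighbors a)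
    (h : ‖S.rescaledChart c x‖ < 2) : x ∈ S.ball c :=
  ⟨mem_domain_of_mem_neighbors hc (by linarith [S.dist_lt_of_mem_ball hx, S.scale_pos a]), h⟩

variable (S) in
/-- Transition from the rescaled chart at `a` to the one at `c`, on plain tuples. -/
noncomputable def transition (a c : M) (v : Fin d → ℝ) : Fin d → ℝ :=
  (S.rescaledChart c ((S.rescaledChart a).symm (WithLp.toLp 2 v))).ofLp

theorem transition_ofLp {a x : M} (c : M) (hx : x ∈ S.ball a) :
    S.transition a c (S.rescaledChart a x).ofLp = (S.rescaledChart c x).ofLp := by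
  rw [transition, WithLp.toLp_ofLp, (S.rescaledChart a).left_inv (S.domain_subset_source a hx.1)]

theorem transition_apply (a c : M) (v : Fin d → ℝ) (l : Fin d) :
    S.transition a c v l = S.scale a / S.scale c *
        ((coordTransition (S.chart a) (S.chart c) l ((S.chart a a).ofLp + S.scale a • v) -
          S.chart c a l) / S.scale a) +
      (S.chart c a - S.chart c c) l / S.scale c := by
  have := S.scale_pos a
  have := S.scale_pos c
  have hcoord : S.transition a c v l = (S.scale c)⁻¹ *
      (coordTransition (S.chart a) (S.chart c) l ((S.chart a a).ofLp + S.scale a • v) -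
        S.chart c c l) := by
    rw [transition, rescaledChart_symm_apply, add_comm (S.scale a • _)]
    rfl
  rw [hcoord, PiLp.sub_apply]
  field_simp
  ring

theorem hasExpansion_transition {a c : M} (hc : c ∈ S.neighbors a) (l : Fin d) :
    HasExpansion 4 (2 * transitionBound d + 20) fun v => S.transition a c v l := by
  have ha_pos := S.scale_pos a
  have hc_pos := S.scale_pos c
  have ratio_le : |S.scale a / S.scale c| ≤ 2 := by
    rw [abs_of_pos (by positivity), div_le_iff₀ hc_pos]
    exact (scale_comparable hc).1.le
  have translation_le : |(S.chart c a - S.chart c c) l / S.scale c| ≤ 20 := by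
    rw [abs_div, abs_of_pos hc_pos, div_le_iff₀ hc_pos]
    have coord_le := PiLp.norm_apply_le (p := 2) (S.chart c a - S.chart c c) l
    have mem_domain : a ∈ S.domain c := mem_domain_of_mem_neighbors hc (by simpa)
    have := (S.bilipschitz mem_domain (S.mem_domain_self c)).1
    rw [Real.norm_eq_abs] at coord_le
    linarith [hc.2]
  have hdist : dist c a < 50 * S.scale a := by
    rw [dist_comm]
    linarith [hc.1]
  have expansion := S.hasExpansion hdist l
  have bound_nonneg := expansion.nonneg (by norm_num)
  refine HasExpansion.congr (.mono (.add (by norm_num) (.const_mul (by norm_num) _ expansion)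
    (.const (by norm_num) _)) ?_) fun v _ => transition_apply a c v l
  gcongr

theorem exists_card_neighbors_le (S : ScaledCharts d M) {N : Set M}
    (hN : IsScaleSeparated S.scale N) :
    ∃ m : ℕ, ∀ a, ∃ h : {c : N | ↑c ∈ S.neighbors a}.Finite, h.toFinset.card ≤ m := by
  obtain ⟨m, hm⟩ := exists_card_le_of_separated (E := EuclideanSpace ℝ (Fin d)) (α := N)
    20 (ε := 9 / 100) (by norm_num)
  refine ⟨m, fun a => ?_⟩
  have ha_pos := S.scale_pos a
  have mem_domain {z : M} (hz : z ∈ S.neighbors a) : z ∈ S.domain a :=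
    S.mem_domain (a := a) (by simpa) (by rw [dist_comm]; linarith [hz.1])
  refine hm (u := fun c => S.rescaledChart a c) (fun c hc => ?_) fun c hc c' hc' hne => ?_
  · rw [norm_rescaledChart, div_le_iff₀ ha_pos]
    have := (S.bilipschitz (mem_domain hc) (S.mem_domain_self a)).1
    rw [dist_comm] at this
    linarith [hc.1]
  · have hdiff : S.rescaledChart a c - S.rescaledChart a c' =
        (S.scale a)⁻¹ • (S.chart a c - S.chart a c') := by
      rw [rescaledChart_apply, rescaledChart_apply, ← smul_sub, sub_sub_sub_cancel_right]
    change 9 / 100 ≤ ‖S.rescaledChart a c - S.rescaledChart a c'‖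
    rw [hdiff, norm_smul, norm_inv, Real.norm_of_nonneg ha_pos.le, le_inv_mul_iff₀ ha_pos]
    have separated : min (S.scale c) (S.scale c') / 5 ≤ dist (c : M) c' :=
      hN c.2 c'.2 (Subtype.coe_ne_coe.2 hne)
    have := le_min (scale_comparable hc).2 (scale_comparable hc').2
    linarith [(S.bilipschitz (mem_domain hc) (mem_domain hc')).2]

end ScaledCharts

/-! ### Analytic atlases of bounded geometry -/

/-- A uniform atlas whose coordinates come from charts of the analytic structure. -/
structure AnalyticAtlas (d : ℕ) (M ι : Type*) [TopologicalSpace M]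
    [ChartedSpace (EuclideanSpace ℝ (Fin d)) M] extends UniformAtlas d M ι where
  chart : ι → OpenPartialHomeomorph M (EuclideanSpace ℝ (Fin d))
  mem_maximalAtlas : ∀ a, chart a ∈ IsManifold.maximalAtlas 𝓘(ℝ, EuclideanSpace ℝ (Fin d)) ω M
  chart_eq : ∀ a x, chart a x = WithLp.toLp 2 (coord a x)
  ball_subset_source : ∀ a, ball a ⊆ (chart a).source
  mem_target : ∀ {a u}, ‖u‖ ≤ 2 → u ∈ (chart a).target
  isOpen_ball : ∀ a, IsOpen (ball a)
  mem_nbr_comm : ∀ {a c}, c ∈ nbr a ↔ a ∈ nbr c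

theorem sum_sq_lt_four_iff_norm_lt_two {d : ℕ} {u : EuclideanSpace ℝ (Fin d)} :
    ∑ i, u i ^ 2 < 4 ↔ ‖u‖ < 2 := by
  rw [← EuclideanSpace.real_norm_sq_eq, show (4 : ℝ) = 2 ^ 2 by norm_num]
  exact pow_lt_pow_iff_left₀ (norm_nonneg u) zero_le_two two_ne_zero

theorem ScaledCharts.nonempty_analyticAtlas {d : ℕ} {M : Type*} [PseudoMetricSpace M]
    [ChartedSpace (EuclideanSpace ℝ (Fin d)) M] (S : ScaledCharts d M) {N : Set M}
    (separated : IsScaleSeparated S.scale N) (dense : ∀ x, ∃ a ∈ N, dist a x < S.scale a / 5) :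
    Nonempty (AnalyticAtlas d M N) := by
  obtain ⟨m, hm⟩ := S.exists_card_neighbors_le separated
  choose finite card_le using hm
  exact ⟨{
    coord := fun a x => (S.rescaledChart a x).ofLp
    ball := fun a => S.ball a
    nbr := fun a => (finite a).toFinset
    trans := fun a c => S.transition a c
    maxNbr := m
    bound := 2 * transitionBound d + 20
    four_le_bound := by
      have : 0 ≤ transitionBound d := by unfold transitionBound; positivity
      linarith
    card_nbr_le := fun a => card_le a
    mem_nbr := fun ha hc => (finite _).mem_toFinset.2 (mem_neighbors_of_mem_ball ha hc)
    sum_sq_lt := fun hx => sum_sq_lt_four_iff_norm_lt_two.2 hx.2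
    exists_coord_eq := fun a y hy => by
      have hy' : ‖WithLp.toLp 2 y‖ < 2 := sum_sq_lt_four_iff_norm_lt_two.1 hy
      refine ⟨_, S.symm_mem_ball (a := a) hy', ?_⟩
      rw [(S.rescaledChart a).right_inv
        (S.mem_rescaledChart_target.2 (S.smul_add_mem_target hy'.le).1)]
    trans_expansion := fun hc => hasExpansion_transition ((finite _).mem_toFinset.1 hc)
    trans_coord := fun hx _ => transition_ofLp _ hx
    mem_ball := fun hx hc h => mem_ball_of_norm_lt hx ((finite _).mem_toFinset.1 hc)
      (sum_sq_lt_four_iff_norm_lt_two.1 h)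
    exists_sum_sq_le := fun x => by
      obtain ⟨a, ha, hax⟩ := dense x
      obtain ⟨mem_ball, norm_le⟩ := S.mem_ball_of_dist_lt hax
      refine ⟨⟨a, ha⟩, mem_ball, ?_⟩
      rw [← EuclideanSpace.real_norm_sq_eq]
      nlinarith [norm_nonneg (S.rescaledChart a x)]
    chart := fun a => S.rescaledChart a
    mem_maximalAtlas := fun a => S.rescaledChart_mem_maximalAtlas a
    chart_eq := fun _ _ => rfl
    ball_subset_source := fun a => (Set.sep_subset _ _).trans (S.domain_subset_source a)
    mem_target := fun hu => S.mem_rescaledChart_target.2 (S.smul_add_mem_target hu).1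
    isOpen_ball := fun a => S.isOpen_ball a
    mem_nbr_comm := fun {a c} => by
      rw [(finite a).mem_toFinset, (finite c).mem_toFinset]
      exact mem_neighbors_comm }⟩

theorem exists_analyticAtlas (d : ℕ) (M : Type*) [TopologicalSpace M] [T2Space M]
    [SecondCountableTopology M] [ChartedSpace (EuclideanSpace ℝ (Fin d)) M]
    [IsManifold 𝓘(ℝ, EuclideanSpace ℝ (Fin d)) ω M] :
    ∃ N : Set M, N.Countable ∧ Nonempty (AnalyticAtlas d M N) := by
  classical
  have : IsManifold 𝓘(ℝ, EuclideanSpace ℝ (Fin d)) ∞ M := .of_le (n := ω) le_top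
  have : LocallyCompactSpace M := ChartedSpace.locallyCompactSpace (EuclideanSpace ℝ (Fin d)) M
  obtain ⟨ι, f, -⟩ := SmoothBumpCovering.exists_isSubordinate 𝓘(ℝ, EuclideanSpace ℝ (Fin d))
    (s := (Set.univ : Set M)) isClosed_univ (U := fun _ => Set.univ) fun _ _ => Filter.univ_mem
  let : MetricSpace M := (isEmbedding_bumpEmbedding f).comapMetricSpace _
  obtain ⟨S⟩ := nonempty_scaledCharts (d := d) (M := M) (exists_isBilipschitzChart_bumpEmbedding f)
  obtain ⟨N, separated, dense⟩ := exists_isScaleSeparated_dist_lt S.scale_pos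
  exact ⟨N, separated.countable S.scale_pos S.scale_sub_le,
    S.nonempty_analyticAtlas separated dense⟩

/-! ### Analytic dependence of integrals on a parameter -/

section ParametricIntegral

open MeasureTheory

theorem wordMonomial_sumElim {κ κ' : Type*} (w : List (κ ⊕ κ')) (u : κ → ℝ) (y : κ' → ℝ) :
    wordMonomial w (Sum.elim u y) =
      wordMonomial (w.filterMap Sum.getLeft?) u * wordMonomial (w.filterMap Sum.getRight?) y := by
  induction w with
  | nil => simp [wordMonomial_nil]
  | cons i w ih =>
    cases i with
    | inl i =>
      simp only [wordMonomial_cons, List.filterMap_cons, Sum.getLeft?_inl, Sum.getRight?_inl,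
        Sum.elim_inl, ih, mul_assoc]
    | inr i =>
      simp only [wordMonomial_cons, List.filterMap_cons, Sum.getLeft?_inr, Sum.getRight?_inr,
        Sum.elim_inr, ih, mul_left_comm]

theorem length_filterMap_getLeft?_add {κ κ' : Type*} (w : List (κ ⊕ κ')) :
    (w.filterMap Sum.getLeft?).length + (w.filterMap Sum.getRight?).length = w.length := by
  induction w with
  | nil => rfl
  | cons i w ih =>
    cases i <;>
    simp only [List.filterMap_cons, Sum.getLeft?_inl, Sum.getRight?_inl, Sum.getLeft?_inr,
      Sum.getRight?_inr, List.length_cons, ← ih] <;> lia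

variable {A : Type*} [MeasurableSpace A] (μ : Measure A) [IsFiniteMeasure μ]

theorem measurable_wordMonomial {κ : Type*} {U : A → κ → ℝ} (hU : ∀ i, Measurable fun a => U a i)
    (w : List κ) : Measurable fun a => wordMonomial w (U a) := by
  induction w with
  | nil => simp only [wordMonomial_nil, measurable_const]
  | cons i w ih =>
    simp only [wordMonomial_cons]
    exact (hU i).mul ih

theorem HasExpansion.integral {κ κ' : Type*} [Countable κ] [Countable κ'] {R B : ℝ} (hR : 0 ≤ R)
    {F : (κ ⊕ κ' → ℝ) → ℝ} (hF : HasExpansion R B F) {U : A → κ → ℝ}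
    (hU : ∀ i, Measurable fun a => U a i) (hUR : ∀ a i, |U a i| ≤ R) :
    HasExpansion R (B * μ.real Set.univ) (fun y => ∫ a, F (Sum.elim (U a) y) ∂μ) := by
  obtain ⟨c, hc, hB, hF⟩ := hF
  have term_le (w : List (κ ⊕ κ')) {y : κ' → ℝ} (hy : ∀ i, |y i| ≤ R) (a : A) :
      ‖c w * wordMonomial w (Sum.elim (U a) y)‖ ≤ |c w| * R ^ w.length :=
    abs_mul_wordMonomial_le _ w (Sum.rec (hUR a) hy)
  have moment_le (w : List (κ ⊕ κ')) : |∫ a, wordMonomial (w.filterMap Sum.getLeft?) (U a) ∂μ| ≤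
      R ^ (w.filterMap Sum.getLeft?).length * μ.real Set.univ :=
    norm_integral_le_of_norm_le_const (G := ℝ)
      (.of_forall fun a => abs_wordMonomial_le _ (hUR a))
  have coeff_le (w : List (κ ⊕ κ')) :
      |c w * ∫ a, wordMonomial (w.filterMap Sum.getLeft?) (U a) ∂μ| *
        R ^ (w.filterMap Sum.getRight?).length ≤ |c w| * R ^ w.length * μ.real Set.univ := by
    have := mul_le_mul_of_nonneg_right (moment_le w)
      (pow_nonneg hR (w.filterMap Sum.getRight?).length)
    rw [mul_right_comm, ← pow_add, length_filterMap_getLeft?_add] at this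
    rw [abs_mul, mul_assoc, mul_assoc]
    gcongr
  have summable_coeff := (hc.mul_right (μ.real Set.univ)).of_nonneg_of_le
    (fun w => by positivity) coeff_le
  refine HasExpansion.of_series hR summable_coeff ?_ fun y hy => ?_
  · refine (summable_coeff.tsum_le_tsum coeff_le (hc.mul_right _)).trans ?_
    rw [tsum_mul_right]
    gcongr
  · have abs_le (a : A) : ∀ i, |Sum.elim (U a) y i| ≤ R := Sum.rec (hUR a) hy
    have measurable_elim (i : κ ⊕ κ') : Measurable fun a => Sum.elim (U a) y i :=
      i.rec hU fun _ => measurable_const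
    have integrable_term (w : List (κ ⊕ κ')) :
        Integrable (fun a => c w * wordMonomial w (Sum.elim (U a) y)) μ :=
      (integrable_const (|c w| * R ^ w.length)).mono'
        ((measurable_wordMonomial measurable_elim w).const_mul _).aestronglyMeasurable
        (.of_forall (term_le w hy))
    have summable_norm : Summable fun w => ∫ a, ‖c w * wordMonomial w (Sum.elim (U a) y)‖ ∂μ := by
      refine (hc.mul_right (μ.real Set.univ)).of_nonneg_of_le
        (fun w => integral_nonneg fun a => norm_nonneg _) fun w => ?_
      rw [mul_comm, ← smul_eq_mul, ← integral_const]
      exact integral_mono (integrable_term w).norm (integrable_const _) (term_le w hy)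
    simp only [fun a => hF _ (abs_le a)]
    rw [← integral_tsum_of_summable_integral_norm integrable_term summable_norm]
    refine tsum_congr fun w => ?_
    simp only [wordMonomial_sumElim, integral_const_mul, integral_mul_const, mul_assoc]

variable {E₁ E₂ : Type*} [NormedAddCommGroup E₁] [NormedSpace ℝ E₁] [FiniteDimensional ℝ E₁]
  [NormedAddCommGroup E₂] [NormedSpace ℝ E₂] [FiniteDimensional ℝ E₂]

theorem exists_isOpen_analyticAt_integral [MeasurableSpace E₁] [BorelSpace E₁]
    {F : E₁ × E₂ → ℝ} {u₀ : E₁} {y₀ : E₂} (hF : AnalyticAt ℝ F (u₀, y₀)) :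
    ∃ W, IsOpen W ∧ u₀ ∈ W ∧ ∀ (μ : Measure A) [IsFiniteMeasure μ] (U : A → E₁), Measurable U →
      (∀ a, U a ∈ W) → AnalyticAt ℝ (fun y => ∫ a, F (U a, y) ∂μ) y₀ := by
  obtain ⟨m, ⟨e₁⟩⟩ : ∃ m, Nonempty (E₁ ≃L[ℝ] (Fin m → ℝ)) :=
    ⟨_, ⟨(Module.finBasis ℝ E₁).equivFunL⟩⟩
  obtain ⟨n, ⟨e₂⟩⟩ : ∃ n, Nonempty (E₂ ≃L[ℝ] (Fin n → ℝ)) :=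
    ⟨_, ⟨(Module.finBasis ℝ E₂).equivFunL⟩⟩
  let shift (v : Fin m ⊕ Fin n → ℝ) : E₁ × E₂ :=
    (u₀ + e₁.symm (v ∘ Sum.inl), y₀ + e₂.symm (v ∘ Sum.inr))
  have shift_zero : shift 0 = (u₀, y₀) := by simp [shift, Pi.zero_comp]
  have analyticAt_shift : AnalyticAt ℝ shift 0 := by
    refine (analyticAt_const.add ?_).prod (analyticAt_const.add ?_)
    · exact (e₁.symm.toContinuousLinearMap ∘L (LinearMap.funLeft ℝ ℝ
        (Sum.inl : _ → Fin m ⊕ Fin n)).toContinuousLinearMap).analyticAt _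
    · exact (e₂.symm.toContinuousLinearMap ∘L (LinearMap.funLeft ℝ ℝ
        (Sum.inr : _ → Fin m ⊕ Fin n)).toContinuousLinearMap).analyticAt _
  obtain ⟨p, hp⟩ := AnalyticAt.fun_comp (x := 0) (shift_zero ▸ hF) analyticAt_shift
  obtain ⟨R, B, hR, -, expansion_le⟩ := exists_hasExpansion_sub_partialSum hp 0
  have expansion : HasExpansion R (B * R ^ 0) (F ∘ shift) :=
    (expansion_le R hR.le le_rfl).congr fun v _ => by
      simp [FormalMultilinearSeries.partialSum]
  refine ⟨{u | ∀ i, |e₁ (u - u₀) i| < R}, ?_, fun i => by simpa, fun μ _ U hU hUW => ?_⟩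
  · simp only [Set.ofPred_forall]
    exact isOpen_iInter_of_finite fun i => isOpen_lt (by fun_prop) continuous_const
  have measurable_coord (i) : Measurable fun a => e₁ (U a - u₀) i :=
    ((by fun_prop : Continuous fun u => e₁ (u - u₀) i).measurable).comp hU
  have analyticAt_integral :=
    (expansion.integral μ hR.le measurable_coord fun a i => (hUW a i).le).analyticAt hR
  have analyticAt_coord : AnalyticAt ℝ (fun y => e₂ (y - y₀)) y₀ :=
    (e₂.toContinuousLinearMap.analyticAt _).comp (analyticAt_id.sub analyticAt_const)
  refine (AnalyticAt.fun_comp (by simpa using analyticAt_integral) analyticAt_coord).congr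
    (.of_forall fun y => ?_)
  simp [shift, Sum.elim_comp_inl, Sum.elim_comp_inr]

variable {G M : Type*} [TopologicalSpace G] [ChartedSpace E₁ G] [IsManifold 𝓘(ℝ, E₁) ω G]
  [TopologicalSpace M] [ChartedSpace E₂ M] [IsManifold 𝓘(ℝ, E₂) ω M] [MeasurableSpace G]
  [BorelSpace G] (ν : Measure G) [IsFiniteMeasure ν] {f : G × M → ℝ}

theorem exists_isOpen_contMDiffAt_setIntegral
    (hf : ContMDiff (𝓘(ℝ, E₁).prod 𝓘(ℝ, E₂)) 𝓘(ℝ, ℝ) ω f) (g₀ : G) (x₀ : M) :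
    ∃ W, IsOpen W ∧ g₀ ∈ W ∧ ∀ A ⊆ W, MeasurableSet A →
      ContMDiffAt 𝓘(ℝ, E₂) 𝓘(ℝ, ℝ) ω (fun x => ∫ g in A, f (g, x) ∂ν) x₀ := by
  classical
  borelize E₁
  let χ := chartAt E₁ g₀
  let ψ := chartAt E₂ x₀
  have hχ : ContMDiffAt 𝓘(ℝ, E₁) 𝓘(ℝ, E₁) ω χ.symm (χ g₀) :=
    (contMDiffOn_chart_symm (I := 𝓘(ℝ, E₁))).contMDiffAt (chart_target_mem_nhds E₁ g₀)
  have hψ : ContMDiffAt 𝓘(ℝ, E₂) 𝓘(ℝ, E₂) ω ψ.symm (ψ x₀) :=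
    (contMDiffOn_chart_symm (I := 𝓘(ℝ, E₂))).contMDiffAt (chart_target_mem_nhds E₂ x₀)
  have analyticAt_chart : AnalyticAt ℝ (fun p : E₁ × E₂ => f (χ.symm p.1, ψ.symm p.2))
      (χ g₀, ψ x₀) :=
    (hf.contMDiffAt.comp _ ((hχ.comp (χ g₀, ψ x₀) contDiff_fst.contMDiff.contMDiffAt).prodMk
      (hψ.comp (χ g₀, ψ x₀) contDiff_snd.contMDiff.contMDiffAt))).contDiffAt.analyticAt
  obtain ⟨W, isOpen_W, mem_W, hW⟩ := exists_isOpen_analyticAt_integral (A := G) analyticAt_chart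
  refine ⟨χ.source ∩ χ ⁻¹' W, χ.isOpen_inter_preimage isOpen_W,
    ⟨mem_chart_source E₁ g₀, mem_W⟩, fun A hAW hA => ?_⟩
  let U : G → E₁ := A.piecewise χ fun _ => χ g₀
  have measurable_U : Measurable U :=
    (χ.continuousOn.mono fun g hg => (hAW hg).1).measurable_piecewise continuousOn_const hA
  have mem_U (g : G) : U g ∈ W := by
    by_cases hg : g ∈ A
    · rw [show U g = χ g from Set.piecewise_eq_of_mem _ _ _ hg]
      exact (hAW hg).2
    · simpa only [U, Set.piecewise_eq_of_notMem _ _ _ hg] using mem_W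
  have contMDiffAt_integral := (hW (ν.restrict A) U measurable_U mem_U).contDiffAt (n := ω)
    |>.contMDiffAt.comp x₀ ((contMDiffOn_chart (I := 𝓘(ℝ, E₂))).contMDiffAt
      (chart_source_mem_nhds E₂ x₀))
  refine contMDiffAt_integral.congr_of_eventuallyEq ?_
  filter_upwards [chart_source_mem_nhds E₂ x₀] with x hx
  refine setIntegral_congr_fun hA fun g hg => ?_
  simp only [U, Set.piecewise_eq_of_mem _ _ _ hg]
  rw [χ.left_inv (hAW hg).1, ψ.left_inv hx]

theorem contMDiff_integral_of_compactSpace [CompactSpace G]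
    (hf : ContMDiff (𝓘(ℝ, E₁).prod 𝓘(ℝ, E₂)) 𝓘(ℝ, ℝ) ω f) :
    ContMDiff 𝓘(ℝ, E₂) 𝓘(ℝ, ℝ) ω (fun x => ∫ g, f (g, x) ∂ν) := by
  intro x₀
  have integrable (x : M) : Integrable (fun g => f (g, x)) ν :=
    (hf.continuous.comp (Continuous.prodMk_left x)).integrable_of_hasCompactSupport
      (HasCompactSupport.of_compactSpace _)
  let IsGood (s : Set G) : Prop := ∃ t, MeasurableSet t ∧ s ⊆ t ∧ ∀ A ⊆ t, MeasurableSet A →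
    ContMDiffAt 𝓘(ℝ, E₂) 𝓘(ℝ, ℝ) ω (fun x => ∫ g in A, f (g, x) ∂ν) x₀
  have isGood_univ : IsGood Set.univ := by
    refine isCompact_univ.induction_on (p := IsGood) ?_ ?_ ?_ fun g₀ _ => ?_
    · refine ⟨∅, .empty, subset_rfl, fun A hA _ => ?_⟩
      simpa only [Set.subset_empty_iff.1 hA, setIntegral_empty] using contMDiffAt_const
    · exact fun s s' hss' ⟨t, ht, hst, ht'⟩ => ⟨t, ht, hss'.trans hst, ht'⟩
    · rintro s₁ s₂ ⟨t₁, meas₁, sub₁, smooth₁⟩ ⟨t₂, meas₂, sub₂, smooth₂⟩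
      refine ⟨t₁ ∪ t₂, meas₁.union meas₂, Set.union_subset_union sub₁ sub₂, fun A hAt hA => ?_⟩
      refine ((smooth₁ (A ∩ t₁) Set.inter_subset_right (hA.inter meas₁)).add
        (smooth₂ (A \ t₁) (Set.sdiff_subset_iff.2 hAt) (hA.diff meas₁))).congr_of_eventuallyEq
          (.of_forall fun x => ?_)
      exact (integral_inter_add_sdiff meas₁ (integrable x).integrableOn).symm
    · obtain ⟨W, isOpen_W, mem_W, hW⟩ := exists_isOpen_contMDiffAt_setIntegral ν hf g₀ x₀
      exact ⟨W, mem_nhdsWithin_of_mem_nhds (isOpen_W.mem_nhds mem_W), W, isOpen_W.measurableSet,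
        subset_rfl, hW⟩
  obtain ⟨t, measurableSet_t, univ_subset, smooth⟩ := isGood_univ
  simpa only [Set.univ_subset_iff.1 univ_subset, Measure.restrict_univ] using
    smooth t subset_rfl measurableSet_t

end ParametricIntegral

/-! ### Averaging over a compact group -/

section OrbitAverage

open MeasureTheory Filter

variable {G M : Type*} [MeasurableSpace G] (ν : Measure G) {f : M → ℝ}

/-- The average of `f` along the orbit of `x`, weighted by the measure `ν` on the group. -/
noncomputable def orbitAverage [SMul G M] (f : M → ℝ) (x : M) : ℝ :=
  ∫ g, f (g • x) ∂ν

variable [TopologicalSpace G] [BorelSpace G]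

theorem orbitAverage_smul [Group G] [MulAction G M] [ContinuousMul G] [ν.IsMulRightInvariant]
    (f : M → ℝ) (g : G) (x : M) :
    orbitAverage ν f (g • x) = orbitAverage ν f x := by
  simp only [orbitAverage, ← mul_smul]
  exact integral_mul_right_eq_self (fun h : G => f (h • x)) g

variable [TopologicalSpace M] [CompactSpace G]

theorem contMDiff_orbitAverage [SMul G M] [IsFiniteMeasure ν] {E₁ E₂ : Type*}
    [NormedAddCommGroup E₁] [NormedSpace ℝ E₁] [FiniteDimensional ℝ E₁]
    [NormedAddCommGroup E₂] [NormedSpace ℝ E₂] [FiniteDimensional ℝ E₂]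
    [ChartedSpace E₁ G] [IsManifold 𝓘(ℝ, E₁) ω G] [ChartedSpace E₂ M] [IsManifold 𝓘(ℝ, E₂) ω M]
    (hact : ContMDiff (𝓘(ℝ, E₁).prod 𝓘(ℝ, E₂)) 𝓘(ℝ, E₂) ω fun p : G × M => p.1 • p.2)
    (hf : ContMDiff 𝓘(ℝ, E₂) 𝓘(ℝ, ℝ) ω f) :
    ContMDiff 𝓘(ℝ, E₂) 𝓘(ℝ, ℝ) ω (orbitAverage ν f) :=
  contMDiff_integral_of_compactSpace ν (hf.comp hact)

variable [Group G] [MulAction G M] [ContinuousSMul G M] [IsProbabilityMeasure ν]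

theorem integrable_comp_smul (hf : Continuous f) (x : M) :
    Integrable (fun g : G => f (g • x)) ν :=
  (hf.comp (by fun_prop : Continuous fun g : G => g • x)).integrable_of_hasCompactSupport
    (HasCompactSupport.of_compactSpace _)

variable {ν}

theorem le_orbitAverage (hf : Continuous f) {b : ℝ} {x : M} (hb : ∀ g : G, b ≤ f (g • x)) :
    b ≤ orbitAverage ν f x := by
  simpa [orbitAverage] using
    integral_mono (integrable_const b) (integrable_comp_smul ν hf x) hb

theorem orbitAverage_le (hf : Continuous f) {b : ℝ} {x : M} (hb : ∀ g : G, f (g • x) ≤ b) :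
    orbitAverage ν f x ≤ b := by
  simpa [orbitAverage] using
    integral_mono (integrable_comp_smul ν hf x) (integrable_const b) hb

theorem abs_orbitAverage_le (hf : Continuous f) {b : ℝ} (hb : ∀ x, |f x| ≤ b) (x : M) :
    |orbitAverage ν f x| ≤ b :=
  abs_le.2 ⟨le_orbitAverage hf fun g => (abs_le.1 (hb (g • x))).1,
    orbitAverage_le hf fun g => (abs_le.1 (hb (g • x))).2⟩

theorem orbitAverage_tsum {h : ℕ → M → ℝ} {b : ℕ → ℝ} (hh : ∀ j, Continuous (h j))
    (hb : Summable b) (hhb : ∀ j x, |h j x| ≤ b j) (x : M) :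
    orbitAverage ν (fun y => ∑' j, h j y) x = ∑' j, orbitAverage ν (h j) x := by
  refine (integral_tsum_of_summable_integral_norm
    (fun j => integrable_comp_smul ν (hh j) x) ?_).symm
  refine hb.of_nonneg_of_le (fun j => integral_nonneg fun g => norm_nonneg _) fun j => ?_
  exact orbitAverage_le (f := fun y => ‖h j y‖) (hh j).norm fun g => hhb j (g • x)

theorem tendsto_orbitAverage_atTop (hf : Continuous f) (htop : Tendsto f (cocompact M) atTop) :
    Tendsto (orbitAverage ν f) (cocompact M) atTop := by
  refine tendsto_atTop.2 fun b => ?_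
  obtain ⟨C, isCompact_C, subset⟩ := mem_cocompact.1 (tendsto_atTop.1 htop b)
  have isCompact_saturation : IsCompact ((fun p : G × M => p.1 • p.2) '' Set.univ ×ˢ C) :=
    (isCompact_univ.prod isCompact_C).image continuous_smul
  refine mem_cocompact.2 ⟨_, isCompact_saturation, fun x hx => le_orbitAverage hf fun g => ?_⟩
  exact subset fun hgx => hx ⟨(g⁻¹, g • x), ⟨Set.mem_univ _, hgx⟩, inv_smul_smul g x⟩

variable (G) in
theorem exists_isProbabilityMeasure_isMulRightInvariant [IsTopologicalGroup G] :
    ∃ μ : Measure G, IsProbabilityMeasure μ ∧ μ.IsMulRightInvariant := by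
  let μ : Measure G := (Measure.haarMeasure (⊤ : TopologicalSpace.PositiveCompacts G)).inv
  refine ⟨μ, ⟨?_⟩, inferInstanceAs (Measure.IsMulRightInvariant (Measure.inv _))⟩
  rw [Measure.inv_apply, Set.inv_univ]
  exact Measure.haarMeasure_self (K₀ := ⊤)

end OrbitAverage

/-! ### Generic separation of points -/

section CoefficientSeries

open BoundedContinuousFunction

variable {M V : Type*} [NormedAddCommGroup V] [NormedSpace ℝ V]

/-- The vector-valued series with terms `H j` and coefficients `ξ j`. The coefficients form a
complete metric space, to which the Baire category theorem applies. -/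
noncomputable def coefficientSeries (H : ℕ → M → ℝ) (ξ : ℕ →ᵇ V) (x : M) : V :=
  ∑' j, H j x • ξ j

variable {H : ℕ → M → ℝ} {b : ℕ → ℝ}

theorem coefficientSeries_single (k : ℕ) (v : V) (x : M) :
    coefficientSeries H (ofNormedAddCommGroupDiscrete (Pi.single k v) ‖v‖
      fun j => by rcases eq_or_ne j k with rfl | hjk <;> simp [*]) x = H k x • v := by
  refine (tsum_eq_single k fun j hjk => ?_).trans ?_ <;> simp [*]

theorem norm_smul_coefficient_le (hHb : ∀ j x, |H j x| ≤ b j) (ξ : ℕ →ᵇ V) (x : M) (j : ℕ) :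
    ‖H j x • ξ j‖ ≤ b j * ‖ξ‖ := by
  rw [norm_smul]
  exact mul_le_mul (hHb j x) (ξ.norm_coe_le_norm j) (norm_nonneg _) ((abs_nonneg _).trans (hHb j x))

theorem norm_coefficientSeries_le (hb : Summable b) (hHb : ∀ j x, |H j x| ≤ b j) (ξ : ℕ →ᵇ V)
    (x : M) : ‖coefficientSeries H ξ x‖ ≤ (∑' j, b j) * ‖ξ‖ :=
  tsum_of_norm_bounded (hb.hasSum.mul_right ‖ξ‖) (norm_smul_coefficient_le hHb ξ x)

variable [CompleteSpace V]

theorem summable_smul_coefficient (hb : Summable b) (hHb : ∀ j x, |H j x| ≤ b j) (ξ : ℕ →ᵇ V)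
    (x : M) : Summable fun j => H j x • ξ j :=
  .of_norm_bounded (hb.mul_right ‖ξ‖) (norm_smul_coefficient_le hHb ξ x)

theorem coefficientSeries_add (hb : Summable b) (hHb : ∀ j x, |H j x| ≤ b j) (ξ ζ : ℕ →ᵇ V)
    (x : M) :
    coefficientSeries H (ξ + ζ) x = coefficientSeries H ξ x + coefficientSeries H ζ x := by
  simp only [coefficientSeries, ← (summable_smul_coefficient hb hHb ξ x).tsum_add
    (summable_smul_coefficient hb hHb ζ x), BoundedContinuousFunction.add_apply, smul_add]

theorem continuous_coefficientSeries [TopologicalSpace M] (hb : Summable b)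
    (hHb : ∀ j x, |H j x| ≤ b j) (hH : ∀ j, Continuous (H j)) :
    Continuous fun p : (ℕ →ᵇ V) × M => coefficientSeries H p.1 p.2 := by
  have nonneg (x : M) : 0 ≤ ∑' j, b j := tsum_nonneg fun j => (abs_nonneg _).trans (hHb j x)
  refine continuous_prod_of_continuous_lipschitzWith _ (∑' j, b j).toNNReal
    (fun ξ => ?_) fun x => ?_
  · exact continuous_tsum (fun j => (hH j).smul (continuous_const (y := ξ j)))
      (hb.mul_right ‖ξ‖) fun j x => norm_smul_coefficient_le hHb ξ x j
  · refine .of_dist_le_mul fun ξ ζ => ?_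
    have split := coefficientSeries_add hb hHb (ξ - ζ) ζ x
    rw [sub_add_cancel] at split
    rw [Real.coe_toNNReal _ (nonneg x), dist_eq_norm, dist_eq_norm, split, add_sub_cancel_right]
    exact norm_coefficientSeries_le hb hHb (ξ - ζ) x

end CoefficientSeries

section GenericSeparation

open Module BoundedContinuousFunction

theorem isOpen_setOf_forall_mem_ne {Ξ X Y : Type*} [TopologicalSpace Ξ] [TopologicalSpace X]
    [TopologicalSpace Y] [T2Space Y] {F : Ξ → X → Y} (hF : Continuous F.uncurry)
    {Q : Set (X × X)} (hQ : IsCompact Q) :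
    IsOpen {ξ | ∀ p ∈ Q, F ξ p.1 ≠ F ξ p.2} := by
  have isOpen_ne : IsOpen {q : Ξ × X × X | F q.1 q.2.1 ≠ F q.1 q.2.2} :=
    isOpen_ne_fun (hF.comp (by fun_prop : Continuous fun q : Ξ × X × X => (q.1, q.2.1)))
      (hF.comp (by fun_prop : Continuous fun q : Ξ × X × X => (q.1, q.2.2)))
  refine isOpen_iff_mem_nhds.2 fun ξ hξ => ?_
  exact hQ.eventually_forall_of_forall_eventually fun p hp => isOpen_ne.mem_nhds (hξ p hp)

theorem exists_countable_cover_isCompact_subset_chart_source (E : Type*) {M : Type*}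
    [TopologicalSpace E] [TopologicalSpace M] [ChartedSpace E M] [LocallyCompactSpace M]
    [SecondCountableTopology M] {ι : Type*} {H : ι → M → ℝ} (hH : ∀ j, Continuous (H j)) :
    ∃ 𝒬 : Set (Set (M × M)), 𝒬.Countable ∧
      (∀ Q ∈ 𝒬, IsCompact Q ∧ (∃ j, ∀ p ∈ Q, H j p.1 ≠ H j p.2) ∧
        ∃ c c', Q ⊆ (chartAt E c).source ×ˢ (chartAt E c').source) ∧
      ∀ p : M × M, (∃ j, H j p.1 ≠ H j p.2) → ∃ Q ∈ 𝒬, p ∈ Q := by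
  have exists_nhds (p : M × M) (hp : ∃ j, H j p.1 ≠ H j p.2) : ∃ Q ∈ nhds p, IsCompact Q ∧
      (∃ j, ∀ q ∈ Q, H j q.1 ≠ H j q.2) ∧
      Q ⊆ (chartAt E p.1).source ×ˢ (chartAt E p.2).source := by
    obtain ⟨j, hj⟩ := hp
    have isOpen_ne : IsOpen {q : M × M | H j q.1 ≠ H j q.2} :=
      isOpen_ne_fun ((hH j).comp continuous_fst) ((hH j).comp continuous_snd)
    have isOpen_source := (chartAt E p.1).open_source.prod (chartAt E p.2).open_source
    obtain ⟨Q, hQp, hQ, isCompact_Q⟩ := local_compact_nhds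
      ((isOpen_ne.inter isOpen_source).mem_nhds
        ⟨hj, mem_chart_source E p.1, mem_chart_source E p.2⟩)
    exact ⟨Q, hQp, isCompact_Q, ⟨j, fun q hq => (hQ hq).1⟩, fun q hq => (hQ hq).2⟩
  choose! Q hQp isCompact_Q hQ hQ_source using exists_nhds
  obtain ⟨T, hT, countable_T, cover⟩ := TopologicalSpace.countable_cover_nhdsWithin
    fun p hp => mem_nhdsWithin_of_mem_nhds (hQp p hp)
  refine ⟨Q '' T, countable_T.image Q, ?_, fun p hp => ?_⟩
  · rintro _ ⟨p, hp, rfl⟩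
    exact ⟨isCompact_Q p (hT hp), hQ p (hT hp), p.1, p.2, hQ_source p (hT hp)⟩
  · obtain ⟨q, hq, hpq⟩ := Set.mem_iUnion₂.1 (cover hp)
    exact ⟨Q q, Set.mem_image_of_mem Q hq, hpq⟩

variable {E V : Type*} [NormedAddCommGroup E] [NormedSpace ℝ E] [FiniteDimensional ℝ E]
  [NormedAddCommGroup V] [NormedSpace ℝ V] [FiniteDimensional ℝ V]

theorem dense_compl_image_of_contDiffAt {f : E → V} {s : Set E}
    (hf : ∀ x ∈ s, ContDiffAt ℝ 1 f x) (hEV : finrank ℝ E < finrank ℝ V) : Dense (f '' s)ᶜ := by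
  refine dense_compl_of_dimH_lt_finrank (lt_of_le_of_lt ?_ (Nat.cast_lt.2 hEV))
  calc dimH (f '' s) ≤ dimH s := dimH_image_le_of_locally_lipschitzOn fun x hx => by
        obtain ⟨K, t, ht, lipschitz⟩ := (hf x hx).exists_lipschitzOnWith
        exact ⟨K, t, mem_nhdsWithin_of_mem_nhds ht, lipschitz⟩
    _ ≤ dimH (Set.univ : Set E) := dimH_mono (Set.subset_univ s)
    _ = finrank ℝ E := Real.dimH_univ_eq_finrank E

variable {M : Type*} [TopologicalSpace M] [ChartedSpace E M] [IsManifold 𝓘(ℝ, E) 1 M]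

theorem dense_setOf_add_smul_ne (hEV : 2 * finrank ℝ E < finrank ℝ V) {f : M → V} {h : M → ℝ}
    (hf : ContMDiff 𝓘(ℝ, E) 𝓘(ℝ, V) 1 f) (hh : ContMDiff 𝓘(ℝ, E) 𝓘(ℝ, ℝ) 1 h)
    {Q : Set (M × M)} {c c' : M} (hQ : Q ⊆ (chartAt E c).source ×ˢ (chartAt E c').source)
    (hhQ : ∀ p ∈ Q, h p.1 ≠ h p.2) :
    Dense {v : V | ∀ p ∈ Q, f p.1 + h p.1 • v ≠ f p.2 + h p.2 • v} := by
  let lift : E × E → M × M := fun w => ((chartAt E c).symm w.1, (chartAt E c').symm w.2)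
  let s : Set (E × E) :=
    {w | w.1 ∈ (chartAt E c).target ∧ w.2 ∈ (chartAt E c').target ∧ lift w ∈ Q}
  -- the only `v` that could identify the two points of a pair
  let bad : M × M → V := fun p => (h p.1 - h p.2)⁻¹ • (f p.2 - f p.1)
  have contDiffAt_bad : ∀ w ∈ s, ContDiffAt ℝ 1 (bad ∘ lift) w := by
    rintro w ⟨hw₁, hw₂, hw⟩
    have symm_fst : ContMDiffAt 𝓘(ℝ, E × E) 𝓘(ℝ, E) 1 (fun w => (lift w).1) w :=
      ((contMDiffOn_chart_symm (I := 𝓘(ℝ, E))).contMDiffAt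
        ((chartAt E c).open_target.mem_nhds hw₁)).comp w contDiffAt_fst.contMDiffAt
    have symm_snd : ContMDiffAt 𝓘(ℝ, E × E) 𝓘(ℝ, E) 1 (fun w => (lift w).2) w :=
      ((contMDiffOn_chart_symm (I := 𝓘(ℝ, E))).contMDiffAt
        ((chartAt E c').open_target.mem_nhds hw₂)).comp w contDiffAt_snd.contMDiffAt
    exact (((hh.contMDiffAt.comp w symm_fst).contDiffAt.sub
      (hh.contMDiffAt.comp w symm_snd).contDiffAt).inv (sub_ne_zero.2 (hhQ _ hw))).smul
      ((hf.contMDiffAt.comp w symm_snd).contDiffAt.sub (hf.contMDiffAt.comp w symm_fst).contDiffAt)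
  have finrank_lt : finrank ℝ (E × E) < finrank ℝ V := by rwa [finrank_prod, ← two_mul]
  refine (dense_compl_image_of_contDiffAt contDiffAt_bad finrank_lt).mono ?_
  intro v hv p hp heq
  refine hv ?_
  have lift_chart : lift (chartAt E c p.1, chartAt E c' p.2) = p :=
    Prod.ext ((chartAt E c).left_inv (hQ hp).1) ((chartAt E c').left_inv (hQ hp).2)
  refine ⟨(chartAt E c p.1, chartAt E c' p.2), ⟨(chartAt E c).map_source (hQ hp).1,
    (chartAt E c').map_source (hQ hp).2, by rwa [lift_chart]⟩, ?_⟩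
  rw [Function.comp_apply, lift_chart, inv_smul_eq_iff₀ (sub_ne_zero.2 (hhQ p hp)), sub_smul,
    sub_eq_sub_iff_add_eq_add, ← heq, add_comm]

theorem exists_forall_add_coefficientSeries_ne [SecondCountableTopology M]
    (hEV : 2 * finrank ℝ E < finrank ℝ V) {f : M → V} (hf : ContMDiff 𝓘(ℝ, E) 𝓘(ℝ, V) 1 f)
    {H : ℕ → M → ℝ} {b : ℕ → ℝ} (hb : Summable b) (hHb : ∀ j x, |H j x| ≤ b j)
    (hH : ∀ j, ContMDiff 𝓘(ℝ, E) 𝓘(ℝ, ℝ) 1 (H j))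
    (hseries : ∀ ξ : ℕ →ᵇ V, ContMDiff 𝓘(ℝ, E) 𝓘(ℝ, V) 1 (coefficientSeries H ξ)) :
    ∃ ξ : ℕ →ᵇ V, ∀ x y, (∃ j, H j x ≠ H j y) →
      f x + coefficientSeries H ξ x ≠ f y + coefficientSeries H ξ y := by
  have : LocallyCompactSpace M := ChartedSpace.locallyCompactSpace E M
  let F : (ℕ →ᵇ V) → M → V := fun ξ x => f x + coefficientSeries H ξ x
  have continuous_F : Continuous F.uncurry := (hf.continuous.comp continuous_snd).add
    (continuous_coefficientSeries hb hHb fun j => (hH j).continuous)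
  obtain ⟨𝒬, countable_𝒬, h𝒬, cover⟩ :=
    exists_countable_cover_isCompact_subset_chart_source E fun j => (hH j).continuous
  have dense_good : ∀ Q ∈ 𝒬, Dense {ξ | ∀ p ∈ Q, F ξ p.1 ≠ F ξ p.2} := by
    intro Q hQ
    obtain ⟨-, ⟨k, hk⟩, c, c', hQ_source⟩ := h𝒬 Q hQ
    refine Metric.dense_iff.2 fun ξ r hr => ?_
    obtain ⟨v, hvr, hv⟩ := Metric.dense_iff.1
      (dense_setOf_add_smul_ne hEV (hf.add (hseries ξ)) (hH k) hQ_source hk) 0 r hr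
    let ζ : ℕ →ᵇ V := ofNormedAddCommGroupDiscrete (Pi.single k v) ‖v‖
      fun j => by rcases eq_or_ne j k with rfl | hjk <;> simp [*]
    have norm_ζ_lt : ‖ζ‖ < r :=
      (norm_ofNormedAddCommGroup_le _ (norm_nonneg v) _).trans_lt (mem_ball_zero_iff.1 hvr)
    have F_add (x : M) : F (ξ + ζ) x = F ξ x + H k x • v := by
      simp only [F, coefficientSeries_add hb hHb, ζ, coefficientSeries_single, add_assoc]
    refine ⟨ξ + ζ, by simpa using norm_ζ_lt, fun p hp => ?_⟩
    rw [F_add, F_add]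
    exact hv p hp
  obtain ⟨ξ, hξ⟩ := (dense_biInter_of_isOpen (fun Q hQ => isOpen_setOf_forall_mem_ne continuous_F
    (h𝒬 Q hQ).1) countable_𝒬 dense_good).nonempty
  refine ⟨ξ, fun x y hxy => ?_⟩
  obtain ⟨Q, hQ, hxyQ⟩ := cover (x, y) hxy
  exact Set.mem_iInter₂.1 hξ Q hQ (x, y) hxyQ

end GenericSeparation

/-! ### Tame functions -/

theorem exists_mvPolynomial_near_of_injective {X κ : Type*} [TopologicalSpace X] [CompactSpace X]
    {k : X → κ → ℝ} (hk : Continuous k) (hinj : Function.Injective k) (v : C(X, ℝ)) {ε : ℝ}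
    (hε : 0 < ε) : ∃ P : MvPolynomial κ ℝ, ∀ x, |MvPolynomial.eval (k x) P - v x| ≤ ε := by
  let coordinate : κ → C(X, ℝ) := fun i => ⟨fun x => k x i, (continuous_apply i).comp hk⟩
  let evaluation : MvPolynomial κ ℝ →ₐ[ℝ] C(X, ℝ) := MvPolynomial.aeval coordinate
  have evaluation_apply (P : MvPolynomial κ ℝ) (x : X) :
      evaluation P x = MvPolynomial.eval (k x) P := by
    induction P using MvPolynomial.induction_on with
    | C r => simp [evaluation]
    | add P Q hP hQ => simp [hP, hQ]
    | mul_X P i hP => simp [hP, evaluation, coordinate]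
  have separatesPoints : evaluation.range.SeparatesPoints := fun x y hxy => by
    obtain ⟨i, hi⟩ := Function.ne_iff.1 (hinj.ne hxy)
    exact ⟨coordinate i, ⟨coordinate i, ⟨MvPolynomial.X i, by simp [evaluation]⟩, rfl⟩, hi⟩
  obtain ⟨⟨_, P, rfl⟩, hP⟩ :=
    ContinuousMap.exists_mem_subalgebra_near_continuousMap_of_separatesPoints _ separatesPoints v
      ε hε
  refine ⟨P, fun x => ?_⟩
  rw [← evaluation_apply]
  exact (ContinuousMap.norm_coe_le_norm _ x).trans hP.le

theorem exists_finite_level_le_succ {ι : Type*} [Countable ι] (nbr : ι → Finset ι) :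
    ∃ l : ι → ℕ, (∀ n, {a | l a ≤ n}.Finite) ∧ ∀ a, ∀ c ∈ nbr a, l c ≤ l a + 1 := by
  obtain ⟨e, he⟩ := exists_injective_nat ι
  let F : ℕ → Set ι := fun n => Nat.rec ∅ (fun n A => A ∪ (⋃ a ∈ A, nbr a) ∪ e ⁻¹' {n}) n
  have F_succ (n : ℕ) : F (n + 1) = F n ∪ (⋃ a ∈ F n, nbr a) ∪ e ⁻¹' {n} := rfl
  have F_finite (n : ℕ) : (F n).Finite := by
    induction n with
    | zero => exact Set.finite_empty
    | succ n ih =>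
      exact (ih.union (ih.biUnion fun a _ => (nbr a).finite_toSet)).union
        ((Set.finite_singleton n).preimage he.injOn)
  have F_mono : Monotone F := monotone_nat_of_le_succ fun n => by
    rw [F_succ, Set.union_assoc]
    exact Set.subset_union_left
  have exists_mem (a : ι) : ∃ n, a ∈ F n := ⟨e a + 1, by simp [F_succ]⟩
  have mem_sInf (a : ι) : a ∈ F (sInf {n | a ∈ F n}) := Nat.sInf_mem (exists_mem a)
  refine ⟨fun a => sInf {n | a ∈ F n}, fun n => (F_finite n).subset fun a ha =>
    F_mono ha (mem_sInf a), fun a c hc => Nat.sInf_le ?_⟩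
  change c ∈ F (sInf {n | a ∈ F n} + 1)
  rw [F_succ]
  exact Or.inl (Or.inr (Set.mem_biUnion (mem_sInf a) hc))

namespace UniformAtlas

variable {d : ℕ} {M ι : Type*} (𝒜 : UniformAtlas d M ι)

theorem coord_image_ball (a : ι) : 𝒜.coord a '' 𝒜.ball a = {y | ∑ i, y i ^ 2 < 4} := by
  ext y
  constructor
  · rintro ⟨x, hx, rfl⟩
    exact 𝒜.sum_sq_lt hx
  · exact 𝒜.exists_coord_eq a y

theorem coord_mem_interior_image_ball {a : ι} {x : M} (hx : x ∈ 𝒜.ball a) :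
    𝒜.coord a x ∈ interior (𝒜.coord a '' 𝒜.ball a) := by
  have isOpen_image : IsOpen (𝒜.coord a '' 𝒜.ball a) := by
    rw [coord_image_ball]
    exact isOpen_lt (by fun_prop) continuous_const
  exact isOpen_image.interior_eq.symm ▸ Set.mem_image_of_mem _ hx

theorem exists_hasMismatch_of_eq_zero {p : ι → (Fin d → ℝ) → ℝ}
    (hp : ∀ a, ∃ N B, HasPolyExpansion N 4 B (p a)) (s : Finset ι) (hs : ∀ a ∉ s, p a = 0) :
    ∃ E, 0 ≤ E ∧ 𝒜.HasMismatch E p := by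
  have exists_bound : ∀ a, ∃ D, (a ∉ s → D = 0) ∧ HasExpansion 4 D (p a) ∧
      ∀ b, a ∈ 𝒜.nbr b → HasExpansion 4 D (fun y => p a (𝒜.trans b a y)) := fun a => by
    by_cases ha : a ∈ s
    · obtain ⟨N, B, hB⟩ := hp a
      have B_nonneg := (hB.hasExpansion zero_le_four).nonneg zero_le_four
      have one_le : 1 ≤ (𝒜.bound / 4) ^ N := one_le_pow₀ (by linarith [𝒜.four_le_bound])
      exact ⟨(𝒜.bound / 4) ^ N * B, fun h => absurd ha h,
        (hB.hasExpansion zero_le_four).mono (le_mul_of_one_le_left B_nonneg one_le),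
        fun b hb => hB.comp zero_le_four four_pos 𝒜.four_le_bound (𝒜.trans_expansion hb)⟩
    · rw [hs a ha]
      have zero : HasExpansion 4 0 (fun _ : Fin d → ℝ => 0) := by
        simpa using HasExpansion.const zero_le_four 0
      exact ⟨0, fun _ => rfl, zero, fun _ _ => zero⟩
  choose D D_eq_zero hD hD_trans using exists_bound
  have D_nonneg (a : ι) : 0 ≤ D a := (hD a).nonneg zero_le_four
  have D_le_sum (a : ι) : D a ≤ ∑ c ∈ s, D c := by
    by_cases ha : a ∈ s
    · exact Finset.single_le_sum (fun c _ => D_nonneg c) ha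
    · exact (D_eq_zero a ha).trans_le (Finset.sum_nonneg fun c _ => D_nonneg c)
  have sum_nonneg : 0 ≤ ∑ c ∈ s, D c := Finset.sum_nonneg fun c _ => D_nonneg c
  exact ⟨∑ c ∈ s, D c + ∑ c ∈ s, D c, add_nonneg sum_nonneg sum_nonneg, fun a c hc =>
    ((hD_trans c a hc).mono (D_le_sum c)).sub zero_le_four ((hD a).mono (D_le_sum a))⟩

end UniformAtlas

namespace AnalyticAtlas

variable {d : ℕ} {M ι : Type*} [TopologicalSpace M] [ChartedSpace (EuclideanSpace ℝ (Fin d)) M]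
  (𝒜 : AnalyticAtlas d M ι) {om C : ℝ}

theorem ofLp_chart (a : ι) (x : M) : (𝒜.chart a x).ofLp = 𝒜.coord a x := by
  rw [𝒜.chart_eq]

theorem contMDiff_of_isTame (hom : 1 < om) {f : M → ℝ} (hf : 𝒜.IsTame om f) :
    ContMDiff 𝓘(ℝ, EuclideanSpace ℝ (Fin d)) 𝓘(ℝ, ℝ) ω f := fun x => by
  obtain ⟨a, hxa, -⟩ := 𝒜.exists_sum_sq_le x
  obtain ⟨A, hA⟩ := hf a
  obtain ⟨F, hF, hfF⟩ := hA.exists_analyticAt_comp hom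
  have contDiffAt_F : ContDiffAt ℝ ω (fun u : EuclideanSpace ℝ (Fin d) => F u.ofLp)
      (𝒜.chart a x) := by
    refine ContDiffAt.comp (g := F) _ ?_ (PiLp.contDiff_ofLp (p := 2)).contDiffAt
    rw [𝒜.ofLp_chart]
    exact (hF _ (𝒜.coord_mem_interior_image_ball hxa)).contDiffAt
  refine (contDiffAt_F.contMDiffAt.comp x (contMDiffAt_of_mem_maximalAtlas
    (𝒜.mem_maximalAtlas a) (𝒜.ball_subset_source a hxa))).congr_of_eventuallyEq ?_
  filter_upwards [(𝒜.isOpen_ball a).mem_nhds hxa] with z hz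
  rw [Function.comp_apply, 𝒜.ofLp_chart, hfF z hz]

theorem norm_chart_lt_two {a : ι} {x : M} (hx : x ∈ 𝒜.ball a) : ‖𝒜.chart a x‖ < 2 := by
  rw [𝒜.chart_eq, ← sum_sq_lt_four_iff_norm_lt_two]
  exact 𝒜.sum_sq_lt hx

theorem chart_symm_chart {a : ι} {x : M} (hx : x ∈ 𝒜.ball a) :
    (𝒜.chart a).symm (𝒜.chart a x) = x :=
  (𝒜.chart a).left_inv (𝒜.ball_subset_source a hx)

theorem continuousOn_chart_symm (a : ι) :
    ContinuousOn (𝒜.chart a).symm (Metric.closedBall 0 2) :=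
  (𝒜.chart a).continuousOn_symm.mono fun _ hu => 𝒜.mem_target (mem_closedBall_zero_iff.1 hu)

theorem exists_isCompact_ball_subset (a : ι) : ∃ Q, IsCompact Q ∧ 𝒜.ball a ⊆ Q :=
  ⟨(𝒜.chart a).symm '' Metric.closedBall 0 2,
    (isCompact_closedBall _ _).image_of_continuousOn (𝒜.continuousOn_chart_symm a), fun x hx =>
      ⟨𝒜.chart a x, mem_closedBall_zero_iff.2 (𝒜.norm_chart_lt_two hx).le, 𝒜.chart_symm_chart hx⟩⟩

theorem exists_mvPolynomial_near (a : ι) {u : M → ℝ} (hu : Continuous u) {ε : ℝ} (hε : 0 < ε) :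
    ∃ P : MvPolynomial (Fin d) ℝ,
      ∀ x ∈ 𝒜.ball a, |MvPolynomial.eval (𝒜.coord a x) P - u x| ≤ ε := by
  let v : C(Metric.closedBall (0 : EuclideanSpace ℝ (Fin d)) 2, ℝ) :=
    ⟨fun w => u ((𝒜.chart a).symm w),
      (hu.comp_continuousOn (𝒜.continuousOn_chart_symm a)).domRestrict⟩
  obtain ⟨P, hP⟩ := exists_mvPolynomial_near_of_injective
    (k := fun w : Metric.closedBall (0 : EuclideanSpace ℝ (Fin d)) 2 => w.1.ofLp) (by fun_prop)
    ((WithLp.ofLp_injective 2).comp Subtype.val_injective) v hε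
  refine ⟨P, fun x hx => ?_⟩
  have chart_mem : 𝒜.chart a x ∈ Metric.closedBall 0 2 :=
    mem_closedBall_zero_iff.2 (𝒜.norm_chart_lt_two hx).le
  have v_apply : v ⟨𝒜.chart a x, chart_mem⟩ = u x := congrArg u (𝒜.chart_symm_chart hx)
  simpa only [v_apply, 𝒜.ofLp_chart] using hP ⟨𝒜.chart a x, chart_mem⟩

theorem exists_finset_forall_ball_eq_zero {u : M → ℝ} (hu : HasCompactSupport u) :
    ∃ s : Finset ι, ∀ a ∉ s, ∀ x ∈ 𝒜.ball a, u x = 0 := by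
  classical
  obtain ⟨t, ht⟩ := hu.isCompact.elim_finite_subcover 𝒜.ball 𝒜.isOpen_ball fun x _ => by
    obtain ⟨a, ha, -⟩ := 𝒜.exists_sum_sq_le x
    exact Set.mem_iUnion.2 ⟨a, ha⟩
  refine ⟨t.biUnion 𝒜.nbr, fun a ha x hx => ?_⟩
  by_contra hne
  obtain ⟨b, hb, hxb⟩ := Set.mem_iUnion₂.1 (ht (subset_tsupport u hne))
  exact ha (Finset.mem_biUnion.2 ⟨b, hb, 𝒜.mem_nbr hxb hx⟩)

theorem exists_isTame_near (hC : 𝒜.HasGluing om C) {u : M → ℝ} (hu : Continuous u)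
    (hsupp : HasCompactSupport u) {η : ℝ} (hη : 0 < η) :
    ∃ f, 𝒜.IsTame om f ∧ ∀ x, |f x - u x| ≤ η := by
  obtain ⟨s, hs⟩ := 𝒜.exists_finset_forall_ball_eq_zero hsupp
  have exists_near : ∀ a, ∃ P : MvPolynomial (Fin d) ℝ, (a ∉ s → P = 0) ∧
      ∀ x ∈ 𝒜.ball a, |MvPolynomial.eval (𝒜.coord a x) P - u x| ≤ η / 4 := fun a => by
    by_cases ha : a ∈ s
    · obtain ⟨P, hP⟩ := 𝒜.exists_mvPolynomial_near a hu (show 0 < η / 4 by positivity)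
      exact ⟨P, fun h => absurd ha h, hP⟩
    · refine ⟨0, fun _ => rfl, fun x hx => ?_⟩
      rw [hs a ha x hx, map_zero, sub_zero, abs_zero]
      positivity
  choose P P_eq_zero P_near using exists_near
  have hpoly : ∀ a, ∃ N B, HasPolyExpansion N 4 B (fun y => MvPolynomial.eval y (P a)) :=
    fun a => HasPolyExpansion.of_mvPolynomial 4 (P a)
  obtain ⟨E, hE, mismatch⟩ := 𝒜.exists_hasMismatch_of_eq_zero hpoly s fun a ha => by
    simp [P_eq_zero a ha, Pi.zero_def]
  have supMismatch : 𝒜.HasSupMismatch (η / 2) (fun a y => MvPolynomial.eval y (P a)) :=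
    fun a b x ha hb => by
      have := abs_le.1 (P_near a x ha)
      have := abs_le.1 (P_near b x hb)
      rw [abs_le]
      constructor <;> linarith
  obtain ⟨K, hK, K_pos⟩ : ∃ K : ℕ, C * (7 / 8) ^ K * E < η / 4 ∧ 1 ≤ K := by
    have tendsto_zero := ((tendsto_pow_atTop_nhds_zero_of_lt_one (r := (7 / 8 : ℝ))
      (by norm_num) (by norm_num)).const_mul C).mul_const E
    rw [mul_zero, zero_mul] at tendsto_zero
    exact ((tendsto_zero.eventually_lt_const (by positivity)).and
      (Filter.eventually_ge_atTop 1)).exists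
  obtain ⟨f, hf, f_near⟩ := hC _ E (η / 2) hE (by positivity) hpoly mismatch supMismatch K K_pos
  refine ⟨f, hf, fun x => ?_⟩
  obtain ⟨a, ha, -⟩ := 𝒜.exists_sum_sq_le x
  have := abs_le.1 (f_near a x ha)
  have := abs_le.1 (P_near a x ha)
  rw [abs_le]
  constructor <;> linarith

theorem exists_isTame_tendsto_cocompact_atTop [Countable ι] (hC : 𝒜.HasGluing om C) :
    ∃ f, 𝒜.IsTame om f ∧ Filter.Tendsto f (Filter.cocompact M) Filter.atTop := by
  obtain ⟨l, l_finite, l_le⟩ := exists_finite_level_le_succ 𝒜.nbr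
  have abs_sub_le (a c : ι) (hc : c ∈ 𝒜.nbr a) : |(l c : ℝ) - l a| ≤ 1 := by
    have : (l c : ℝ) ≤ l a + 1 := mod_cast l_le a c hc
    have : (l a : ℝ) ≤ l c + 1 := mod_cast l_le c a (𝒜.mem_nbr_comm.1 hc)
    rw [abs_le]
    constructor <;> linarith
  obtain ⟨f, hf, f_near⟩ := hC (fun a _ => l a) 1 1 zero_le_one zero_le_one
    (fun a => ⟨0, _, HasPolyExpansion.const 0 4 (l a)⟩)
    (fun a c hc => (HasExpansion.const zero_le_four _).mono (abs_sub_le a c hc))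
    (fun a b x ha hb => abs_sub_le a b (𝒜.mem_nbr ha hb)) 1 le_rfl
  refine ⟨f, hf, Filter.tendsto_atTop.2 fun R => ?_⟩
  set D := 1 + C * (7 / 8) ^ 1 * 1
  choose Q hQ ball_subset using 𝒜.exists_isCompact_ball_subset
  refine Filter.mem_cocompact.2 ⟨⋃ a ∈ {a | l a ≤ ⌊R + D⌋₊}, Q a,
    (l_finite _).isCompact_biUnion fun a _ => hQ a, fun x hx => ?_⟩
  by_contra hxR
  replace hxR : f x < R := not_le.1 hxR
  obtain ⟨a, ha, -⟩ := 𝒜.exists_sum_sq_le x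
  have := abs_le.1 (f_near a x ha)
  exact hx (Set.mem_biUnion (Nat.le_floor (by linarith)) (ball_subset a ha))

end AnalyticAtlas

theorem exists_summable_weights {ι : Type*} [Countable ι] (A : ι → ℕ → ℝ) :
    ∃ e : ℕ → ℝ, (∀ j, 0 < e j) ∧ Summable e ∧ ∀ a, Summable fun j => e j * |A a j| := by
  obtain ⟨q, hq⟩ := exists_injective_nat ι
  let s : ℕ → Finset ι := fun n => ((Set.finite_Iic n).preimage hq.injOn).toFinset
  let D : ℕ → ℝ := fun j => 1 + ∑ a ∈ s j, |A a j|
  have one_le_D (j : ℕ) : 1 ≤ D j :=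
    le_add_of_nonneg_right (Finset.sum_nonneg fun a _ => abs_nonneg (A a j))
  have D_pos (j : ℕ) : 0 < D j := one_pos.trans_le (one_le_D j)
  have geometric : Summable fun j : ℕ => (1 / 2 : ℝ) ^ j := summable_geometric_two
  refine ⟨fun j => (1 / 2) ^ j / D j, fun j => div_pos (by positivity) (D_pos j),
    geometric.of_nonneg_of_le (fun j => (div_pos (by positivity) (D_pos j)).le)
      fun j => div_le_self (by positivity) (one_le_D j), fun a => ?_⟩
  refine Summable.of_norm_bounded_eventually_nat geometric ?_
  filter_upwards [Filter.eventually_ge_atTop (q a)] with j hj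
  have abs_le_D : |A a j| ≤ D j :=
    (Finset.single_le_sum (f := fun a => |A a j|) (fun b _ => abs_nonneg _)
      (by simpa [s] using hj)).trans (le_add_of_nonneg_left zero_le_one)
  rw [Real.norm_of_nonneg (mul_nonneg (div_pos (by positivity) (D_pos j)).le (abs_nonneg _)),
    div_mul_eq_mul_div, div_le_iff₀ (D_pos j)]
  gcongr

theorem UniformAtlas.exists_weights_isTame_tsum {d : ℕ} {M ι : Type*} [Countable ι]
    (𝒜 : UniformAtlas d M ι) {om : ℝ} (hom : 1 ≤ om) {h : ℕ → M → ℝ}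
    (hh : ∀ j, 𝒜.IsTame om (h j)) :
    ∃ e : ℕ → ℝ, (∀ j, 0 < e j) ∧ Summable e ∧ ∀ (c : ℕ → ℝ) (B : ℝ), (∀ j, |c j| ≤ B) →
      𝒜.IsTame om (fun x => ∑' j, c j * (e j * h j x)) := by
  choose A hA using hh
  have A_nonneg (j : ℕ) (a : ι) : 0 ≤ A j a := (hA j a).nonneg (zero_le_one.trans hom)
  obtain ⟨e, e_pos, e_summable, eA_summable⟩ := exists_summable_weights fun a j => A j a
  refine ⟨e, e_pos, e_summable, fun c B hB a => ?_⟩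
  have coefficients_summable : Summable fun j => |c j * e j| * A j a := by
    refine ((eA_summable a).mul_left B).of_nonneg_of_le
      (fun j => mul_nonneg (abs_nonneg _) (A_nonneg j a)) fun j => ?_
    rw [abs_mul, abs_of_pos (e_pos j), abs_of_nonneg (A_nonneg j a), mul_assoc]
    exact mul_le_mul_of_nonneg_right (hB j) (mul_nonneg (e_pos j).le (A_nonneg j a))
  simp only [← mul_assoc]
  exact ⟨_, HasPolySeries.tsum hom (fun j => c j * e j) (fun j => hA j a) coefficients_summable⟩

/-- The class of all analytic functions would satisfy the first three conditions, but a uniform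
limit of analytic functions need not be analytic. -/
theorem exists_dense_analytic_class (d : ℕ) (M : Type*) [TopologicalSpace M] [T2Space M]
    [SecondCountableTopology M] [ChartedSpace (EuclideanSpace ℝ (Fin d)) M]
    [IsManifold 𝓘(ℝ, EuclideanSpace ℝ (Fin d)) ω M] :
    ∃ T : Set (M → ℝ),
      (∀ f ∈ T, ContMDiff 𝓘(ℝ, EuclideanSpace ℝ (Fin d)) 𝓘(ℝ, ℝ) ω f) ∧
      (∀ u : M → ℝ, Continuous u → HasCompactSupport u → ∀ η > 0,
        ∃ f ∈ T, ∀ x, |f x - u x| ≤ η) ∧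
      (∃ f ∈ T, Filter.Tendsto f (Filter.cocompact M) Filter.atTop) ∧
      ∀ h : ℕ → M → ℝ, (∀ j, h j ∈ T) → ∃ e : ℕ → ℝ, (∀ j, 0 < e j) ∧ Summable e ∧
        ∀ (c : ℕ → ℝ) (B : ℝ), (∀ j, |c j| ≤ B) →
          (fun x => ∑' j, c j * (e j * h j x)) ∈ T := by
  obtain ⟨N, N_countable, ⟨𝒜⟩⟩ := exists_analyticAtlas d M
  have : Countable N := N_countable.to_subtype
  obtain ⟨q, hq⟩ := exists_injective_nat N
  let : LinearOrder N := LinearOrder.lift' q hq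
  obtain ⟨om, C, hom, -, hC⟩ := 𝒜.exists_hasGluing
  exact ⟨{f | 𝒜.IsTame om f}, fun f hf => 𝒜.contMDiff_of_isTame hom hf,
    fun u hu hsupp η hη => 𝒜.exists_isTame_near hC hu hsupp hη,
    𝒜.exists_isTame_tendsto_cocompact_atTop hC,
    fun h hh => 𝒜.exists_weights_isTame_tsum hom.le hh⟩

/-! ### Separation of orbits -/

section SeparatingOrbits

open MeasureTheory

variable {G M : Type*} [Group G] [TopologicalSpace G] [CompactSpace G] [MeasurableSpace G]
  [BorelSpace G] {ν : Measure G} [IsProbabilityMeasure ν] [TopologicalSpace M]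
  [LocallyCompactSpace M] [MulAction G M] [ContinuousSMul G M]

theorem continuous_orbitAverage [FirstCountableTopology M] {f : M → ℝ} (hf : Continuous f) :
    Continuous (orbitAverage ν f) := by
  have : Continuous fun x => ∫ g in Set.univ, f ((g : G) • x) ∂ν :=
    continuous_parametric_integral_of_continuous (by fun_prop) isCompact_univ
  simp only [Measure.restrict_univ] at this
  exact this

variable [T2Space M]

theorem exists_orbitAverage_ne {T : Set (M → ℝ)} (hcont : ∀ f ∈ T, Continuous f)
    (hdense : ∀ u : M → ℝ, Continuous u → HasCompactSupport u → ∀ η > 0,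
      ∃ f ∈ T, ∀ x, |f x - u x| ≤ η) {x y : M} (hxy : x ∉ MulAction.orbit G y) :
    ∃ f ∈ T, (∀ z, |f z| ≤ 2) ∧ orbitAverage ν f x ≠ orbitAverage ν f y := by
  have isCompact_orbit (z : M) : IsCompact (MulAction.orbit G z) :=
    isCompact_range (continuous_id.smul continuous_const)
  have disjoint : Disjoint (MulAction.orbit G x) (MulAction.orbit G y) :=
    (MulAction.orbit.eq_or_disjoint x y).resolve_left fun h => hxy (MulAction.orbit_eq_iff.1 h)
  obtain ⟨u, u_eq_one, u_eq_zero, u_supp, hu⟩ := exists_continuous_one_zero_of_isCompact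
    (isCompact_orbit x) (isCompact_orbit y).isClosed disjoint
  obtain ⟨f, hf, f_near⟩ := hdense u u.continuous u_supp (1 / 4) (by norm_num)
  refine ⟨f, hf, fun z => ?_, fun heq => ?_⟩
  · have := abs_le.1 (f_near z)
    obtain ⟨_, _⟩ := hu z
    rw [abs_le]
    constructor <;> linarith
  · have le_average : 3 / 4 ≤ orbitAverage ν f x := le_orbitAverage (hcont f hf) fun g => by
      have := abs_le.1 (f_near (g • x))
      have : u (g • x) = 1 := u_eq_one (MulAction.mem_orbit x g)
      linarith
    have average_le : orbitAverage ν f y ≤ 1 / 4 := orbitAverage_le (hcont f hf) fun g => by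
      have := abs_le.1 (f_near (g • y))
      have : u (g • y) = 0 := u_eq_zero (MulAction.mem_orbit y g)
      linarith
    linarith

variable [SecondCountableTopology M]

theorem exists_seq_forall_orbitAverage_ne {T : Set (M → ℝ)} (hcont : ∀ f ∈ T, Continuous f)
    (hdense : ∀ u : M → ℝ, Continuous u → HasCompactSupport u → ∀ η > 0,
      ∃ f ∈ T, ∀ x, |f x - u x| ≤ η) :
    ∃ h : ℕ → M → ℝ, (∀ j, h j ∈ T) ∧ (∀ j x, |h j x| ≤ 2) ∧
      ∀ x y, x ∉ MulAction.orbit G y → ∃ j, orbitAverage ν (h j) x ≠ orbitAverage ν (h j) y := by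
  let S : Set (M → ℝ) := {f ∈ T | ∀ z, |f z| ≤ 2}
  let separated : S → Set (M × M) := fun f =>
    {p | orbitAverage ν f.1 p.1 ≠ orbitAverage ν f.1 p.2}
  have isOpen_separated (f : S) : IsOpen (separated f) := by
    have continuous_average := continuous_orbitAverage (ν := ν) (hcont f f.2.1)
    exact isOpen_ne_fun (continuous_average.comp continuous_fst)
      (continuous_average.comp continuous_snd)
  have : Nonempty S := by
    obtain ⟨f, hf, f_near⟩ := hdense 0 continuous_zero HasCompactSupport.zero 2 two_pos
    exact ⟨f, hf, fun z => by simpa using f_near z⟩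
  obtain ⟨A, A_countable, iUnion_A⟩ :=
    TopologicalSpace.isOpen_iUnion_countable separated isOpen_separated
  obtain ⟨h, subset_range⟩ := Set.countable_iff_exists_subset_range.1 A_countable
  refine ⟨fun j => (h j).1, fun j => (h j).2.1, fun j => (h j).2.2, fun x y hxy => ?_⟩
  obtain ⟨f, hf, f_le, f_ne⟩ := exists_orbitAverage_ne (ν := ν) hcont hdense hxy
  have mem_iUnion : (x, y) ∈ ⋃ f ∈ A, separated f :=
    iUnion_A ▸ Set.mem_iUnion.2 ⟨⟨f, hf, f_le⟩, f_ne⟩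
  obtain ⟨f', f'_mem, f'_ne⟩ := Set.mem_iUnion₂.1 mem_iUnion
  obtain ⟨j, rfl⟩ := subset_range f'_mem
  exact ⟨j, f'_ne⟩

end SeparatingOrbits

/-! ### Proper embeddings of orbit spaces -/

theorem isProperMap_of_dist_le {X Y : Type*} [TopologicalSpace X] [MetricSpace Y] [ProperSpace Y]
    {f g : X → Y} (hf : IsProperMap f) (hg : Continuous g) {R : ℝ}
    (hfg : ∀ x, dist (g x) (f x) ≤ R) : IsProperMap g := by
  refine isProperMap_iff_isCompact_preimage.2 ⟨hg, fun K hK => ?_⟩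
  refine (isProperMap_iff_isCompact_preimage.1 hf).2 (hK.cthickening (r := R))
    |>.of_isClosed_subset (hK.isClosed.preimage hg) fun x hx => ?_
  exact Metric.mem_cthickening_of_dist_le _ _ _ _ hx (by simpa only [dist_comm] using hfg x)

theorem isProperMap_smul_const {X V : Type*} [TopologicalSpace X] [NormedAddCommGroup V]
    [NormedSpace ℝ V] {f : X → ℝ} (hf : Continuous f)
    (htop : Filter.Tendsto f (Filter.cocompact X) Filter.atTop) {v : V} (hv : v ≠ 0) :
    IsProperMap (fun x => f x • v) :=
  (isClosedEmbedding_smul_left hv).isProperMap.comp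
    (isProperMap_iff_tendsto_cocompact.2 ⟨hf, htop.mono_right atTop_le_cocompact⟩)

section OrbitSpace

variable {G M V : Type*} [Group G] [MulAction G M] [TopologicalSpace M] [TopologicalSpace V]

theorem exists_homeomorph_orbitRel_quotient_range {f : M → V} (hf : IsProperMap f)
    (hinv : ∀ (g : G) (x : M), f (g • x) = f x)
    (hsep : ∀ x y, f x = f y → x ∈ MulAction.orbit G y) :
    ∃ φ : Quotient (MulAction.orbitRel G M) ≃ₜ Set.range f,
      ∀ x : M, (φ (Quotient.mk (MulAction.orbitRel G M) x) : V) = f x := by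
  have lift_eq : ∀ x y, MulAction.orbitRel G M x y → f x = f y := by
    rintro _ y ⟨g, rfl⟩
    exact hinv g y
  let F : Quotient (MulAction.orbitRel G M) → V := Quotient.lift f lift_eq
  have F_injective : Function.Injective F :=
    Quotient.ind₂ fun x y hxy => Quotient.sound (hsep x y hxy)
  have F_isClosedMap : IsClosedMap F := fun C hC => by
    have image_eq : F '' C = f '' (Quotient.mk (MulAction.orbitRel G M) ⁻¹' C) := by
      rw [← Set.image_preimage_eq C Quotient.mk_surjective, ← Set.image_comp,
        Set.image_preimage_eq C Quotient.mk_surjective]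
      rfl
    exact image_eq ▸ hf.isClosedMap _ (hC.preimage continuous_quotient_mk')
  have F_isClosedEmbedding := Topology.IsClosedEmbedding.of_continuous_injective_isClosedMap
    (hf.continuous.quotient_lift lift_eq) F_injective F_isClosedMap
  have range_F : Set.range F = Set.range f := Set.range_quot_lift _
  exact ⟨F_isClosedEmbedding.isEmbedding.toHomeomorph.trans (Homeomorph.setCongr range_F),
    fun _ => rfl⟩

end OrbitSpace

section GenericInvariantMaps

open MeasureTheory BoundedContinuousFunction

variable {G M : Type*} [Group G] [TopologicalSpace G] [CompactSpace G] [MeasurableSpace G]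
  [BorelSpace G] {ν : Measure G} [IsProbabilityMeasure ν] [TopologicalSpace M] [MulAction G M]
  {n : ℕ}

theorem coefficientSeries_orbitAverage_apply [ContinuousSMul G M] {h : ℕ → M → ℝ} {b : ℕ → ℝ}
    (hh : ∀ j, Continuous (h j)) (hb : Summable b) (hhb : ∀ j x, |h j x| ≤ b j)
    (ξ : ℕ →ᵇ EuclideanSpace ℝ (Fin n)) (x : M) (i : Fin n) :
    coefficientSeries (fun j => orbitAverage ν (h j)) ξ x i =
      orbitAverage ν (fun y => ∑' j, ξ j i * h j y) x := by
  have abs_coefficient_le (j : ℕ) : |ξ j i| ≤ ‖ξ‖ :=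
    (PiLp.norm_apply_le (ξ j) i).trans (ξ.norm_coe_le_norm j)
  have term_le (j : ℕ) (y : M) : |ξ j i * h j y| ≤ ‖ξ‖ * b j := by
    rw [abs_mul]
    exact mul_le_mul (abs_coefficient_le j) (hhb j y) (abs_nonneg _) (norm_nonneg _)
  rw [orbitAverage_tsum (fun j => (hh j).const_mul (ξ j i)) (hb.mul_left ‖ξ‖) term_le]
  have summable := summable_smul_coefficient hb
    (fun j => abs_orbitAverage_le (ν := ν) (hh j) (hhb j)) ξ x
  refine ((EuclideanSpace.proj (𝕜 := ℝ) i).map_tsum summable).trans (tsum_congr fun j => ?_)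
  simp only [orbitAverage, integral_const_mul]
  exact mul_comm _ _

variable {E₁ : Type*} [NormedAddCommGroup E₁] [NormedSpace ℝ E₁] [FiniteDimensional ℝ E₁]
  [ChartedSpace E₁ G] [IsManifold 𝓘(ℝ, E₁) ω G]
  {E₂ : Type*} [NormedAddCommGroup E₂] [NormedSpace ℝ E₂] [FiniteDimensional ℝ E₂]
  [ChartedSpace E₂ M] [IsManifold 𝓘(ℝ, E₂) ω M]

theorem contMDiff_coefficientSeries_orbitAverage
    (hact : ContMDiff (𝓘(ℝ, E₁).prod 𝓘(ℝ, E₂)) 𝓘(ℝ, E₂) ω fun p : G × M => p.1 • p.2)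
    {h : ℕ → M → ℝ} {b : ℕ → ℝ} (hh : ∀ j, Continuous (h j)) (hb : Summable b)
    (hhb : ∀ j x, |h j x| ≤ b j)
    (hseries : ∀ (c : ℕ → ℝ) (B : ℝ), (∀ j, |c j| ≤ B) →
      ContMDiff 𝓘(ℝ, E₂) 𝓘(ℝ, ℝ) ω fun x => ∑' j, c j * h j x)
    (ξ : ℕ →ᵇ EuclideanSpace ℝ (Fin n)) :
    ContMDiff 𝓘(ℝ, E₂) 𝓘(ℝ, EuclideanSpace ℝ (Fin n)) ω
      (coefficientSeries (fun j => orbitAverage ν (h j)) ξ) := by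
  have : ContinuousSMul G M := ⟨hact.continuous⟩
  have coordinate (i : Fin n) : ContMDiff 𝓘(ℝ, E₂) 𝓘(ℝ, ℝ) ω
      fun x => coefficientSeries (fun j => orbitAverage ν (h j)) ξ x i := by
    simp only [coefficientSeries_orbitAverage_apply hh hb hhb]
    exact contMDiff_orbitAverage ν hact (hseries (ξ · i) ‖ξ‖ fun j =>
      (PiLp.norm_apply_le (ξ j) i).trans (ξ.norm_coe_le_norm j))
  exact (EuclideanSpace.equiv (Fin n) ℝ).symm.contDiff.contMDiff.comp
    (contMDiff_pi_space.2 coordinate)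

theorem exists_isProperMap_separating_orbits [SecondCountableTopology M] [ContinuousMul G]
    [ν.IsMulRightInvariant] (hn : 2 * Module.finrank ℝ E₂ < n)
    (hact : ContMDiff (𝓘(ℝ, E₁).prod 𝓘(ℝ, E₂)) 𝓘(ℝ, E₂) ω fun p : G × M => p.1 • p.2)
    {f₀ : M → ℝ} (hf₀ : ContMDiff 𝓘(ℝ, E₂) 𝓘(ℝ, ℝ) ω f₀)
    (htop : Filter.Tendsto f₀ (Filter.cocompact M) Filter.atTop)
    {h : ℕ → M → ℝ} {b : ℕ → ℝ} (hh : ∀ j, ContMDiff 𝓘(ℝ, E₂) 𝓘(ℝ, ℝ) ω (h j))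
    (hb : Summable b) (hhb : ∀ j x, |h j x| ≤ b j)
    (hseries : ∀ (c : ℕ → ℝ) (B : ℝ), (∀ j, |c j| ≤ B) →
      ContMDiff 𝓘(ℝ, E₂) 𝓘(ℝ, ℝ) ω fun x => ∑' j, c j * h j x)
    (hsep : ∀ x y, x ∉ MulAction.orbit G y →
      ∃ j, orbitAverage ν (h j) x ≠ orbitAverage ν (h j) y) :
    ∃ f : M → EuclideanSpace ℝ (Fin n),
      ContMDiff 𝓘(ℝ, E₂) 𝓘(ℝ, EuclideanSpace ℝ (Fin n)) ω f ∧ IsProperMap f ∧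
      (∀ (g : G) (x : M), f (g • x) = f x) ∧
      ∀ x y, f x = f y → x ∈ MulAction.orbit G y := by
  have : ContinuousSMul G M := ⟨hact.continuous⟩
  have : IsManifold 𝓘(ℝ, E₂) 1 M := .of_le (n := ω) le_top
  let v : EuclideanSpace ℝ (Fin n) := EuclideanSpace.single ⟨0, by omega⟩ 1
  have v_ne_zero : v ≠ 0 := by simp [v]
  let base : M → EuclideanSpace ℝ (Fin n) := fun x => orbitAverage ν f₀ x • v
  have contMDiff_average := contMDiff_orbitAverage ν hact hf₀
  have contMDiff_base : ContMDiff 𝓘(ℝ, E₂) 𝓘(ℝ, EuclideanSpace ℝ (Fin n)) ω base :=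
    contMDiff_average.smul contMDiff_const
  have isProperMap_base : IsProperMap base := isProperMap_smul_const
    contMDiff_average.continuous (tendsto_orbitAverage_atTop hf₀.continuous htop) v_ne_zero
  let H : ℕ → M → ℝ := fun j => orbitAverage ν (h j)
  have H_le (j : ℕ) : ∀ x, |H j x| ≤ b j := abs_orbitAverage_le (hh j).continuous (hhb j)
  have contMDiff_series := contMDiff_coefficientSeries_orbitAverage (ν := ν) (n := n) hact
    (fun j => (hh j).continuous) hb hhb hseries
  obtain ⟨ξ, ξ_sep⟩ := exists_forall_add_coefficientSeries_ne (V := EuclideanSpace ℝ (Fin n))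
    (by rwa [finrank_euclideanSpace_fin]) (contMDiff_base.of_le le_top) hb H_le
    (fun j => (contMDiff_orbitAverage ν hact (hh j)).of_le le_top)
    fun ξ => (contMDiff_series ξ).of_le le_top
  have contMDiff_sum := contMDiff_base.add (contMDiff_series ξ)
  refine ⟨_, contMDiff_sum, isProperMap_of_dist_le isProperMap_base contMDiff_sum.continuous
    (R := (∑' j, b j) * ‖ξ‖) fun x => ?_, fun g x => ?_, fun x y hxy => ?_⟩
  · simpa [H] using norm_coefficientSeries_le hb H_le ξ x
  · simp [base, coefficientSeries, orbitAverage_smul]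
  · by_contra not_mem
    exact ξ_sep x y (hsep x y not_mem) hxy

end GenericInvariantMaps

end AnalyticOrbitEmbedding

open AnalyticOrbitEmbedding in
theorem subanalytic_triangulation_stmt2_general {E : Type*} [NormedAddCommGroup E]
    [NormedSpace ℝ E] [FiniteDimensional ℝ E] {d n : ℕ} (hn : 2 * d < n)
    (G : Type*) [Group G] [TopologicalSpace G] [IsTopologicalGroup G] [CompactSpace G]
    [ChartedSpace E G] [IsManifold 𝓘(ℝ, E) ω G]
    (M : Type*) [TopologicalSpace M] [T2Space M] [SecondCountableTopology M]
    [ChartedSpace (EuclideanSpace ℝ (Fin d)) M] [IsManifold 𝓘(ℝ, EuclideanSpace ℝ (Fin d)) ω M]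
    [MulAction G M]
    (hact : ContMDiff (𝓘(ℝ, E).prod 𝓘(ℝ, EuclideanSpace ℝ (Fin d)))
      𝓘(ℝ, EuclideanSpace ℝ (Fin d)) ω (fun p : G × M => p.1 • p.2)) :
    ∃ f : M → EuclideanSpace ℝ (Fin n),
      ContMDiff 𝓘(ℝ, EuclideanSpace ℝ (Fin d)) 𝓘(ℝ, EuclideanSpace ℝ (Fin n)) ω f ∧
      IsProperMap f ∧
      (∀ (g : G) (x : M), f (g • x) = f x) ∧
      ∃ fbar : Quotient (MulAction.orbitRel G M) ≃ₜ Set.range f,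
        ∀ x : M, (fbar (Quotient.mk (MulAction.orbitRel G M) x) :
          EuclideanSpace ℝ (Fin n)) = f x := by
  borelize G
  have : ContinuousSMul G M := ⟨hact.continuous⟩
  have : LocallyCompactSpace M := ChartedSpace.locallyCompactSpace (EuclideanSpace ℝ (Fin d)) M
  obtain ⟨ν, _, _⟩ := exists_isProbabilityMeasure_isMulRightInvariant G
  obtain ⟨T, hT, dense, ⟨f₀, hf₀, htop⟩, weights⟩ := exists_dense_analytic_class d M
  obtain ⟨h, hh, h_le, h_sep⟩ := exists_seq_forall_orbitAverage_ne (ν := ν)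
    (fun f hf => (hT f hf).continuous) dense
  obtain ⟨e, e_pos, summable_e, series_mem⟩ := weights h hh
  have weighted_le (j : ℕ) (x : M) : |e j * h j x| ≤ e j * 2 := by
    rw [abs_mul, abs_of_pos (e_pos j)]
    exact mul_le_mul_of_nonneg_left (h_le j x) (e_pos j).le
  have weighted_sep (x y : M) (hxy : x ∉ MulAction.orbit G y) :
      ∃ j, orbitAverage ν (fun z => e j * h j z) x ≠ orbitAverage ν (fun z => e j * h j z) y := by
    obtain ⟨j, ne⟩ := h_sep x y hxy
    refine ⟨j, ?_⟩
    simpa only [orbitAverage, MeasureTheory.integral_const_mul, ne_eq,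
      mul_right_inj' (e_pos j).ne'] using ne
  obtain ⟨f, hf, isProperMap_f, f_invariant, f_sep⟩ := exists_isProperMap_separating_orbits
    (by rwa [finrank_euclideanSpace_fin]) hact (hT f₀ hf₀) htop
    (fun j => contMDiff_const.mul (hT _ (hh j))) (summable_e.mul_right 2) weighted_le
    (fun c B hc => hT _ (series_mem c B hc)) weighted_sep
  exact ⟨f, hf, isProperMap_f, f_invariant,
    exists_homeomorph_orbitRel_quotient_range isProperMap_f f_invariant f_sep⟩

/-- Let `G` be a compact Lie group with real analytic group operations acting real
analytically on a second countable Hausdorff real analytic manifold `M` of dimension `d`,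
and let `n = 2d + 1`.  Then there is a proper real analytic `G`-invariant map `f : M → ℝⁿ`
inducing a homeomorphism from the orbit space `M/G` onto the image `f(M)`. -/
theorem subanalytic_triangulation_stmt2 {dG d : ℕ}
    (G : Type) [Group G] [TopologicalSpace G] [T2Space G] [CompactSpace G]
    [ChartedSpace (EuclideanSpace ℝ (Fin dG)) G]
    [HasGroupoid G (contDiffGroupoid ω 𝓘(ℝ, EuclideanSpace ℝ (Fin dG)))]
    (hGmul : IsCkMap (𝓘(ℝ, EuclideanSpace ℝ (Fin dG)).prod 𝓘(ℝ, EuclideanSpace ℝ (Fin dG)))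
      𝓘(ℝ, EuclideanSpace ℝ (Fin dG)) ω (fun p : G × G => p.1 * p.2))
    (hGinv : IsCkMap 𝓘(ℝ, EuclideanSpace ℝ (Fin dG)) 𝓘(ℝ, EuclideanSpace ℝ (Fin dG)) ω
      (fun g : G => g⁻¹))
    (M : Type) [TopologicalSpace M] [T2Space M] [SecondCountableTopology M]
    [ChartedSpace (EuclideanSpace ℝ (Fin d)) M]
    [HasGroupoid M (contDiffGroupoid ω 𝓘(ℝ, EuclideanSpace ℝ (Fin d)))]
    [MulAction G M]
    (hact : IsCkMap (𝓘(ℝ, EuclideanSpace ℝ (Fin dG)).prod 𝓘(ℝ, EuclideanSpace ℝ (Fin d)))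
      𝓘(ℝ, EuclideanSpace ℝ (Fin d)) ω (fun p : G × M => p.1 • p.2)) :
    ∃ f : M → EuclideanSpace ℝ (Fin (2 * d + 1)),
      IsCkMap 𝓘(ℝ, EuclideanSpace ℝ (Fin d)) 𝓘(ℝ, EuclideanSpace ℝ (Fin (2 * d + 1))) ω f ∧
      IsProperMap f ∧
      (∀ (g : G) (x : M), f (g • x) = f x) ∧
      ∃ fbar : Quotient (MulAction.orbitRel G M) ≃ₜ Set.range f,
        ∀ x : M, (fbar (Quotient.mk (MulAction.orbitRel G M) x) :
          EuclideanSpace ℝ (Fin (2 * d + 1))) = f x := by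
  have : IsManifold 𝓘(ℝ, EuclideanSpace ℝ (Fin dG)) ω G := .mk
  have : IsManifold 𝓘(ℝ, EuclideanSpace ℝ (Fin d)) ω M := .mk
  have : IsTopologicalGroup G := { continuous_mul := hGmul.1, continuous_inv := hGinv.1 }
  have contMDiff_act : ContMDiff (𝓘(ℝ, EuclideanSpace ℝ (Fin dG)).prod
      𝓘(ℝ, EuclideanSpace ℝ (Fin d))) 𝓘(ℝ, EuclideanSpace ℝ (Fin d)) ω
      fun p : G × M => p.1 • p.2 :=
    fun p => contMDiffAt_iff.2 ⟨hact.1.continuousAt, hact.2 p⟩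
  obtain ⟨f, hf, f_properties⟩ :=
    subanalytic_triangulation_stmt2_general (Nat.lt_succ_self _) G M contMDiff_act
  exact ⟨f, ⟨hf.continuous, fun x => (contMDiffAt_iff.1 (hf x)).2⟩, f_properties⟩
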